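/- Let q be an even prime power with q ≥ 2048 and let n ≥ 5. Then every k-cap in PG(n, q) satisfies k < q^{n−1} − 2q^{n−2} + 3q^{n−3}√q + 8q^{n−3} − 9q^{n−4}√q − 7q^{n−4} − 2(q^{n−5} + ⋯ + q + 1) + 1, where q^{n−5} + ⋯ + q + 1 denotes the geometric sum Σ_{i=0}^{n−5} q^i. -/

import Mathlib

open Module

/-- Points of the projective space `PG(n, q)` over the field `F` (with `q = |F|`). -/
abbrev PGPoint (F : Type*) [Field F] (n : ℕ) := Projectivization F (Fin (n + 1) → F)

/-- The set of projective points lying in the projective subspace determined by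
a linear subspace `W`. -/
def ptsIn {F : Type*} [Field F] {n : ℕ} (W : Submodule F (Fin (n + 1) → F)) :
    Set (PGPoint F n) := {P | P.submodule ≤ W}

/-- Three points of `PG(n, q)` are collinear if they lie on a common line. -/
def Coll3 {F : Type*} [Field F] {n : ℕ} (P₁ P₂ P₃ : PGPoint F n) : Prop :=
  Module.finrank F ↥(P₁.submodule ⊔ P₂.submodule ⊔ P₃.submodule) ≤ 2

/-- A cap (a plane arc when `n = 2`): a set of points no three of which are collinear. -/
def IsCap {F : Type*} [Field F] {n : ℕ} (K : Set (PGPoint F n)) : Prop :=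
  ∀ P₁ ∈ K, ∀ P₂ ∈ K, ∀ P₃ ∈ K, P₁ ≠ P₂ → P₁ ≠ P₃ → P₂ ≠ P₃ → ¬ Coll3 P₁ P₂ P₃

/-- A complete cap: a cap that is not contained in a cap with one more point. -/
def IsCompleteCap {F : Type*} [Field F] {n : ℕ} (K : Set (PGPoint F n)) : Prop :=
  IsCap K ∧ ∀ P ∉ K, ¬ IsCap (insert P K)

/-- A tangent line of `K`: a line (2-dimensional linear subspace) meeting `K`
in exactly one point. -/
def IsTangent {F : Type*} [Field F] {n : ℕ} (K : Set (PGPoint F n))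
    (W : Submodule F (Fin (n + 1) → F)) : Prop :=
  Module.finrank F W = 2 ∧ (ptsIn W ∩ K).ncard = 1

set_option linter.unusedVariables false
set_option linter.unusedSectionVars false
set_option linter.deprecated false
set_option linter.unusedSimpArgs false

namespace CapPf
section Seg
variable {F : Type*} [Field F] {W : Type*} [AddCommGroup W] [Module F W]

/-- homogeneous functions of degree `d` -/
def HF (F : Type*) [Field F] (W : Type*) [AddCommGroup W] [Module F W] : ℕ → Submodule F (W → F)
  | 0 => Submodule.span F {fun _ => 1}
  | d+1 => Submodule.span F {f | ∃ a : Dual F W, ∃ g ∈ HF F W d, f = fun u => a u * g u}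

def Ind2 (p x : Dual F W) : Prop := p ≠ 0 ∧ ∃ z, p z = 0 ∧ x z ≠ 0
def Ind3 (p x y : Dual F W) : Prop := ∀ u, p u = 0 → x u = 0 → y u = 0 → u = 0

lemma Ind3.rot {p x y : Dual F W} (h : Ind3 p x y) : Ind3 x y p := fun u a b c => h u c a b
lemma Ind3.swap {p x y : Dual F W} (h : Ind3 p x y) : Ind3 p y x := fun u a b c => h u a c b

lemma HF_zero {f : W → F} (hf : f ∈ HF F W 0) : ∃ c : F, f = fun _ => c := by
  obtain ⟨c, rfl⟩ := Submodule.mem_span_singleton.1 hf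
  exact ⟨c, by ext; simp⟩

lemma HF_const (c : F) : (fun _ => c) ∈ HF F W 0 :=
  Submodule.mem_span_singleton.2 ⟨c, by ext; simp⟩

lemma HF_mul (a : Dual F W) {d : ℕ} {g : W → F} (hg : g ∈ HF F W d) :
    (fun u => a u * g u) ∈ HF F W (d+1) :=
  Submodule.subset_span ⟨a, g, hg, rfl⟩

lemma HF_prod {d : ℕ} (T : Finset (Dual F W)) (hT : T.card = d) (c : F) :
    (fun u => c * ∏ e ∈ T, e u) ∈ HF F W d := by
  classical
  induction T using Finset.induction_on generalizing d with
  | empty => subst hT; simpa using HF_const c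
  | insert a s ha ih =>
    rw [Finset.card_insert_of_notMem ha] at hT
    subst hT
    have := HF_mul a (ih rfl)
    convert this using 2
    rw [Finset.prod_insert ha]; ring

lemma line_vec [FiniteDimensional F W] (h3 : finrank F W = 3) {p x : Dual F W} (h : Ind2 p x) :
    ∃ v, v ≠ 0 ∧ p v = 0 ∧ x v = 0 ∧ ∀ u, p u = 0 → x u = 0 → ∃ c : F, u = c • v := by
  obtain ⟨hp, z, hz, hxz⟩ := h
  have h1 := Module.Dual.finrank_ker_add_one_of_ne_zero hp
  have hx : x.domRestrict (LinearMap.ker p) ≠ 0 := by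
    intro h
    exact hxz (by simpa using LinearMap.congr_fun h ⟨z, hz⟩)
  have h2 := Module.Dual.finrank_ker_add_one_of_ne_zero (f := x.domRestrict (LinearMap.ker p)) hx
  have h4 : finrank F (LinearMap.ker (x.domRestrict (LinearMap.ker p))) = 1 := by omega
  obtain ⟨v, hv, hv'⟩ := finrank_eq_one_iff'.1 h4
  refine ⟨v.1.1, by simpa using hv, v.1.2, by have := v.2; rwa [LinearMap.mem_ker] at this, fun u hu hu' => ?_⟩
  obtain ⟨c, hc⟩ := hv' ⟨⟨u, hu⟩, by simpa using hu'⟩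
  exact ⟨c, by simpa using (congrArg (fun t => t.1.1) hc).symm⟩

lemma lemA_aux {p0 p : Dual F W} {v z : W} (hz : p0 z = 0) (hpz : p z ≠ 0) (hv : p0 v = 0)
    (hpv : p v = 0) (huniq : ∀ u, p0 u = 0 → p u = 0 → ∃ c : F, u = c • v)
    (α : Dual F W) (hα : α v = 1) (a : Dual F W) :
    ∃ c : F, ∀ u, p0 u = 0 → a u = a v * α u + c * p u := by
  refine ⟨(a z - a v * α z) / p z, fun u hu => ?_⟩
  obtain ⟨l, hl⟩ := huniq (u - (p u / p z) • z) (by simp [hu, hz]) (by simp; field_simp; simp)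
  have : u = l • v + (p u / p z) • z := by rw [← hl]; simp
  generalize p u / p z = m at this
  subst this
  simp [hpv, hα]
  field_simp
  ring

lemma lemA {p0 p : Dual F W} (h2 : Ind2 p0 p) {v : W} (hv0 : v ≠ 0) (hv : p0 v = 0)
    (hpv : p v = 0) (huniq : ∀ u, p0 u = 0 → p u = 0 → ∃ c : F, u = c • v)
    (α : Dual F W) (hα : α v = 1) (d : ℕ) (f : W → F) (hf : f ∈ HF F W (d+1)) :
    ∃ h ∈ HF F W d, ∀ u, p0 u = 0 → f u = f v * α u ^ (d+1) + p u * h u := by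
  obtain ⟨-, z, hz, hpz⟩ := h2
  have key := lemA_aux hz hpz hv hpv huniq α hα
  induction d generalizing f with
  | zero =>
    induction hf using Submodule.span_induction with
    | mem f hf =>
      obtain ⟨a, g, hg, rfl⟩ := hf
      obtain ⟨c0, rfl⟩ := HF_zero hg
      obtain ⟨c, hc⟩ := key a
      refine ⟨_, HF_const (c * c0), fun u hu => ?_⟩
      simp only [hc u hu]; ring
    | zero => exact ⟨0, Submodule.zero_mem _, by simp⟩
    | add f g _ _ hf hg =>
      obtain ⟨h, hh, h1⟩ := hf
      obtain ⟨h', hh', h1'⟩ := hg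
      refine ⟨h + h', Submodule.add_mem _ hh hh', fun u hu => ?_⟩
      simp only [Pi.add_apply, h1 u hu, h1' u hu]; ring
    | smul c f _ hf =>
      obtain ⟨h, hh, h1⟩ := hf
      refine ⟨c • h, Submodule.smul_mem _ c hh, fun u hu => ?_⟩
      simp only [Pi.smul_apply, smul_eq_mul, h1 u hu]; ring
  | succ d ih =>
    induction hf using Submodule.span_induction with
    | mem f hf =>
      obtain ⟨a, g, hg, rfl⟩ := hf
      obtain ⟨h', hh', h1'⟩ := ih g hg
      obtain ⟨c, hc⟩ := key a
      refine ⟨a v • (fun u => α u * h' u) + c • g, Submodule.add_mem _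
        (Submodule.smul_mem _ _ (HF_mul _ hh')) (Submodule.smul_mem _ _ hg), fun u hu => ?_⟩
      simp only [Pi.add_apply, Pi.smul_apply, smul_eq_mul]
      have e1 := hc u hu
      have e2 := h1' u hu
      have : a u * g u = a v * α u * g u + c * p u * g u := by rw [e1]; ring
      rw [this]
      conv_lhs => enter [1]; rw [e2]
      ring
    | zero => exact ⟨0, Submodule.zero_mem _, by simp⟩
    | add f g _ _ hf hg =>
      obtain ⟨h, hh, h1⟩ := hf
      obtain ⟨h', hh', h1'⟩ := hg
      refine ⟨h + h', Submodule.add_mem _ hh hh', fun u hu => ?_⟩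
      simp only [Pi.add_apply, h1 u hu, h1' u hu]; ring
    | smul c f _ hf =>
      obtain ⟨h, hh, h1⟩ := hf
      refine ⟨c • h, Submodule.smul_mem _ c hh, fun u hu => ?_⟩
      simp only [Pi.smul_apply, smul_eq_mul, h1 u hu]; ring

/-- Division step -/
lemma divstep [FiniteDimensional F W] (h3 : finrank F W = 3) {p0 p : Dual F W} (h2 : Ind2 p0 p)
    (d : ℕ) (f : W → F) (hf : f ∈ HF F W (d+1)) (h0 : ∀ v, v ≠ 0 → p0 v = 0 → p v = 0 → f v = 0) :
    ∃ h ∈ HF F W d, ∀ u, p0 u = 0 → f u = p u * h u := by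
  obtain ⟨v, hv0, hv, hpv, hun⟩ := line_vec h3 h2
  obtain ⟨α, hα⟩ : ∃ α : Dual F W, α v = 1 := by
    obtain ⟨β, hβ⟩ : ∃ β : Dual F W, β v ≠ 0 := by
      by_contra hc
      push Not at hc
      exact hv0 ((Module.forall_dual_apply_eq_zero_iff F v).1 hc)
    exact ⟨(β v)⁻¹ • β, by simp [hβ]⟩
  obtain ⟨h, hh, H⟩ := lemA h2 hv0 hv hpv hun α hα d f hf
  exact ⟨h, hh, fun u hu => by rw [H u hu, h0 v hv0 hv hpv]; ring⟩

lemma vanish [FiniteDimensional F W] (h3 : finrank F W = 3) {p0 : Dual F W}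
    (d : ℕ) (f : W → F) (hf : f ∈ HF F W d) (T : Finset (Dual F W)) (hT : d < T.card)
    (h2 : ∀ p ∈ T, Ind2 p0 p) (hI : ∀ p ∈ T, ∀ p' ∈ T, p ≠ p' → Ind3 p0 p p')
    (h0 : ∀ p ∈ T, ∀ v, v ≠ 0 → p0 v = 0 → p v = 0 → f v = 0) :
    ∀ u, p0 u = 0 → f u = 0 := by
  classical
  induction d generalizing f T with
  | zero =>
    obtain ⟨p, hp⟩ := Finset.card_pos.1 hT
    obtain ⟨v, hv0, hv, hpv, hun⟩ := line_vec h3 (h2 p hp)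
    obtain ⟨c, rfl⟩ := HF_zero hf
    intro u _
    exact h0 p hp v hv0 hv hpv
  | succ d ih =>
    obtain ⟨p, hp⟩ := Finset.card_pos.1 (by omega : 0 < T.card)
    obtain ⟨h, hh, H⟩ := divstep h3 (h2 p hp) d f hf (h0 p hp)
    have := ih h hh (T.erase p) (by rw [Finset.card_erase_of_mem hp]; omega)
      (fun x hx => h2 x (Finset.mem_of_mem_erase hx))
      (fun x hx y hy => hI x (Finset.mem_of_mem_erase hx) y (Finset.mem_of_mem_erase hy))
      (fun x hx v hv hv0 hxv => by
        have h4 := h0 x (Finset.mem_of_mem_erase hx) v hv hv0 hxv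
        rw [H v hv0] at h4
        refine (mul_eq_zero.1 h4).resolve_left fun h5 => hv ?_
        exact hI x (Finset.mem_of_mem_erase hx) p hp (Finset.ne_of_mem_erase hx) v hv0 hxv h5)
    intro u hu
    rw [H u hu, this u hu, mul_zero]

lemma divide [FiniteDimensional F W] (h3 : finrank F W = 3) {p0 : Dual F W}
    (d : ℕ) (f : W → F) (hf : f ∈ HF F W d) (T : Finset (Dual F W))
    (h2 : ∀ p ∈ T, Ind2 p0 p) (hI : ∀ p ∈ T, ∀ p' ∈ T, p ≠ p' → Ind3 p0 p p')
    (h0 : ∀ p ∈ T, ∀ v, v ≠ 0 → p0 v = 0 → p v = 0 → f v = 0) :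
    ∃ G ∈ HF F W d, (∀ u, p0 u = 0 → f u = G u) ∧ ∀ p ∈ T, ∀ u, p u = 0 → G u = 0 := by
  classical
  induction T using Finset.induction_on generalizing d f with
  | empty => exact ⟨f, hf, fun _ _ => rfl, by simp⟩
  | insert p T hpT ih =>
    rcases d with _ | d
    · refine ⟨0, Submodule.zero_mem _, fun u hu => ?_, by simp⟩
      exact vanish h3 0 f hf {p} (by simp)
        (fun x hx => h2 x (by simp_all)) (by simp +contextual) (fun x hx => h0 x (by simp_all)) u hu
    · have hp : p ∈ insert p T := Finset.mem_insert_self _ _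
      obtain ⟨h, hh, H⟩ := divstep h3 (h2 p hp) d f hf (h0 p hp)
      obtain ⟨G, hG, hG1, hG2⟩ := ih d h hh (fun x hx => h2 x (Finset.mem_insert_of_mem hx))
        (fun x hx y hy => hI x (Finset.mem_insert_of_mem hx) y (Finset.mem_insert_of_mem hy))
        (fun x hx v hv hv0 hxv => by
          have h4 := h0 x (Finset.mem_insert_of_mem hx) v hv hv0 hxv
          rw [H v hv0] at h4
          refine (mul_eq_zero.1 h4).resolve_left fun h5 => hv ?_
          exact hI x (Finset.mem_insert_of_mem hx) p hp (by rintro rfl; exact hpT hx) v hv0 hxv h5)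
      refine ⟨_, HF_mul p hG, fun u hu => by rw [H u hu, hG1 u hu], fun x hx u hu => ?_⟩
      rcases Finset.mem_insert.1 hx with rfl | hx
      · simp [hu]
      · simp [hG2 x hx u hu]

variable [Fintype F]

/-- Arc with its tangents -/
structure ArcT (S : Finset (Dual F W)) (T : Dual F W → Finset (Dual F W)) : Prop where
  h2 : ∀ p ∈ S, ∀ p' ∈ S, p ≠ p' → Ind2 p p'
  h3 : ∀ p ∈ S, ∀ x ∈ S, ∀ y ∈ S, p ≠ x → p ≠ y → x ≠ y → Ind3 p x y
  hTS : ∀ p ∈ S, ∀ x ∈ T p, ∀ y ∈ S, y ≠ p → Ind3 p x y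
  hTT : ∀ p ∈ S, ∀ x ∈ T p, ∀ y ∈ T p, x ≠ y → Ind3 p x y
  hdis : ∀ p ∈ S, ∀ x ∈ T p, x ∉ S
  hcard : ∀ p ∈ S, (T p).card + S.card = Fintype.card F + 2
  htan : ∀ p ∈ S, ∀ u, u ≠ 0 → p u = 0 → (∀ s ∈ S, s u = 0 → s = p) → ∃ e ∈ T p, e u = 0

open Classical in
lemma tang1 {S : Finset (Dual F W)} {T : Dual F W → Finset (Dual F W)} (hA : ArcT S T)
    {p p' p'' : Dual F W} (hp : p ∈ S) (hp' : p' ∈ S) (hp'' : p'' ∈ S) (n1 : p ≠ p') (n2 : p ≠ p'')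
    (n3 : p' ≠ p'') {b' b'' : W} (hb' : b' ≠ 0) (hb'' : b'' ≠ 0) (h1 : p b' = 0) (h2 : p'' b' = 0)
    (h3 : p b'' = 0) (h4 : p' b'' = 0) :
    (∏ e ∈ T p, e b') * (∏ s ∈ ((S.erase p).erase p').erase p'', s b') =
    - ((∏ e ∈ T p, e b'') * (∏ s ∈ ((S.erase p).erase p').erase p'', s b'')) := by
  set R := ((S.erase p).erase p').erase p'' with hR
  have hdisj : Disjoint (T p) R := by
    rw [Finset.disjoint_left]
    intro x hx hx'
    exact hA.hdis p hp x hx (by simp only [hR, Finset.mem_erase] at hx'; tauto)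
  rw [← Finset.prod_union hdisj, ← Finset.prod_union hdisj]
  have hRm : ∀ x ∈ R, x ≠ p'' ∧ x ≠ p' ∧ x ≠ p ∧ x ∈ S := by
    intro x hx; simpa [hR, Finset.mem_erase] using hx
  have hn' : ∀ x ∈ T p ∪ R, x b' ≠ 0 := by
    intro x hx h
    rcases Finset.mem_union.1 hx with hx | hx
    · exact hb' (hA.hTS p hp x hx p'' hp'' n2.symm b' h1 h h2)
    · obtain ⟨a, b, c, d⟩ := hRm x hx
      exact hb' (hA.h3 p hp x d p'' hp'' c.symm n2 a b' h1 h h2)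
  have hn'' : ∀ x ∈ T p ∪ R, x b'' ≠ 0 := by
    intro x hx h
    rcases Finset.mem_union.1 hx with hx | hx
    · exact hb'' (hA.hTS p hp x hx p' hp' n1.symm b'' h3 h h4)
    · obtain ⟨a, b, c, d⟩ := hRm x hx
      exact hb'' (hA.h3 p hp x d p' hp' c.symm n1 b b'' h3 h h4)
  have hpb : p' b' ≠ 0 := fun h => hb' (hA.h3 p hp p' hp' p'' hp'' n1 n2 n3 b' h1 h h2)
  have hind : ∀ x ∈ T p ∪ R, ∀ y ∈ T p ∪ R, x ≠ y → Ind3 p x y := by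
    intro x hx y hy hxy
    rcases Finset.mem_union.1 hx with hx | hx <;> rcases Finset.mem_union.1 hy with hy | hy
    · exact hA.hTT p hp x hx y hy hxy
    · exact hA.hTS p hp x hx y (hRm y hy).2.2.2 (hRm y hy).2.2.1
    · exact (hA.hTS p hp y hy x (hRm x hx).2.2.2 (hRm x hx).2.2.1).swap
    · exact hA.h3 p hp x (hRm x hx).2.2.2 y (hRm y hy).2.2.2 (hRm x hx).2.2.1.symm
        (hRm y hy).2.2.1.symm hxy
  have hinj : Set.InjOn (fun x : Dual F W => x b' / x b'') (T p ∪ R : Finset _) := by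
    intro x hx y hy hxy
    by_contra hne
    have hx' := hn'' x hx
    have hy' := hn'' y hy
    have hxy : x b' * y b'' = y b' * x b'' := by
      field_simp at hxy; linear_combination hxy
    have h0 : (y b'') • b' - (y b') • b'' = 0 := by
      apply hind x hx y hy hne
      · simp [h1, h3]
      · simp; linear_combination hxy
      · simp; ring
    have := congrArg p' h0
    simp [h4, hpb, hy'] at this
  have hRc : R.card + 3 = S.card := by
    have a1 := Finset.card_erase_add_one hp
    have a2 := Finset.card_erase_add_one (Finset.mem_erase.2 ⟨n1.symm, hp'⟩ : p' ∈ S.erase p)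
    have a3 := Finset.card_erase_add_one
      (Finset.mem_erase.2 ⟨n3.symm, Finset.mem_erase.2 ⟨n2.symm, hp''⟩⟩ : p'' ∈ (S.erase p).erase p')
    rw [← hR] at a3
    omega
  have himg : (T p ∪ R).image (fun x : Dual F W => x b' / x b'') = Finset.univ.erase (0 : F) := by
    apply Finset.eq_of_subset_of_card_le
    · intro y hy
      obtain ⟨x, hx, rfl⟩ := Finset.mem_image.1 hy
      simp [hn' x hx, hn'' x hx]
    · rw [Finset.card_image_of_injOn hinj, Finset.card_union_of_disjoint hdisj,
        Finset.card_erase_of_mem (Finset.mem_univ _), Finset.card_univ]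
      have := hA.hcard p hp
      omega
  have hprod : ∏ x ∈ T p ∪ R, (x b' / x b'') = -1 := by
    have e1 : ∏ y ∈ (T p ∪ R).image (fun x : Dual F W => x b' / x b''), y =
        ∏ x ∈ T p ∪ R, (x b' / x b'') := Finset.prod_image hinj
    rw [← e1, himg]
    have e2 : ∏ x : Fˣ, (x : F) = -1 := by
      have := congrArg (fun x : Fˣ => (x : F)) (FiniteField.prod_univ_units_id_eq_neg_one (K := F))
      simpa using this
    rw [← e2]
    symm
    apply Finset.prod_bij (fun (x : Fˣ) _ => (x : F))
    · simp
    · intro a _ b _ h; exact Units.ext h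
    · intro b hb; exact ⟨Units.mk0 b (by simpa using hb), by simp, rfl⟩
    · simp
  rw [Finset.prod_div_distrib, div_eq_iff (Finset.prod_ne_zero_iff.2 hn'')] at hprod
  rw [hprod]; ring

lemma tang3 [CharP F 2] {S : Finset (Dual F W)} {T : Dual F W → Finset (Dual F W)} (hA : ArcT S T)
    {p p' p'' : Dual F W} (hp : p ∈ S) (hp' : p' ∈ S) (hp'' : p'' ∈ S) (n1 : p ≠ p') (n2 : p ≠ p'')
    (n3 : p' ≠ p'') {b b' b'' : W} (hb : b ≠ 0) (hb' : b' ≠ 0) (hb'' : b'' ≠ 0)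
    (h5 : p' b = 0) (h6 : p'' b = 0) (h1 : p b' = 0) (h2 : p'' b' = 0)
    (h3 : p b'' = 0) (h4 : p' b'' = 0) :
    (∏ e ∈ T p, e b') * (∏ e ∈ T p', e b'') * (∏ e ∈ T p'', e b) =
    (∏ e ∈ T p, e b'') * (∏ e ∈ T p', e b) * (∏ e ∈ T p'', e b') := by
  classical
  have t1 := tang1 hA hp hp' hp'' n1 n2 n3 hb' hb'' h1 h2 h3 h4
  have t2 := tang1 hA hp' hp'' hp n3 n1.symm n2.symm hb'' hb h4 h3 h5 h6
  have t3 := tang1 hA hp'' hp hp' n2.symm n3.symm n1 hb hb' h6 h5 h2 h1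
  have r2 : ((S.erase p').erase p'').erase p = ((S.erase p).erase p').erase p'' := by
    ext; simp only [Finset.mem_erase]; tauto
  have r3 : ((S.erase p'').erase p).erase p' = ((S.erase p).erase p').erase p'' := by
    ext; simp only [Finset.mem_erase]; tauto
  rw [r2] at t2; rw [r3] at t3
  set R := ((S.erase p).erase p').erase p'' with hR
  have hRm : ∀ x ∈ R, x ≠ p'' ∧ x ≠ p' ∧ x ≠ p ∧ x ∈ S := by
    intro x hx; simpa [hR, Finset.mem_erase] using hx
  have z1 : (∏ s ∈ R, s b) ≠ 0 := Finset.prod_ne_zero_iff.2 fun x hx h =>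
    hb (hA.h3 p' hp' x (hRm x hx).2.2.2 p'' hp'' (hRm x hx).2.1.symm n3 (hRm x hx).1 b h5 h h6)
  have z2 : (∏ s ∈ R, s b') ≠ 0 := Finset.prod_ne_zero_iff.2 fun x hx h =>
    hb' (hA.h3 p hp x (hRm x hx).2.2.2 p'' hp'' (hRm x hx).2.2.1.symm n2 (hRm x hx).1 b' h1 h h2)
  have z3 : (∏ s ∈ R, s b'') ≠ 0 := Finset.prod_ne_zero_iff.2 fun x hx h =>
    hb'' (hA.h3 p hp x (hRm x hx).2.2.2 p' hp' (hRm x hx).2.2.1.symm n1 (hRm x hx).2.1 b'' h3 h h4)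
  rw [CharTwo.neg_eq] at t1 t2 t3
  have key := congrArg₂ (· * ·) (congrArg₂ (· * ·) t1 t2) t3
  simp only at key
  have z := mul_ne_zero (mul_ne_zero z1 z2) z3
  apply mul_right_cancel₀ z
  linear_combination key

/-- The dichotomy -/
theorem dichotomy [CharP F 2] [FiniteDimensional F W] (hW : finrank F W = 3)
    {S : Finset (Dual F W)} {T : Dual F W → Finset (Dual F W)} (hA : ArcT S T)
    {X : Dual F W} (hX : ∀ p ∈ S, Ind2 X p) {d : ℕ} (hd : d + S.card = Fintype.card F + 2)
    (A : Finset (Dual F W)) (hAS : A ⊆ S) (hcA : d < A.card)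
    (htA : ∀ p ∈ A, ∀ u, u ≠ 0 → X u = 0 → p u = 0 → ∀ s ∈ S, s u = 0 → s = p) :
    ∀ p ∈ S, ∀ u, u ≠ 0 → X u = 0 → p u = 0 → ∀ s ∈ S, s u = 0 → s = p := by
  classical
  obtain ⟨p0, hp0A⟩ := Finset.card_pos.1 (by omega : 0 < A.card)
  have hp0 := hAS hp0A
  have hTc : ∀ p ∈ S, (T p).card = d := fun p hp => by have := hA.hcard p hp; omega
  have hw : ∀ p ∈ S, ∃ w, p ≠ p0 → w ≠ 0 ∧ p0 w = 0 ∧ p w = 0 ∧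
      ∀ u, p0 u = 0 → p u = 0 → ∃ c : F, u = c • w := by
    intro p hp
    by_cases h : p = p0
    · exact ⟨0, fun h' => absurd h h'⟩
    · obtain ⟨w, h⟩ := line_vec hW (hA.h2 p0 hp0 p hp (Ne.symm h))
      exact ⟨w, fun _ => h⟩
  choose! w hw using hw
  have hne : ∀ p ∈ S, ∀ p' ∈ S, p ≠ p' → ∀ u, u ≠ 0 → p u = 0 → p' u = 0 → (∏ e ∈ T p, e u) ≠ 0 := by
    intro p hp p' hp' hn u hu h1 h2
    exact Finset.prod_ne_zero_iff.2 fun e he h => hu (hA.hTS p hp e he p' hp' hn.symm u h1 h h2)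
  let c : Dual F W → F := fun p => if p = p0 then 1 else (∏ e ∈ T p0, e (w p)) / (∏ e ∈ T p, e (w p))
  have hc : ∀ p ∈ S, c p ≠ 0 := by
    intro p hp
    by_cases h : p = p0
    · simp [c, h]
    · simp only [c, h, if_false]
      obtain ⟨a1, a2, a3, _⟩ := hw p hp h
      exact div_ne_zero (hne p0 hp0 p hp (Ne.symm h) _ a1 a2 a3) (hne p hp p0 hp0 h _ a1 a3 a2)
  let g : Dual F W → W → F := fun p u => c p * ∏ e ∈ T p, e u
  have hg : ∀ p ∈ S, g p ∈ HF F W d := fun p hp => HF_prod (T p) (hTc p hp) (c p)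
  have hg0 : ∀ p ∈ S, p ≠ p0 → ∀ u, p u = 0 → p0 u = 0 → g p u = g p0 u := by
    intro p hp hn u h1 h2
    obtain ⟨a1, a2, a3, a4⟩ := hw p hp hn
    obtain ⟨l, rfl⟩ := a4 u h2 h1
    simp only [g, c, hn, if_false, if_true, map_smul, smul_eq_mul, Finset.prod_mul_distrib,
      Finset.prod_const, hTc p hp, hTc p0 hp0]
    have := hne p hp p0 hp0 hn _ a1 a3 a2
    field_simp
  have hgg : ∀ p ∈ S, ∀ p' ∈ S, ∀ u, p u = 0 → p' u = 0 → g p u = g p' u := by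
    intro p hp p' hp' u h1 h2
    by_cases hpp : p = p'
    · rw [hpp]
    by_cases e1 : p = p0
    · subst e1; exact (hg0 p' hp' (Ne.symm hpp) u h2 h1).symm
    by_cases e2 : p' = p0
    · subst e2; exact hg0 p hp hpp u h1 h2
    by_cases hu : u = 0
    · subst hu
      simp only [g, map_zero, Finset.prod_const, hTc p hp, hTc p' hp']
      rcases Nat.eq_zero_or_pos d with h | h
      · subst h
        have q1 : T p = ∅ := Finset.card_eq_zero.1 (hTc p hp)
        have q2 : T p' = ∅ := Finset.card_eq_zero.1 (hTc p' hp')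
        have q3 : T p0 = ∅ := Finset.card_eq_zero.1 (hTc p0 hp0)
        simp [c, e1, e2, q1, q2, q3]
      · simp [zero_pow h.ne']
    obtain ⟨a1, a2, a3, a4⟩ := hw p hp e1
    obtain ⟨b1, b2, b3, b4⟩ := hw p' hp' e2
    have key := tang3 hA hp0 hp hp' (Ne.symm e1) (Ne.symm e2) hpp hu b1 a1 h1 h2 b2 b3 a2 a3
    simp only [g, c, e1, e2, if_false]
    have z1 := hne p hp p0 hp0 e1 _ a1 a3 a2
    have z2 := hne p' hp' p0 hp0 e2 _ b1 b3 b2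
    field_simp
    linear_combination -key
  have interp : ∀ S' ⊆ S, ∃ f ∈ HF F W d, ∀ p ∈ S', ∀ u, p u = 0 → f u = g p u := by
    intro S'
    induction S' using Finset.induction_on with
    | empty => exact fun _ => ⟨0, Submodule.zero_mem _, by simp⟩
    | insert p S' hpS' ih =>
      intro hsub
      have hpS := hsub (Finset.mem_insert_self _ _)
      have hS' : S' ⊆ S := fun x hx => hsub (Finset.mem_insert_of_mem hx)
      have hnp : ∀ x ∈ S', x ≠ p := by rintro x hx rfl; exact hpS' hx
      obtain ⟨f, hf, hf'⟩ := ih hS'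
      obtain ⟨G, hG, hG1, hG2⟩ := divide hW (p0 := p) d (g p - f) (Submodule.sub_mem _ (hg p hpS) hf) S'
        (fun x hx => hA.h2 p hpS x (hS' hx) (hnp x hx).symm)
        (fun x hx y hy hxy => hA.h3 p hpS x (hS' hx) y (hS' hy) (hnp x hx).symm (hnp y hy).symm hxy)
        (fun x hx v _ hv hxv => by
          simp only [Pi.sub_apply]
          rw [hf' x hx v hxv, hgg p hpS x (hS' hx) v hv hxv, sub_self])
      refine ⟨f + G, Submodule.add_mem _ hf hG, fun x hx u hu => ?_⟩
      rcases Finset.mem_insert.1 hx with rfl | hx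
      · simp [← hG1 u hu]
      · simp [hG2 x hx u hu, hf' x hx u hu]
  obtain ⟨f, hf, hfg⟩ := interp S subset_rfl
  have hzero := vanish hW d f hf A hcA (fun p hp => hX p (hAS hp))
    (fun p hp p' hp' hn u h1 h2 h3 => by
      by_contra hu
      exact hn (htA p hp u hu h1 h2 p' (hAS hp') h3).symm)
    (fun p hp v hv h1 h2 => by
      rw [hfg p (hAS hp) v h2]
      obtain ⟨e, he, h⟩ := hA.htan p (hAS hp) v hv h2 (htA p hp v hv h1 h2)
      simp only [g]
      rw [Finset.prod_eq_zero he h, mul_zero])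
  intro p hp u hu h1 h2 s hs hsu
  have := hzero u h1
  rw [hfg p hp u h2] at this
  have := (mul_eq_zero.1 this).resolve_left (hc p hp)
  obtain ⟨e, he, h⟩ := Finset.prod_eq_zero_iff.1 this
  by_contra hsp
  exact hu (hA.hTS p hp e he s hs hsp u h2 h hsu)

end Seg
end CapPf

namespace CapPf
open Classical
open Finset (univ filter card)
section Fr
variable {F : Type*} [Field F] [Fintype F] {V : Type*} [AddCommGroup V] [Module F V] [Finite V]

noncomputable instance instFintypeSub : Fintype (Submodule F V) := Fintype.ofFinite _

noncomputable abbrev fr (M : Submodule F V) : ℕ := finrank F M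
noncomputable def pts (W : Submodule F V) : Finset (Submodule F V) :=
  univ.filter fun P => fr P = 1 ∧ P ≤ W
noncomputable def cov (U W : Submodule F V) : Finset (Submodule F V) :=
  univ.filter fun M => U ≤ M ∧ M ≤ W ∧ fr M = fr U + 1
noncomputable def sec (K : Finset (Submodule F V)) (W : Submodule F V) : Finset (Submodule F V) :=
  K.filter (· ≤ W)
def Cap (K : Finset (Submodule F V)) : Prop :=
  (∀ P ∈ K, fr P = 1) ∧ ∀ m : Submodule F V, fr m = 2 → (sec K m).card ≤ 2
def Tan (K : Finset (Submodule F V)) (P X : Submodule F V) : Prop := ∀ R ∈ K, R ≤ P ⊔ X → R = P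

lemma mem_pts {W P : Submodule F V} : P ∈ pts W ↔ fr P = 1 ∧ P ≤ W := by simp [pts]
lemma mem_cov {U W M : Submodule F V} : M ∈ cov U W ↔ U ≤ M ∧ M ≤ W ∧ fr M = fr U + 1 := by
  simp [cov]
lemma mem_sec {K : Finset (Submodule F V)} {W P : Submodule F V} : P ∈ sec K W ↔ P ∈ K ∧ P ≤ W := by
  simp [sec]

lemma le_eq {A B : Submodule F V} (h : A ≤ B) (h' : fr B ≤ fr A) : A = B :=
  Submodule.eq_of_le_of_finrank_le h h'
lemma fr_mono {A B : Submodule F V} (h : A ≤ B) : fr A ≤ fr B := Submodule.finrank_mono h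

lemma pt_disj {P U : Submodule F V} (hP : fr P = 1) (h : ¬ P ≤ U) : fr (U ⊓ P) = 0 := by
  by_contra h0
  have h1 : U ⊓ P = P := le_eq inf_le_right (by omega)
  exact h (h1 ▸ inf_le_left)

lemma fr_sup_pt {P U : Submodule F V} (hP : fr P = 1) (h : ¬ P ≤ U) : fr (U ⊔ P) = fr U + 1 := by
  have := Submodule.finrank_sup_add_finrank_inf_eq U P
  have h0 := pt_disj hP h
  simp only [fr] at *
  omega

lemma fr_sup_pt_le {P U : Submodule F V} (hP : fr P = 1) : fr (U ⊔ P) ≤ fr U + 1 := by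
  have := Submodule.finrank_sup_add_finrank_inf_eq U P
  simp only [fr] at *
  omega

lemma sup_pt_eq {P U M : Submodule F V} (hP : fr P = 1) (h : ¬ P ≤ U) (hU : U ≤ M) (hPM : P ≤ M)
    (hM : fr M = fr U + 1) : U ⊔ P = M :=
  le_eq (sup_le hU hPM) (by rw [fr_sup_pt hP h, hM])

lemma pt_eq {P Q : Submodule F V} (hP : fr P = 1) (hQ : fr Q = 1) (h : P ≤ Q) : P = Q :=
  le_eq h (by omega)

lemma fr_line {P Q : Submodule F V} (hP : fr P = 1) (hQ : fr Q = 1) (h : P ≠ Q) : fr (P ⊔ Q) = 2 := by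
  rw [fr_sup_pt hQ (fun h' => h (pt_eq hQ hP h').symm), hP]

lemma line_eq {P Q m : Submodule F V} (hP : fr P = 1) (hQ : fr Q = 1) (h : P ≠ Q) (hm : fr m = 2)
    (h1 : P ≤ m) (h2 : Q ≤ m) : P ⊔ Q = m :=
  le_eq (sup_le h1 h2) (by rw [fr_line hP hQ h, hm])

lemma cover (S : Finset (Submodule F V)) (hS : ∀ P ∈ S, fr P = 1) {U W : Submodule F V} (hUW : U ≤ W) :
    ∑ M ∈ cov U W, (S.filter fun P => P ≤ M ∧ ¬ P ≤ U).card = (S.filter fun P => P ≤ W ∧ ¬ P ≤ U).card := by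
  rw [Finset.card_eq_sum_card_fiberwise (f := fun P => U ⊔ P) (t := cov U W)]
  · refine Finset.sum_congr rfl fun M hM => ?_
    rw [mem_cov] at hM
    congr 1
    ext P
    simp only [Finset.mem_filter]
    constructor
    · rintro ⟨h1, h2, h3⟩
      exact ⟨⟨h1, h2.trans hM.2.1, h3⟩, sup_pt_eq (hS P h1) h3 hM.1 h2 hM.2.2⟩
    · rintro ⟨⟨h1, h2, h3⟩, rfl⟩
      exact ⟨h1, le_sup_right, h3⟩
  · intro P hP
    simp only [Finset.coe_filter, Set.mem_setOf_eq] at hP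
    simp only [Finset.mem_coe, mem_cov]
    exact ⟨le_sup_left, sup_le hUW hP.2.1, fr_sup_pt (hS P hP.1) hP.2.2⟩

local notation "qq" => Fintype.card F

lemma card_sub (M : Submodule F V) : Nat.card M = qq ^ fr M := by
  have := Fintype.ofFinite M
  rw [Nat.card_eq_fintype_card, Module.card_eq_pow_finrank (K := F)]

lemma card_pts (W : Submodule F V) : (pts W).card * (qq - 1) + 1 = qq ^ fr W := by
  have := Fintype.ofFinite V
  have e1 : ∀ M : Submodule F V, ((univ : Finset V).filter fun v => v ∈ M ∧ v ≠ 0).card + 1 = qq ^ fr M := by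
    intro M
    rw [← card_sub]
    have h : Nat.card M = ((univ : Finset V).filter fun v => v ∈ M).card := by
      rw [Nat.card_eq_fintype_card, ← Fintype.card_subtype]
    rw [h]
    have h2 : ((univ : Finset V).filter fun v => v ∈ M ∧ v ≠ 0) = ((univ : Finset V).filter fun v => v ∈ M).erase 0 := by
      ext; simp [and_comm]
    rw [h2, Finset.card_erase_add_one (by simp)]
  rw [← e1 W]
  congr 1
  rw [Finset.card_eq_sum_card_fiberwise (f := fun v => Submodule.span F {v}) (t := pts W)]
  · rw [← smul_eq_mul, ← Finset.sum_const]
    refine Finset.sum_congr rfl fun P hP => ?_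
    rw [mem_pts] at hP
    have := e1 P
    rw [hP.1, pow_one] at this
    rw [show qq - 1 = ((univ : Finset V).filter fun v => v ∈ P ∧ v ≠ 0).card by omega]
    congr 1
    ext v
    simp only [Finset.mem_filter, Finset.mem_univ, true_and]
    constructor
    · rintro ⟨h1, h2⟩
      refine ⟨⟨hP.2 h1, h2⟩, ?_⟩
      apply pt_eq _ hP.1 ((Submodule.span_singleton_le_iff_mem _ _).2 h1)
      exact finrank_span_singleton h2
    · rintro ⟨⟨h1, h2⟩, rfl⟩
      exact ⟨Submodule.mem_span_singleton_self v, h2⟩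
  · intro v hv
    simp only [Finset.coe_filter, Set.mem_setOf_eq, Finset.mem_univ, true_and] at hv
    simp only [Finset.mem_coe, mem_pts]
    exact ⟨finrank_span_singleton hv.2, (Submodule.span_singleton_le_iff_mem _ _).2 hv.1⟩

lemma q_pos : 2 ≤ qq := Fintype.one_lt_card

lemma card_pts_diff {U W : Submodule F V} (h : U ≤ W) :
    ((pts W).filter fun P => P ≤ W ∧ ¬ P ≤ U).card * (qq - 1) + qq ^ fr U = qq ^ fr W := by
  have e : (pts W).filter (fun P => P ≤ W ∧ ¬ P ≤ U) = pts W \ pts U := by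
    ext P; simp only [Finset.mem_filter, Finset.mem_sdiff, mem_pts]; tauto
  have hs : pts U ⊆ pts W := fun P hP => by rw [mem_pts] at *; exact ⟨hP.1, hP.2.trans h⟩
  rw [e, Finset.card_sdiff_of_subset hs, Nat.sub_mul, ← card_pts W, ← card_pts U]
  have := Nat.mul_le_mul_right (qq - 1) (Finset.card_le_card hs)
  omega

lemma card_cov {U W : Submodule F V} (h : U ≤ W) :
    (cov U W).card * (qq - 1) + 1 = qq ^ (fr W - fr U) := by
  have hq := q_pos (F := F)
  have hc := cover (pts W) (fun P hP => (mem_pts.1 hP).1) h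
  have hM : ∀ M ∈ cov U W, ((pts W).filter fun P => P ≤ M ∧ ¬ P ≤ U).card = qq ^ fr U := by
    intro M hM
    rw [mem_cov] at hM
    have := card_pts_diff hM.1
    have e : (pts M).filter (fun P => P ≤ M ∧ ¬ P ≤ U) = (pts W).filter fun P => P ≤ M ∧ ¬ P ≤ U := by
      ext P; simp only [Finset.mem_filter, mem_pts]
      constructor
      · rintro ⟨⟨a, b⟩, c, d⟩; exact ⟨⟨a, b.trans hM.2.1⟩, c, d⟩
      · rintro ⟨⟨a, b⟩, c, d⟩; exact ⟨⟨a, c⟩, c, d⟩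
    rw [e, hM.2.2, pow_succ] at this
    have h2 : qq ^ fr U * qq = qq ^ fr U * (qq - 1) + qq ^ fr U := by
      conv_lhs => rw [show qq = (qq - 1) + 1 by omega]
      rw [mul_add]; simp
      rw [show qq - 1 + 1 = qq by omega]
    rw [h2] at this
    exact Nat.eq_of_mul_eq_mul_right (by omega : 0 < qq - 1) (by omega)
  rw [Finset.sum_congr rfl hM, Finset.sum_const, smul_eq_mul] at hc
  have h3 := card_pts_diff h
  rw [← hc] at h3
  have h4 : qq ^ fr W = qq ^ (fr W - fr U) * qq ^ fr U := by
    rw [← pow_add, Nat.sub_add_cancel (fr_mono h)]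
  rw [h4] at h3
  have : 0 < qq ^ fr U := by positivity
  apply Nat.eq_of_mul_eq_mul_right this
  rw [← h3]; ring

lemma card_cov1 {U W : Submodule F V} (h : U ≤ W) (hf : fr W = fr U + 2) : (cov U W).card = qq + 1 := by
  have hq := q_pos (F := F)
  have := card_cov h
  rw [hf, show fr U + 2 - fr U = 2 by omega] at this
  obtain ⟨r, hr⟩ : ∃ r, qq = r + 1 := ⟨qq - 1, by omega⟩
  rw [hr] at this ⊢
  simp only [Nat.add_sub_cancel] at this
  have h0 : 0 < r := by omega
  apply Nat.eq_of_mul_eq_mul_right h0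
  nlinarith

lemma card_cov2 {U W : Submodule F V} (h : U ≤ W) (hf : fr W = fr U + 3) :
    (cov U W).card = qq ^ 2 + qq + 1 := by
  have hq := q_pos (F := F)
  have := card_cov h
  rw [hf, show fr U + 3 - fr U = 3 by omega] at this
  obtain ⟨r, hr⟩ : ∃ r, qq = r + 1 := ⟨qq - 1, by omega⟩
  rw [hr] at this ⊢
  simp only [Nat.add_sub_cancel] at this
  have h0 : 0 < r := by omega
  apply Nat.eq_of_mul_eq_mul_right h0
  nlinarith

lemma card_cov3 {U W : Submodule F V} (h : U ≤ W) (hf : fr W = fr U + 4) :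
    (cov U W).card = qq ^ 3 + qq ^ 2 + qq + 1 := by
  have hq := q_pos (F := F)
  have := card_cov h
  rw [hf, show fr U + 4 - fr U = 4 by omega] at this
  obtain ⟨r, hr⟩ : ∃ r, qq = r + 1 := ⟨qq - 1, by omega⟩
  rw [hr] at this ⊢
  simp only [Nat.add_sub_cancel] at this
  have h0 : 0 < r := by omega
  apply Nat.eq_of_mul_eq_mul_right h0
  nlinarith

lemma card_pts2 {W : Submodule F V} (hf : fr W = 2) : (pts W).card = qq + 1 := by
  have hq := q_pos (F := F)
  have := card_pts W
  rw [hf] at this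
  obtain ⟨r, hr⟩ : ∃ r, qq = r + 1 := ⟨qq - 1, by omega⟩
  rw [hr] at this ⊢
  simp only [Nat.add_sub_cancel] at this
  have h0 : 0 < r := by omega
  apply Nat.eq_of_mul_eq_mul_right h0
  nlinarith

lemma card_pts5 {W : Submodule F V} (hf : fr W = 5) : (pts W).card = qq^4 + qq^3 + qq^2 + qq + 1 := by
  have hq := q_pos (F := F)
  have := card_pts W
  rw [hf] at this
  obtain ⟨r, hr⟩ : ∃ r, qq = r + 1 := ⟨qq - 1, by omega⟩
  rw [hr] at this ⊢
  simp only [Nat.add_sub_cancel] at this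
  have h0 : 0 < r := by omega
  apply Nat.eq_of_mul_eq_mul_right h0
  nlinarith

lemma card_pts4 {W : Submodule F V} (hf : fr W = 4) : (pts W).card = qq^3 + qq^2 + qq + 1 := by
  have hq := q_pos (F := F)
  have := card_pts W
  rw [hf] at this
  obtain ⟨r, hr⟩ : ∃ r, qq = r + 1 := ⟨qq - 1, by omega⟩
  rw [hr] at this ⊢
  simp only [Nat.add_sub_cancel] at this
  have h0 : 0 < r := by omega
  apply Nat.eq_of_mul_eq_mul_right h0
  nlinarith

/-- tangent lines at `P` in `W` -/
noncomputable def tl (K : Finset (Submodule F V)) (P W : Submodule F V) : Finset (Submodule F V) :=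
  (cov P W).filter fun L => ∀ R ∈ K, R ≤ L → R = P

lemma cap_three {K : Finset (Submodule F V)} (hK : Cap K) {m P Q R : Submodule F V} (hm : fr m = 2)
    (hP : P ∈ K) (hQ : Q ∈ K) (hR : R ∈ K) (h1 : P ≤ m) (h2 : Q ≤ m) (h3 : R ≤ m) (n : P ≠ Q)
    : R = P ∨ R = Q := by
  by_contra hc
  push Not at hc
  have h := hK.2 m hm
  have : ({P, Q, R} : Finset (Submodule F V)) ⊆ sec K m := by
    intro x hx
    simp only [Finset.mem_insert, Finset.mem_singleton] at hx
    rw [mem_sec]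
    rcases hx with rfl | rfl | rfl <;> simp [*]
  have h4 := Finset.card_le_card this
  rw [Finset.card_eq_three.2 ⟨P, Q, R, n, hc.1.symm, hc.2.symm, rfl⟩] at h4
  omega

lemma card_tl {K : Finset (Submodule F V)} (hK : Cap K) {P W : Submodule F V} (hP : P ∈ K) (hPW : P ≤ W) :
    (tl K P W).card + (sec K W).card = (cov P W).card + 1 := by
  have hP1 := hK.1 P hP
  have hc := cover K hK.1 hPW
  have e1 : K.filter (fun R => R ≤ W ∧ ¬ R ≤ P) = (sec K W).erase P := by
    ext R; simp only [Finset.mem_filter, Finset.mem_erase, mem_sec]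
    constructor
    · rintro ⟨a, b, c⟩; exact ⟨by rintro rfl; exact c le_rfl, a, b⟩
    · rintro ⟨a, b, c⟩; exact ⟨b, c, fun h => a (pt_eq (hK.1 R b) hP1 h)⟩
  have hPs : P ∈ sec K W := mem_sec.2 ⟨hP, hPW⟩
  rw [e1] at hc
  have h1 := Finset.card_erase_add_one hPs
  have hM : ∀ M ∈ cov P W, (K.filter fun R => R ≤ M ∧ ¬ R ≤ P).card =
      if (∀ R ∈ K, R ≤ M → R = P) then 0 else 1 := by
    intro M hM
    rw [mem_cov] at hM
    split_ifs with h
    · rw [Finset.card_eq_zero, Finset.filter_eq_empty_iff]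
      rintro R hR ⟨a, b⟩
      exact b (h R hR a).le
    · push Not at h
      obtain ⟨R, hR, hRM, hRP⟩ := h
      rw [Finset.card_eq_one]
      refine ⟨R, ?_⟩
      ext Q
      simp only [Finset.mem_filter, Finset.mem_singleton]
      constructor
      · rintro ⟨a, b, c⟩
        rcases cap_three hK (by omega : fr M = 2) hP hR a hM.1 hRM b (Ne.symm hRP) with rfl | rfl
        · exact absurd le_rfl c
        · rfl
      · rintro rfl
        exact ⟨hR, hRM, fun h => hRP (pt_eq (hK.1 _ hR) hP1 h)⟩
  rw [Finset.sum_congr rfl hM, Finset.sum_ite] at hc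
  simp only [Finset.sum_const, smul_eq_mul, mul_zero, mul_one, zero_add] at hc
  have h2 := Finset.card_filter_add_card_filter_not (s := cov P W) (fun L => ∀ R ∈ K, R ≤ L → R = P)
  simp only [tl]
  omega

lemma card_tl_plane {K : Finset (Submodule F V)} (hK : Cap K) {P W : Submodule F V} (hP : P ∈ K)
    (hPW : P ≤ W) (hW : fr W = 3) : (tl K P W).card + (sec K W).card = qq + 2 := by
  rw [card_tl hK hP hPW, card_cov1 hPW (by rw [hK.1 P hP, hW])]

end Fr
end CapPf

namespace CapPf
open Classical
open Finset (univ filter card)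
section D1
variable {F : Type*} [Field F] [Fintype F] {V : Type*} [AddCommGroup V] [Module F V] [Finite V]
local notation "qq" => Fintype.card F

noncomputable def rep (P : Submodule F V) : V := if h : ∃ v, P = Submodule.span F {v} then h.choose else 0
lemma rep_span {P : Submodule F V} (hP : fr P = 1) : P = Submodule.span F {rep P} := by
  have h : ∃ v, P = Submodule.span F {v} := by
    obtain ⟨v, hv, hv'⟩ := finrank_eq_one_iff'.1 hP
    refine ⟨v, le_antisymm (fun x hx => ?_) ((Submodule.span_singleton_le_iff_mem _ _).2 v.2)⟩
    obtain ⟨c, hc⟩ := hv' ⟨x, hx⟩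
    exact Submodule.mem_span_singleton.2 ⟨c, by simpa using congrArg Subtype.val hc⟩
  rw [rep, dif_pos h]; exact h.choose_spec

lemma rep_le {P M : Submodule F V} (hP : fr P = 1) : P ≤ M ↔ rep P ∈ M := by
  conv_lhs => rw [rep_span hP]
  exact Submodule.span_singleton_le_iff_mem _ _

noncomputable def evp (π P : Submodule F V) : Dual F (Dual F π) :=
  if h : rep P ∈ π then Dual.eval F π ⟨rep P, h⟩ else 0

def kr (π : Submodule F V) (u : Dual F π) : Submodule F V := (LinearMap.ker u).map π.subtype

lemma kr_le (π : Submodule F V) (u : Dual F π) : kr π u ≤ π := by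
  rintro x ⟨y, -, rfl⟩; exact y.2

lemma kr_fr {π : Submodule F V} (hπ : fr π = 3) {u : Dual F π} (hu : u ≠ 0) : fr (kr π u) = 2 := by
  have h1 := Module.Dual.finrank_ker_add_one_of_ne_zero hu
  have h2 : fr (kr π u) = finrank F (LinearMap.ker u) :=
    Submodule.finrank_map_subtype_eq π (LinearMap.ker u)
  simp only [fr] at *
  omega

lemma evp_iff {π P : Submodule F V} (hP : P ∈ pts π) (u : Dual F π) : evp π P u = 0 ↔ P ≤ kr π u := by
  obtain ⟨h1, h2⟩ := mem_pts.1 hP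
  have h3 := (rep_le h1).1 h2
  rw [rep_le h1, evp, dif_pos h3]
  simp only [Dual.eval_apply, kr, Submodule.mem_map, LinearMap.mem_ker, Submodule.subtype_apply]
  constructor
  · intro h; exact ⟨_, h, rfl⟩
  · rintro ⟨y, hy, hy'⟩
    have : y = ⟨rep P, h3⟩ := Subtype.ext hy'
    rwa [← this]

lemma ind2 {π P Q : Submodule F V} (hP : P ∈ pts π) (hQ : Q ∈ pts π) (h : P ≠ Q) :
    Ind2 (evp π P) (evp π Q) := by
  have hP' := mem_pts.1 hP
  have hQ' := mem_pts.1 hQ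
  have h3 := (rep_le hP'.1).1 hP'.2
  have h4 := (rep_le hQ'.1).1 hQ'.2
  constructor
  · intro h0
    rw [evp, dif_pos h3] at h0
    have : (⟨rep P, h3⟩ : π) = 0 := by
      rw [← Module.forall_dual_apply_eq_zero_iff F]
      intro f; simpa using LinearMap.congr_fun h0 f
    have h5 : rep P = 0 := congrArg Subtype.val this
    have h6 := rep_span hP'.1
    rw [h5] at h6
    have := hP'.1
    rw [h6] at this
    rw [Submodule.span_zero_singleton, fr, finrank_bot] at this
    omega
  · have hn : (⟨rep Q, h4⟩ : π) ∉ P.comap π.subtype := by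
      simp only [Submodule.mem_comap, Submodule.subtype_apply]
      intro h5
      exact h (pt_eq hQ'.1 hP'.1 ((rep_le hQ'.1).2 h5)).symm
    obtain ⟨f, hf, hf'⟩ := Submodule.exists_le_ker_of_notMem hn
    refine ⟨f, ?_, ?_⟩
    · rw [evp, dif_pos h3]
      simp only [Dual.eval_apply]
      exact hf' (show rep P ∈ P from (rep_le hP'.1).1 le_rfl)
    · rw [evp, dif_pos h4]; simpa using hf

lemma ind3 {π P Q R : Submodule F V} (hπ : fr π = 3) (hP : P ∈ pts π) (hQ : Q ∈ pts π) (hR : R ∈ pts π)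
    (h : ∀ m : Submodule F V, fr m = 2 → P ≤ m → Q ≤ m → R ≤ m → False) :
    Ind3 (evp π P) (evp π Q) (evp π R) := by
  intro u h1 h2 h3
  by_contra hu
  rw [evp_iff hP] at h1
  rw [evp_iff hQ] at h2
  rw [evp_iff hR] at h3
  exact h _ (kr_fr hπ hu) h1 h2 h3

lemma evp_inj {π P Q : Submodule F V} (hP : P ∈ pts π) (hQ : Q ∈ pts π) (h : evp π P = evp π Q) : P = Q := by
  by_contra hn
  obtain ⟨-, z, h1, h2⟩ := ind2 hP hQ hn
  rw [h] at h1; exact h2 h1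

/-- tangency number -/
noncomputable def tau (K : Finset (Submodule F V)) (X W : Submodule F V) : ℕ :=
  ((sec K W).filter fun P => Tan K P X).card

lemma exists_other {L P : Submodule F V} (hL : fr L = 2) (hP : fr P = 1) : ∃ Q, fr Q = 1 ∧ Q ≤ L ∧ Q ≠ P := by
  have h := card_pts2 hL
  have hq := q_pos (F := F)
  obtain ⟨Q, hQ, hn⟩ := Finset.exists_mem_ne (by omega : 1 < (pts L).card) P
  exact ⟨Q, (mem_pts.1 hQ).1, (mem_pts.1 hQ).2, hn⟩

theorem D1 [CharP F 2] {K : Finset (Submodule F V)} (hK : Cap K) {π X : Submodule F V} (hπ : fr π = 3)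
    (hX : fr X = 1) (hXπ : X ≤ π) (hXK : X ∉ K) (hne : ∃ P ∈ sec K π, ¬ Tan K P X) :
    tau K X π + (sec K π).card ≤ qq + 2 := by
  by_contra hlt
  push Not at hlt
  have hsp : ∀ P ∈ sec K π, P ∈ pts π := fun P hP =>
    mem_pts.2 ⟨hK.1 P (mem_sec.1 hP).1, (mem_sec.1 hP).2⟩
  have hXp : X ∈ pts π := mem_pts.2 ⟨hX, hXπ⟩
  obtain ⟨P₀, hP₀, hP₀t⟩ := hne
  have hsle : (sec K π).card ≤ qq + 2 := by
    have := card_tl_plane hK (mem_sec.1 hP₀).1 (mem_sec.1 hP₀).2 hπ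
    omega
  -- choice of tangent representatives
  have hchoice : ∀ L P : Submodule F V, ∃ Q : Submodule F V, fr L = 2 → fr P = 1 → fr Q = 1 ∧ Q ≤ L ∧ Q ≠ P := by
    intro L P
    by_cases h : fr L = 2 ∧ fr P = 1
    · obtain ⟨Q, hQ⟩ := exists_other h.1 h.2
      exact ⟨Q, fun _ _ => hQ⟩
    · exact ⟨⊥, fun a b => absurd ⟨a, b⟩ h⟩
  choose e he using hchoice
  let S : Finset (Dual F (Dual F π)) := (sec K π).image (evp π)
  have hinjS : Set.InjOn (evp π) (sec K π) := fun a ha b hb h => evp_inj (hsp a ha) (hsp b hb) h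
  have hScard : S.card = (sec K π).card := Finset.card_image_of_injOn hinjS
  let inv : Dual F (Dual F π) → Submodule F V := fun p => if h : ∃ P ∈ sec K π, evp π P = p then h.choose else ⊥
  have hinv : ∀ P ∈ sec K π, inv (evp π P) = P := by
    intro P hP
    have h : ∃ P' ∈ sec K π, evp π P' = evp π P := ⟨P, hP, rfl⟩
    simp only [inv, dif_pos h]
    exact evp_inj (hsp _ h.choose_spec.1) (hsp P hP) h.choose_spec.2
  let T : Dual F (Dual F π) → Finset (Dual F (Dual F π)) := fun p =>
    (tl K (inv p) π).image fun L => evp π (e L (inv p))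
  have htl : ∀ P ∈ sec K π, ∀ L ∈ tl K P π, P ≤ L ∧ L ≤ π ∧ fr L = 2 ∧ (∀ R ∈ K, R ≤ L → R = P) ∧
      fr (e L P) = 1 ∧ e L P ≤ L ∧ e L P ≠ P ∧ e L P ∈ pts π := by
    intro P hP L hL
    simp only [tl, Finset.mem_filter, mem_cov] at hL
    have hP1 := (mem_pts.1 (hsp P hP)).1
    have hL2 : fr L = 2 := by omega
    obtain ⟨a, b, c⟩ := he L P hL2 hP1
    exact ⟨hL.1.1, hL.1.2.1, hL2, hL.2, a, b, c, mem_pts.2 ⟨a, b.trans hL.1.2.1⟩⟩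
  have hA : ArcT S T := by
    constructor
    · intro p hp p' hp' hn
      obtain ⟨P, hP, rfl⟩ := Finset.mem_image.1 hp
      obtain ⟨Q, hQ, rfl⟩ := Finset.mem_image.1 hp'
      exact ind2 (hsp P hP) (hsp Q hQ) (fun h => hn (by rw [h]))
    · intro p hp x hx y hy n1 n2 n3
      obtain ⟨P, hP, rfl⟩ := Finset.mem_image.1 hp
      obtain ⟨Q, hQ, rfl⟩ := Finset.mem_image.1 hx
      obtain ⟨R, hR, rfl⟩ := Finset.mem_image.1 hy
      refine ind3 hπ (hsp P hP) (hsp Q hQ) (hsp R hR) fun m hm h1 h2 h3 => ?_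
      rcases cap_three hK hm (mem_sec.1 hP).1 (mem_sec.1 hQ).1 (mem_sec.1 hR).1 h1 h2 h3
        (fun h => n1 (by rw [h])) with h | h
      · exact n2 (by rw [h])
      · exact n3 (by rw [h])
    · intro p hp x hx y hy n1
      obtain ⟨P, hP, rfl⟩ := Finset.mem_image.1 hp
      obtain ⟨L, hL, rfl⟩ := Finset.mem_image.1 hx
      obtain ⟨R, hR, rfl⟩ := Finset.mem_image.1 hy
      rw [hinv P hP] at hL ⊢
      obtain ⟨a1, a2, a3, a4, a5, a6, a7, a8⟩ := htl P hP L hL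
      refine ind3 hπ (hsp P hP) a8 (hsp R hR) fun m hm h1 h2 h3 => ?_
      have : m = L := by
        rw [← line_eq (hK.1 P (mem_sec.1 hP).1) a5 a7.symm hm h1 h2,
          line_eq (hK.1 P (mem_sec.1 hP).1) a5 a7.symm a3 a1 a6]
      subst this
      exact n1 (by rw [a4 R (mem_sec.1 hR).1 h3])
    · intro p hp x hx y hy n1
      obtain ⟨P, hP, rfl⟩ := Finset.mem_image.1 hp
      obtain ⟨L, hL, rfl⟩ := Finset.mem_image.1 hx
      obtain ⟨M, hM, rfl⟩ := Finset.mem_image.1 hy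
      rw [hinv P hP] at hL hM n1 ⊢
      obtain ⟨a1, a2, a3, a4, a5, a6, a7, a8⟩ := htl P hP L hL
      obtain ⟨b1, b2, b3, b4, b5, b6, b7, b8⟩ := htl P hP M hM
      refine ind3 hπ (hsp P hP) a8 b8 fun m hm h1 h2 h3 => n1 ?_
      have hP1 := hK.1 P (mem_sec.1 hP).1
      have e1 : m = L := by
        rw [← line_eq hP1 a5 a7.symm hm h1 h2, line_eq hP1 a5 a7.symm a3 a1 a6]
      have e2 : m = M := by
        rw [← line_eq hP1 b5 b7.symm hm h1 h3, line_eq hP1 b5 b7.symm b3 b1 b6]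
      rw [← e1, ← e2]
    · intro p hp x hx hxS
      obtain ⟨P, hP, rfl⟩ := Finset.mem_image.1 hp
      obtain ⟨L, hL, rfl⟩ := Finset.mem_image.1 hx
      rw [hinv P hP] at hL hxS
      obtain ⟨R, hR, h⟩ := Finset.mem_image.1 hxS
      obtain ⟨a1, a2, a3, a4, a5, a6, a7, a8⟩ := htl P hP L hL
      have := evp_inj (hsp R hR) a8 h
      subst this
      exact a7 (a4 _ (mem_sec.1 hR).1 a6)
    · intro p hp
      obtain ⟨P, hP, rfl⟩ := Finset.mem_image.1 hp
      rw [hScard, ← card_tl_plane hK (mem_sec.1 hP).1 (mem_sec.1 hP).2 hπ]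
      simp only [T, hinv P hP]
      rw [Finset.card_image_of_injOn]
      intro L hL M hM h
      obtain ⟨a1, a2, a3, a4, a5, a6, a7, a8⟩ := htl P hP L hL
      obtain ⟨b1, b2, b3, b4, b5, b6, b7, b8⟩ := htl P hP M hM
      have h' : e L P = e M P := evp_inj a8 b8 h
      have hP1 := hK.1 P (mem_sec.1 hP).1
      rw [← line_eq hP1 a5 a7.symm a3 a1 a6, ← line_eq hP1 b5 b7.symm b3 b1 b6, h']
    · intro p hp u hu hpu htan
      obtain ⟨P, hP, rfl⟩ := Finset.mem_image.1 hp
      have hP1 := hK.1 P (mem_sec.1 hP).1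
      rw [evp_iff (hsp P hP)] at hpu
      have hL : kr π u ∈ tl K P π := by
        simp only [tl, Finset.mem_filter, mem_cov]
        refine ⟨⟨hpu, kr_le _ _, by rw [kr_fr hπ hu, hP1]⟩, fun R hR hRL => ?_⟩
        have hRs : R ∈ sec K π := mem_sec.2 ⟨hR, hRL.trans (kr_le _ _)⟩
        exact evp_inj (hsp R hRs) (hsp P hP)
          (htan _ (Finset.mem_image_of_mem _ hRs) ((evp_iff (hsp R hRs) u).2 hRL))
      refine ⟨evp π (e (kr π u) P), ?_, ?_⟩
      · simp only [T, hinv P hP]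
        exact Finset.mem_image_of_mem (fun L => evp π (e L P)) hL
      · obtain ⟨a1, a2, a3, a4, a5, a6, a7, a8⟩ := htl P hP _ hL
        exact (evp_iff a8 u).2 a6
  have hXne : ∀ P ∈ sec K π, X ≠ P := by rintro P hP rfl; exact hXK (mem_sec.1 hP).1
  have hfin : Module.Finite F π := inferInstance
  have hW : finrank F (Dual F π) = 3 := by rw [Subspace.dual_finrank_eq]; exact hπ
  have hXI : ∀ p ∈ S, Ind2 (evp π X) p := by
    intro p hp
    obtain ⟨P, hP, rfl⟩ := Finset.mem_image.1 hp
    exact ind2 hXp (hsp P hP) (hXne P hP)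
  have hkr : ∀ P ∈ sec K π, ∀ u, u ≠ 0 → evp π X u = 0 → evp π P u = 0 → P ⊔ X = kr π u := by
    intro P hP u hu h1 h2
    exact line_eq (hK.1 P (mem_sec.1 hP).1) hX (hXne P hP).symm (kr_fr hπ hu)
      ((evp_iff (hsp P hP) u).1 h2) ((evp_iff hXp u).1 h1)
  have hd := dichotomy hW hA hXI (d := qq + 2 - (sec K π).card) (by rw [hScard]; omega)
    (((sec K π).filter fun P => Tan K P X).image (evp π))
    (Finset.image_subset_image (Finset.filter_subset _ _))
    (by
      rw [Finset.card_image_of_injOn (hinjS.mono fun x hx => (Finset.mem_filter.1 hx).1)]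
      simp only [tau] at hlt
      omega)
    (by
      intro p hp u hu h1 h2 s hs hsu
      obtain ⟨P, hP, rfl⟩ := Finset.mem_image.1 hp
      obtain ⟨R, hR, rfl⟩ := Finset.mem_image.1 hs
      obtain ⟨hP, hPt⟩ := Finset.mem_filter.1 hP
      rw [hPt R (mem_sec.1 hR).1 (by rw [hkr P hP u hu h1 h2]; exact (evp_iff (hsp R hR) u).1 hsu)])
  apply hP₀t
  intro R hR hRl
  obtain ⟨u, hu, h1, h2, -⟩ := line_vec hW (hXI _ (Finset.mem_image_of_mem _ hP₀))
  have hRs : R ∈ sec K π := mem_sec.2 ⟨hR, hRl.trans (sup_le (mem_sec.1 hP₀).2 hXπ)⟩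
  refine evp_inj (hsp R hRs) (hsp P₀ hP₀) (hd _ (Finset.mem_image_of_mem _ hP₀) u hu h1 h2 _
    (Finset.mem_image_of_mem _ hRs) ?_)
  rw [evp_iff (hsp R hRs), ← hkr P₀ hP₀ u hu h1 h2]
  exact hRl

end D1
end CapPf

namespace CapPf
open Classical
open Finset (univ filter card)
section Cnt
variable {F : Type*} [Field F] [Fintype F] {V : Type*} [AddCommGroup V] [Module F V] [Finite V]
local notation "qq" => Fintype.card F
local notation "Q" => (Fintype.card F : ℤ)

noncomputable def sz (K : Finset (Submodule F V)) (W : Submodule F V) : ℤ := ((sec K W).card : ℤ)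

lemma sz_nonneg (K : Finset (Submodule F V)) (W : Submodule F V) : 0 ≤ sz K W := by simp [sz]

lemma sec_mono (K : Finset (Submodule F V)) {U W : Submodule F V} (h : U ≤ W) : sec K U ⊆ sec K W :=
  fun P hP => mem_sec.2 ⟨(mem_sec.1 hP).1, (mem_sec.1 hP).2.trans h⟩

lemma sz_mono (K : Finset (Submodule F V)) {U W : Submodule F V} (h : U ≤ W) : sz K U ≤ sz K W := by
  simp only [sz]; exact_mod_cast Finset.card_le_card (sec_mono K h)

lemma sz_diff (K : Finset (Submodule F V)) {U W : Submodule F V} (h : U ≤ W) :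
    ((K.filter fun P => P ≤ W ∧ ¬ P ≤ U).card : ℤ) = sz K W - sz K U := by
  have e : K.filter (fun P => P ≤ W ∧ ¬ P ≤ U) = sec K W \ sec K U := by
    ext P; simp only [Finset.mem_filter, Finset.mem_sdiff, mem_sec]; tauto
  rw [e, Finset.cast_card_sdiff (sec_mono K h)]
  simp [sz]

lemma cov_sum {K : Finset (Submodule F V)} (hK : ∀ P ∈ K, fr P = 1) {U W : Submodule F V} (h : U ≤ W) :
    ∑ M ∈ cov U W, (sz K M - sz K U) = sz K W - sz K U := by
  rw [← sz_diff K h, ← cover K hK h]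
  push_cast
  exact Finset.sum_congr rfl fun M hM => (sz_diff K (mem_cov.1 hM).1).symm

lemma cov_sum' {K : Finset (Submodule F V)} (hK : ∀ P ∈ K, fr P = 1) {U W : Submodule F V} (h : U ≤ W) :
    ∑ M ∈ cov U W, sz K M = sz K W - sz K U + (cov U W).card * sz K U := by
  have := cov_sum hK h
  rw [Finset.sum_sub_distrib, Finset.sum_const, nsmul_eq_mul] at this
  linarith

noncomputable def dd (K : Finset (Submodule F V)) (π : Submodule F V) : ℤ := Q + 2 - sz K π

lemma dd_nonneg {K : Finset (Submodule F V)} (hK : Cap K) {π : Submodule F V} (hπ : fr π = 3) : 0 ≤ dd K π := by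
  rw [dd, sz]
  rcases (sec K π).eq_empty_or_nonempty with h | ⟨P, hP⟩
  · rw [h]; simp; positivity
  · have := card_tl_plane hK (mem_sec.1 hP).1 (mem_sec.1 hP).2 hπ
    have h2 : ((tl K P π).card : ℤ) + (sec K π).card = Q + 2 := by exact_mod_cast this
    have : (0:ℤ) ≤ (tl K P π).card := by positivity
    linarith

lemma dd_eq_tl {K : Finset (Submodule F V)} (hK : Cap K) {π P : Submodule F V} (hπ : fr π = 3) (hP : P ∈ sec K π) :
    ((tl K P π).card : ℤ) = dd K π := by
  have := card_tl_plane hK (mem_sec.1 hP).1 (mem_sec.1 hP).2 hπ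
  have h2 : ((tl K P π).card : ℤ) + (sec K π).card = Q + 2 := by exact_mod_cast this
  rw [dd, sz]; linarith

lemma tau_eq (K : Finset (Submodule F V)) (X W : Submodule F V) :
    (tau K X W : ℤ) = sz (K.filter fun P => Tan K P X) W := by
  rw [tau, sz]; congr 2
  ext P; simp only [Finset.mem_filter, mem_sec]; tauto

lemma tau_le_sz (K : Finset (Submodule F V)) (X W : Submodule F V) : (tau K X W : ℤ) ≤ sz K W := by
  rw [tau, sz]; exact_mod_cast Finset.card_le_card (Finset.filter_subset _ _)

lemma tau_mono (K : Finset (Submodule F V)) (X : Submodule F V) {U W : Submodule F V} (h : U ≤ W) :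
    (tau K X U : ℤ) ≤ tau K X W := by
  rw [tau_eq, tau_eq]; exact sz_mono _ h

def Ext (K : Finset (Submodule F V)) (X W : Submodule F V) : Prop := ∀ P ∈ sec K W, Tan K P X

lemma Ext.mono {K : Finset (Submodule F V)} {X U W : Submodule F V} (h : Ext K X W) (hU : U ≤ W) : Ext K X U :=
  fun P hP => h P (sec_mono K hU hP)

lemma Ext.tau {K : Finset (Submodule F V)} {X W : Submodule F V} (h : Ext K X W) : (tau K X W : ℤ) = sz K W := by
  rw [CapPf.tau, sz, Finset.filter_true_of_mem h]

lemma cov_tau {K : Finset (Submodule F V)} (hK : Cap K) (X : Submodule F V) {U W : Submodule F V} (h : U ≤ W) :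
    ∑ M ∈ cov U W, ((tau K X M : ℤ) - tau K X U) = tau K X W - tau K X U := by
  simp only [tau_eq]
  exact cov_sum (fun P hP => hK.1 P (Finset.mem_filter.1 hP).1) h

/-- secant through a nonext point -/
lemma not_ext {K : Finset (Submodule F V)} (hK : Cap K) {X W : Submodule F V} (hX : fr X = 1) (hXW : X ≤ W)
    (hXK : X ∉ K) (h : ¬ Ext K X W) :
    ∃ m, fr m = 2 ∧ X ≤ m ∧ m ≤ W ∧ sz K m = 2 ∧ tau K X m = 0 := by
  simp only [Ext, Tan] at h
  push Not at h
  obtain ⟨P, hP, R, hR, hRl, hRP⟩ := h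
  have hP' := mem_sec.1 hP
  have hP1 := hK.1 P hP'.1
  have hXP : P ≠ X := by rintro rfl; exact hXK hP'.1
  have hm := fr_line hP1 hX hXP
  have hsec : sec K (P ⊔ X) = {P, R} := by
    ext S
    simp only [mem_sec, Finset.mem_insert, Finset.mem_singleton]
    constructor
    · rintro ⟨a, b⟩
      exact cap_three hK hm hP'.1 hR a le_sup_left hRl b (Ne.symm hRP)
    · rintro (rfl | rfl)
      · exact ⟨hP'.1, le_sup_left⟩
      · exact ⟨hR, hRl⟩
  refine ⟨P ⊔ X, hm, le_sup_right, sup_le hP'.2 hXW, ?_, ?_⟩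
  · rw [sz, hsec, Finset.card_pair (Ne.symm hRP)]; rfl
  · rw [tau, hsec, Finset.card_eq_zero, Finset.filter_eq_empty_iff]
    intro S hS hT
    simp only [Finset.mem_insert, Finset.mem_singleton] at hS
    rcases hS with rfl | rfl
    · exact hRP (hT R hR hRl)
    · have hSX : S ≠ X := by rintro rfl; exact hXK hR
      have : S ⊔ X = P ⊔ X := line_eq (hK.1 S hR) hX hSX hm hRl le_sup_right
      exact hRP (hT P hP'.1 (this ▸ le_sup_left)).symm

lemma tau_le_dd [CharP F 2] {K : Finset (Submodule F V)} (hK : Cap K) {X π : Submodule F V} (hπ : fr π = 3)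
    (hX : fr X = 1) (hXW : X ≤ π) (hXK : X ∉ K) (h : ¬ Ext K X π) : (tau K X π : ℤ) ≤ dd K π := by
  have : tau K X π + (sec K π).card ≤ qq + 2 := by
    apply D1 hK hπ hX hXW hXK
    simpa [Ext] using h
  have h2 : (tau K X π : ℤ) + (sec K π).card ≤ Q + 2 := by exact_mod_cast this
  rw [dd, sz]; linarith

/-- sum of d over planes through a secant -/
lemma sum_dd {K : Finset (Submodule F V)} (hK : Cap K) {m W : Submodule F V} (hmW : m ≤ W) (hs : sz K m = 2) :
    ∑ π ∈ cov m W, dd K π = Q * (cov m W).card + 2 - sz K W := by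
  simp only [dd]
  rw [Finset.sum_sub_distrib, cov_sum' hK.1 hmW, Finset.sum_const, nsmul_eq_mul, hs]
  ring

lemma tau_le_t [CharP F 2] {K : Finset (Submodule F V)} (hK : Cap K) {X W : Submodule F V}
    (hX : fr X = 1) (hXW : X ≤ W) (hXK : X ∉ K) (h : ¬ Ext K X W) {c : ℤ}
    (hc : ∀ m, fr m = 2 → m ≤ W → ((cov m W).card : ℤ) = c) :
    (tau K X W : ℤ) ≤ Q * c + 2 - sz K W := by
  obtain ⟨m, hm, hXm, hmW, hsm, htm⟩ := not_ext hK hX hXW hXK h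
  have h1 := cov_tau hK X hmW
  rw [htm] at h1
  simp only [Nat.cast_zero, sub_zero] at h1
  rw [← h1, ← hc m hm hmW, ← sum_dd hK hmW hsm]
  apply Finset.sum_le_sum
  intro π hπ
  rw [mem_cov] at hπ
  apply tau_le_dd hK (by omega) hX (hXm.trans hπ.1) hXK
  intro hE
  have := (hE.mono hπ.1).tau
  rw [htm, hsm] at this
  norm_num at this

lemma tau_le_t4 [CharP F 2] {K : Finset (Submodule F V)} (hK : Cap K) {X W : Submodule F V} (hW : fr W = 4)
    (hX : fr X = 1) (hXW : X ≤ W) (hXK : X ∉ K) (h : ¬ Ext K X W) :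
    (tau K X W : ℤ) ≤ Q ^ 2 + Q + 2 - sz K W := by
  have := tau_le_t hK hX hXW hXK h (c := Q + 1) (fun m hm hmW => by
    rw [card_cov1 hmW (by omega)]; push_cast; ring)
  linarith

lemma tau_le_t5 [CharP F 2] {K : Finset (Submodule F V)} (hK : Cap K) {X W : Submodule F V} (hW : fr W = 5)
    (hX : fr X = 1) (hXW : X ≤ W) (hXK : X ∉ K) (h : ¬ Ext K X W) :
    (tau K X W : ℤ) ≤ Q * (Q ^ 2 + Q + 1) + 2 - sz K W := by
  exact tau_le_t hK hX hXW hXK h (c := Q ^ 2 + Q + 1) (fun m hm hmW => by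
    rw [card_cov2 hmW (by omega)]; push_cast; ring)

/-- lines through a point `R` of a plane against points of a line -/
lemma line_pencil {π L R : Submodule F V} (hπ : fr π = 3) (hL : fr L = 2) (hLπ : L ≤ π) (hR : fr R = 1)
    (hRπ : R ≤ π) (hRL : ¬ R ≤ L) (p : Submodule F V → Prop) :
    ((pts L).filter fun X => p (R ⊔ X)).card = ((cov R π).filter p).card := by
  have hsup : ∀ X ∈ pts L, R ⊔ X ∈ cov R π := by
    intro X hX
    rw [mem_pts] at hX
    rw [mem_cov]
    refine ⟨le_sup_left, sup_le hRπ (hX.2.trans hLπ), ?_⟩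
    rw [fr_line hR hX.1 (by rintro rfl; exact hRL hX.2), hR]
  apply Finset.card_bij (fun X _ => R ⊔ X)
  · intro X hX
    rw [Finset.mem_filter] at hX ⊢
    exact ⟨hsup X hX.1, hX.2⟩
  · intro X hX Y hY h
    rw [Finset.mem_filter] at hX hY
    by_contra hn
    have hx := mem_pts.1 hX.1
    have hy := mem_pts.1 hY.1
    have h1 : X ⊔ Y = L := line_eq hx.1 hy.1 hn hL hx.2 hy.2
    have h2 : X ⊔ Y ≤ R ⊔ X := sup_le le_sup_right (h ▸ le_sup_right)
    rw [h1] at h2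
    have h3 : L = R ⊔ X := le_eq h2 (by rw [fr_line hR hx.1 (by rintro rfl; exact hRL hx.2), hL])
    exact hRL (h3 ▸ le_sup_left)
  · intro M hM
    rw [Finset.mem_filter, mem_cov] at hM
    have hML : fr (M ⊓ L) = 1 := by
      have h1 := Submodule.finrank_sup_add_finrank_inf_eq M L
      have h2 : M ⊔ L = π := by
        apply le_eq (sup_le hM.1.2.1 hLπ)
        have : L ⊔ R ≤ M ⊔ L := sup_le le_sup_right (hM.1.1.trans le_sup_left)
        have h3 := fr_mono this
        rw [fr_sup_pt hR hRL] at h3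
        omega
      rw [h2] at h1
      simp only [fr] at *
      omega
    have hRM : R ⊔ (M ⊓ L) = M := by
      apply line_eq hR hML _ (by omega) hM.1.1 inf_le_left
      intro h
      exact hRL (h ▸ inf_le_right)
    refine ⟨M ⊓ L, ?_, hRM⟩
    rw [Finset.mem_filter, mem_pts, hRM]
    exact ⟨⟨hML, inf_le_right⟩, hM.2⟩

lemma tan_iff_tl {K : Finset (Submodule F V)} {P X W : Submodule F V} (hP : fr P = 1) (hPW : P ≤ W)
    (hX : fr X = 1) (hXW : X ≤ W) (h : P ≠ X) : Tan K P X ↔ P ⊔ X ∈ tl K P W := by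
  simp only [tl, Finset.mem_filter, mem_cov]
  constructor
  · intro ht
    exact ⟨⟨le_sup_left, sup_le hPW hXW, by rw [fr_line hP hX h, hP]⟩, ht⟩
  · intro ht
    exact ht.2

/-- points of a line which are tangent to `R` -/
lemma card_tan_line {K : Finset (Submodule F V)} (hK : Cap K) {π L R : Submodule F V} (hπ : fr π = 3)
    (hL : fr L = 2) (hLπ : L ≤ π) (hR : R ∈ sec K π) (hRL : ¬ R ≤ L) :
    (((pts L).filter fun X => Tan K R X).card : ℤ) = dd K π := by
  rw [← dd_eq_tl hK hπ hR]
  have := line_pencil hπ hL hLπ (hK.1 R (mem_sec.1 hR).1) (mem_sec.1 hR).2 hRL (fun L => ∀ S ∈ K, S ≤ L → S = R)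
  rw [tl]
  norm_cast
  convert this using 1
  all_goals (congr 1; try (ext; simp only [Finset.mem_filter, Tan]))

/-- tangent points at `P` -/
lemma card_tan_pts {K : Finset (Submodule F V)} (hK : Cap K) {W P : Submodule F V} (hP : P ∈ sec K W) :
    ((pts W).filter fun X => X ∉ K ∧ Tan K P X).card = qq * (tl K P W).card := by
  obtain ⟨hPK, hPW⟩ := mem_sec.1 hP
  have hP1 := hK.1 P hPK
  have hc := cover ((pts W).filter fun X => X ∉ K ∧ Tan K P X)
    (fun X hX => (mem_pts.1 (Finset.mem_filter.1 hX).1).1) hPW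
  have e : ((pts W).filter fun X => X ∉ K ∧ Tan K P X) =
      ((pts W).filter fun X => X ∉ K ∧ Tan K P X).filter (fun X => X ≤ W ∧ ¬ X ≤ P) := by
    ext X
    simp only [Finset.mem_filter, mem_pts]
    constructor
    · rintro ⟨⟨a, b⟩, c, d⟩
      exact ⟨⟨⟨a, b⟩, c, d⟩, b, fun h => c ((pt_eq a hP1 h) ▸ hPK)⟩
    · tauto
  rw [e, ← hc]
  have : ∀ L ∈ cov P W, (((pts W).filter fun X => X ∉ K ∧ Tan K P X).filter fun X => X ≤ L ∧ ¬ X ≤ P).card =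
      if (∀ R ∈ K, R ≤ L → R = P) then qq else 0 := by
    intro L hL
    rw [mem_cov] at hL
    have hL2 : fr L = 2 := by omega
    have hPL : ∀ X, fr X = 1 → X ≤ L → ¬ X ≤ P → P ⊔ X = L := fun X h1 h2 h3 =>
      line_eq hP1 h1 (by rintro rfl; exact h3 le_rfl) hL2 hL.1 h2
    split_ifs with h
    · have : ((((pts W).filter fun X => X ∉ K ∧ Tan K P X).filter fun X => X ≤ L ∧ ¬ X ≤ P)) = (pts L).erase P := by
        ext X
        simp only [Finset.mem_filter, Finset.mem_erase, mem_pts]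
        constructor
        · rintro ⟨⟨⟨a, b⟩, c, d⟩, e, f⟩
          exact ⟨by rintro rfl; exact f le_rfl, a, e⟩
        · rintro ⟨a, b, c⟩
          have hn : ¬ X ≤ P := fun h => a (pt_eq b hP1 h)
          refine ⟨⟨⟨b, c.trans hL.2.1⟩, fun hXK => a (h X hXK c), ?_⟩, c, hn⟩
          intro R hR hRl
          rw [hPL X b c hn] at hRl
          exact h R hR hRl
      rw [this, Finset.card_erase_of_mem (mem_pts.2 ⟨hP1, hL.1⟩), card_pts2 hL2]
      simp
    · rw [Finset.card_eq_zero, Finset.filter_eq_empty_iff]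
      intro X hX hX'
      simp only [Finset.mem_filter, mem_pts] at hX
      apply h
      intro R hR hRL
      apply hX.2.2 R hR
      rw [hPL X hX.1.1 hX'.1 hX'.2]; exact hRL
  rw [Finset.sum_congr rfl this, Finset.sum_ite]
  simp only [Finset.sum_const, smul_eq_mul, mul_zero, add_zero, tl]
  ring

/-- points tangent to both -/
lemma card_tan_both {K : Finset (Submodule F V)} (hK : Cap K) {π P R : Submodule F V} (hπ : fr π = 3)
    (hP : P ∈ sec K π) (hR : R ∈ sec K π) (hPR : P ≠ R) :
    (((pts π).filter fun X => Tan K P X ∧ Tan K R X).card : ℤ) = dd K π ^ 2 := by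
  obtain ⟨hPK, hPW⟩ := mem_sec.1 hP
  obtain ⟨hRK, hRW⟩ := mem_sec.1 hR
  have hP1 := hK.1 P hPK
  have hR1 := hK.1 R hRK
  have hc := cover ((pts π).filter fun X => Tan K P X ∧ Tan K R X)
    (fun X hX => (mem_pts.1 (Finset.mem_filter.1 hX).1).1) hPW
  have e : ((pts π).filter fun X => Tan K P X ∧ Tan K R X) =
      ((pts π).filter fun X => Tan K P X ∧ Tan K R X).filter (fun X => X ≤ π ∧ ¬ X ≤ P) := by
    ext X
    simp only [Finset.mem_filter, mem_pts]
    constructor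
    · rintro ⟨⟨a, b⟩, c, d⟩
      refine ⟨⟨⟨a, b⟩, c, d⟩, b, fun h => ?_⟩
      have := pt_eq a hP1 h
      subst this
      exact hPR (d X hPK le_sup_right)
    · tauto
  rw [e, ← hc]
  have : ∀ L ∈ cov P π, (((((pts π).filter fun X => Tan K P X ∧ Tan K R X).filter
      fun X => X ≤ L ∧ ¬ X ≤ P).card : ℕ) : ℤ) =
      if (∀ S ∈ K, S ≤ L → S = P) then dd K π else 0 := by
    intro L hL
    rw [mem_cov] at hL
    have hL2 : fr L = 2 := by omega
    have hPL : ∀ X, fr X = 1 → X ≤ L → ¬ X ≤ P → P ⊔ X = L := fun X h1 h2 h3 =>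
      line_eq hP1 h1 (by rintro rfl; exact h3 le_rfl) hL2 hL.1 h2
    split_ifs with h
    · have hRL : ¬ R ≤ L := fun h' => hPR (h R hRK h').symm
      rw [← card_tan_line hK hπ hL2 hL.2.1 hR hRL]
      congr 2
      ext X
      simp only [Finset.mem_filter, mem_pts]
      constructor
      · rintro ⟨⟨⟨a, b⟩, c, d⟩, e, f⟩
        exact ⟨⟨a, e⟩, d⟩
      · rintro ⟨⟨a, b⟩, c⟩
        have hn : ¬ X ≤ P := fun h' => by
          have := pt_eq a hP1 h'
          subst this
          exact hPR (c X hPK le_sup_right)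
        refine ⟨⟨⟨a, b.trans hL.2.1⟩, ?_, c⟩, b, hn⟩
        intro S hS hSl
        rw [hPL X a b hn] at hSl
        exact h S hS hSl
    · norm_cast
      rw [Finset.card_eq_zero, Finset.filter_eq_empty_iff]
      intro X hX hX'
      simp only [Finset.mem_filter, mem_pts] at hX
      apply h
      intro S hS hSL
      apply hX.2.1 S hS
      rw [hPL X hX.1.1 hX'.1 hX'.2]; exact hSL
  push_cast
  rw [Finset.sum_congr rfl this, Finset.sum_ite]
  simp only [Finset.sum_const, nsmul_eq_mul, Finset.sum_const_zero, add_zero]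
  have h2 := dd_eq_tl hK hπ hP
  simp only [tl] at h2
  rw [h2]; ring

end Cnt
end CapPf

namespace CapPf
open Classical
open Finset (univ filter card)
section Pl
variable {F : Type*} [Field F] [Fintype F] {V : Type*} [AddCommGroup V] [Module F V] [Finite V]
local notation "qq" => Fintype.card F
local notation "Q" => (Fintype.card F : ℤ)

lemma Q_pos : (2:ℤ) ≤ Q := by exact_mod_cast q_pos (F := F)

/-- good planes: every tangent carries an ext point -/
lemma good_tangent [CharP F 2] {K : Finset (Submodule F V)} (hK : Cap K) {π P L : Submodule F V} (hπ : fr π = 3)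
    (hP : P ∈ sec K π) (hL : L ∈ tl K P π) (hg : dd K π * (dd K π - 1) < Q) :
    ∃ X, fr X = 1 ∧ X ≤ L ∧ X ∉ K ∧ Ext K X π := by
  by_contra hno
  push Not at hno
  obtain ⟨hPK, hPW⟩ := mem_sec.1 hP
  have hP1 := hK.1 P hPK
  simp only [tl, Finset.mem_filter, mem_cov] at hL
  obtain ⟨⟨hPL, hLπ, hLf⟩, hLt⟩ := hL
  have hL2 : fr L = 2 := by omega
  have hPpL : P ∈ pts L := mem_pts.2 ⟨hP1, hPL⟩
  have key : ∑ X ∈ (pts L).erase P, (tau K X π : ℤ) =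
      ∑ R ∈ sec K π, ((((pts L).erase P).filter fun X => Tan K R X).card : ℤ) := by
    simp only [tau, Finset.card_filter]
    push_cast
    exact Finset.sum_comm
  have hub : ∑ X ∈ (pts L).erase P, (tau K X π : ℤ) ≤ Q * dd K π := by
    have h1 : ∀ X ∈ (pts L).erase P, (tau K X π : ℤ) ≤ dd K π := by
      intro X hX
      simp only [Finset.mem_erase, mem_pts] at hX
      have hXK : X ∉ K := fun h => hX.1 (hLt X h hX.2.2)
      exact tau_le_dd hK hπ hX.2.1 (hX.2.2.trans hLπ) hXK (hno X hX.2.1 hX.2.2 hXK)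
    have h2 := Finset.sum_le_card_nsmul _ _ _ h1
    rw [Finset.card_erase_of_mem hPpL, card_pts2 hL2, nsmul_eq_mul] at h2
    simpa using h2
  have hlb : ∑ R ∈ sec K π, ((((pts L).erase P).filter fun X => Tan K R X).card : ℤ) =
      Q + ((sec K π).card - 1 : ℤ) * dd K π := by
    rw [← Finset.add_sum_erase _ _ hP]
    congr 1
    · rw [Finset.filter_true_of_mem, Finset.card_erase_of_mem hPpL, card_pts2 hL2]
      · simp
      · intro X hX R hR hRl
        simp only [Finset.mem_erase, mem_pts] at hX
        exact hLt R hR (hRl.trans (sup_le hPL hX.2.2))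
    · have : ∀ R ∈ (sec K π).erase P, ((((pts L).erase P).filter fun X => Tan K R X).card : ℤ) = dd K π := by
        intro R hR
        have hRs := Finset.mem_of_mem_erase hR
        have hRP := Finset.ne_of_mem_erase hR
        have hRL : ¬ R ≤ L := fun h => hRP (hLt R (mem_sec.1 hRs).1 h)
        rw [← card_tan_line hK hπ hL2 hLπ hRs hRL]
        congr 2
        ext X
        simp only [Finset.mem_filter, Finset.mem_erase]
        constructor
        · tauto
        · rintro ⟨a, b⟩
          refine ⟨⟨?_, a⟩, b⟩
          rintro rfl
          exact hRP (b X hPK le_sup_right).symm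
      rw [Finset.sum_congr rfl this, Finset.sum_const, nsmul_eq_mul, Finset.card_erase_of_mem hP]
      rw [Nat.cast_sub (Finset.card_pos.2 ⟨P, hP⟩)]
      simp
  rw [key, hlb] at hub
  have hd : dd K π = Q + 2 - ((sec K π).card : ℤ) := rfl
  generalize ((sec K π).card : ℤ) = s at *
  have : s = Q + 2 - dd K π := by linarith
  subst this
  nlinarith

lemma Cap.sub {K K' : Finset (Submodule F V)} (hK : Cap K) (h : K' ⊆ K) : Cap K' :=
  ⟨fun P hP => hK.1 P (h hP), fun m hm =>
    (Finset.card_le_card fun P hP => mem_sec.2 ⟨h (mem_sec.1 hP).1, (mem_sec.1 hP).2⟩).trans (hK.2 m hm)⟩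

lemma Cap.ins {K : Finset (Submodule F V)} (hK : Cap K) {X : Submodule F V} (hX : fr X = 1) (hXK : X ∉ K)
    (h : ∀ P ∈ K, Tan K P X) : Cap (insert X K) := by
  constructor
  · intro P hP
    rcases Finset.mem_insert.1 hP with rfl | hP
    · exact hX
    · exact hK.1 P hP
  · intro m hm
    by_cases hXm : X ≤ m
    · have : sec (insert X K) m ⊆ insert X (sec K m) := by
        intro P hP
        simp only [mem_sec, Finset.mem_insert] at hP ⊢
        tauto
      refine (Finset.card_le_card this).trans ((Finset.card_insert_le _ _).trans ?_)
      have : (sec K m).card ≤ 1 := by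
        rw [Finset.card_le_one]
        intro P hP R hR
        rw [mem_sec] at hP hR
        have hPX : P ≠ X := by rintro rfl; exact hXK hP.1
        have hl := line_eq (hK.1 P hP.1) hX hPX hm hP.2 hXm
        exact (h P hP.1 R hR.1 (hl ▸ hR.2)).symm
      omega
    · have : sec (insert X K) m ⊆ sec K m := by
        intro P hP
        simp only [mem_sec, Finset.mem_insert] at hP ⊢
        rcases hP with ⟨rfl | h, h'⟩
        · exact absurd h' hXm
        · exact ⟨h, h'⟩
      exact (Finset.card_le_card this).trans (hK.2 m hm)

lemma sec_sec (K : Finset (Submodule F V)) (W : Submodule F V) : sec (sec K W) W = sec K W := by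
  ext; simp only [mem_sec]; tauto

/-- general: cap `C` in a plane containing `K_π` plus other points; if `Y` is ext for `K` and not
tangent somewhere then few points. -/
lemma ext_bound [CharP F 2] {K C : Finset (Submodule F V)} (hC : Cap C) {π Y : Submodule F V} (hπ : fr π = 3)
    (hCπ : ∀ P ∈ C, P ≤ π) (hY : fr Y = 1) (hYπ : Y ≤ π) (hYC : Y ∉ C) (hne : ∃ P ∈ C, ¬ Tan C P Y)
    (B : Finset (Submodule F V)) (hBC : B ⊆ C) (hB : ∀ P ∈ B, Tan C P Y) :
    (B.card : ℤ) + C.card ≤ Q + 2 := by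
  have hs : sec C π = C := Finset.filter_true_of_mem hCπ
  have h1 := D1 hC hπ hY hYπ hYC (by rw [hs]; exact hne)
  rw [hs] at h1
  have h2 : B.card ≤ tau C Y π := by
    rw [tau, hs]
    exact Finset.card_le_card fun P hP => Finset.mem_filter.2 ⟨hBC hP, hB P hP⟩
  have h3 : (tau C Y π : ℤ) + C.card ≤ Q + 2 := by exact_mod_cast h1
  have : (B.card : ℤ) ≤ tau C Y π := by exact_mod_cast h2
  linarith

lemma Ext.sec_tan {K : Finset (Submodule F V)} {X π : Submodule F V} (h : Ext K X π) :
    ∀ P ∈ sec K π, Tan (sec K π) P X := fun P hP R hR hRl => h P hP R (mem_sec.1 hR).1 hRl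

/-- two ext points on a line with a point of `K` -/
lemma two_ext [CharP F 2] {K : Finset (Submodule F V)} (hK : Cap K) {π P X Y m : Submodule F V} (hπ : fr π = 3)
    (hm : fr m = 2) (hP : P ∈ sec K π) (hX : fr X = 1) (hY : fr Y = 1) (hXπ : X ≤ π) (hYπ : Y ≤ π)
    (hXK : X ∉ K) (hYK : Y ∉ K) (hXE : Ext K X π) (hYE : Ext K Y π) (hXY : X ≠ Y)
    (h1 : P ≤ m) (h2 : X ≤ m) (h3 : Y ≤ m) : sz K π ≤ dd K π := by
  obtain ⟨hPK, hPW⟩ := mem_sec.1 hP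
  have hP1 := hK.1 P hPK
  have hXs : X ∉ sec K π := fun h => hXK (mem_sec.1 h).1
  have hYs : Y ∉ sec K π := fun h => hYK (mem_sec.1 h).1
  have hC : Cap (insert X (sec K π)) := (hK.sub (Finset.filter_subset _ _)).ins hX hXs hXE.sec_tan
  have hPX : P ≠ X := by rintro rfl; exact hXK hPK
  have hPY : P ≠ Y := by rintro rfl; exact hYK hPK
  have hmPY := line_eq hP1 hY hPY hm h1 h3
  have hmPX := line_eq hP1 hX hPX hm h1 h2
  have := ext_bound (K := K) hC hπ (Y := Y) (by
      intro R hR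
      rcases Finset.mem_insert.1 hR with rfl | hR
      · exact hXπ
      · exact (mem_sec.1 hR).2) hY hYπ (by
      intro h
      rcases Finset.mem_insert.1 h with h | h
      · exact hXY h.symm
      · exact hYs h)
    ⟨P, Finset.mem_insert_of_mem hP, fun h => hPX (h X (Finset.mem_insert_self _ _) (hmPY ▸ h2)).symm⟩
    ((sec K π).erase P) (fun R hR => Finset.mem_insert_of_mem (Finset.mem_of_mem_erase hR)) (by
      intro R hR S hS hSl
      have hRs := Finset.mem_of_mem_erase hR
      have hRY : R ≠ Y := by rintro rfl; exact hYs hRs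
      have hR1 := hK.1 R (mem_sec.1 hRs).1
      rcases Finset.mem_insert.1 hS with rfl | hS
      · exfalso
        have hl := fr_line hR1 hY hRY
        have e1 := line_eq hX hY hXY hl hSl le_sup_right
        have e2 := line_eq hX hY hXY hm h2 h3
        have : R ≤ P ⊔ Y := by rw [hmPY, ← e2, e1]; exact le_sup_left
        exact Finset.ne_of_mem_erase hR (hYE P hP R (mem_sec.1 hRs).1 this)
      · exact hYE R hRs S (mem_sec.1 hS).1 hSl)
  rw [Finset.card_insert_of_notMem hXs, Finset.card_erase_of_mem hP,
    Nat.cast_sub (Finset.card_pos.2 ⟨P, hP⟩)] at this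
  push_cast at this
  rw [dd, sz]
  linarith

/-- three ext points on an external line -/
lemma three_ext [CharP F 2] {K : Finset (Submodule F V)} (hK : Cap K) {π X Y Z m : Submodule F V} (hπ : fr π = 3)
    (hm : fr m = 2) (hmK : ∀ P ∈ sec K π, ¬ P ≤ m) (hX : fr X = 1) (hY : fr Y = 1) (hZ : fr Z = 1)
    (hmπ : m ≤ π)
    (hXK : X ∉ K) (hYK : Y ∉ K) (hZK : Z ∉ K) (hXE : Ext K X π) (hYE : Ext K Y π) (hZE : Ext K Z π)
    (hXY : X ≠ Y) (hXZ : X ≠ Z) (hYZ : Y ≠ Z)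
    (h1 : X ≤ m) (h2 : Y ≤ m) (h3 : Z ≤ m) : sz K π ≤ dd K π := by
  have hXs : X ∉ sec K π := fun h => hXK (mem_sec.1 h).1
  have hYs : Y ∉ sec K π := fun h => hYK (mem_sec.1 h).1
  have hZs : Z ∉ sec K π := fun h => hZK (mem_sec.1 h).1
  have hC : Cap (insert X (sec K π)) := (hK.sub (Finset.filter_subset _ _)).ins hX hXs hXE.sec_tan
  have aux : ∀ A B : Submodule F V, fr A = 1 → fr B = 1 → A ≤ m → B ≤ m → A ≠ B → ∀ R ∈ sec K π,
      A ≤ R ⊔ B → False := by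
    intro A B hA hB hAm hBm hAB R hR hl
    have hR1 := hK.1 R (mem_sec.1 hR).1
    have hRB : R ≠ B := by rintro rfl; exact hmK R hR hBm
    have e1 := line_eq hA hB hAB (fr_line hR1 hB hRB) hl le_sup_right
    have e2 := line_eq hA hB hAB hm hAm hBm
    exact hmK R hR (by rw [← e2, e1]; exact le_sup_left)
  have hYi : Y ∉ insert X (sec K π) := by
    intro h
    rcases Finset.mem_insert.1 h with h | h
    · exact hXY h.symm
    · exact hYs h
  have hXYm := line_eq hX hY hXY hm h1 h2
  have hC2 : Cap (insert Y (insert X (sec K π))) := by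
    apply hC.ins hY hYi
    intro P hP R hR hRl
    rcases Finset.mem_insert.1 hP with hP2 | hP2 <;> rcases Finset.mem_insert.1 hR with hR2 | hR2
    · rw [hP2, hR2]
    · rw [hP2, hXYm] at hRl
      exact absurd hRl (hmK R hR2)
    · rw [hR2] at hRl
      exact (aux X Y hX hY h1 h2 hXY P hP2 hRl).elim
    · exact hYE P hP2 R (mem_sec.1 hR2).1 hRl
  have := ext_bound (K := K) hC2 hπ (Y := Z) (by
      intro R hR
      rcases Finset.mem_insert.1 hR with rfl | hR
      · exact h2.trans hmπ
      rcases Finset.mem_insert.1 hR with rfl | hR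
      · exact h1.trans hmπ
      · exact (mem_sec.1 hR).2) hZ (h3.trans hmπ) (by
      intro h
      rcases Finset.mem_insert.1 h with h | h
      · exact hYZ h.symm
      rcases Finset.mem_insert.1 h with h | h
      · exact hXZ h.symm
      · exact hZs h)
    ⟨X, Finset.mem_insert_of_mem (Finset.mem_insert_self _ _), fun h =>
      hXY (h Y (Finset.mem_insert_self _ _) (by rw [line_eq hX hZ hXZ hm h1 h3]; exact h2)).symm⟩
    (sec K π) (fun R hR => Finset.mem_insert_of_mem (Finset.mem_insert_of_mem hR)) (by
      intro R hR S hS hSl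
      rcases Finset.mem_insert.1 hS with rfl | hS
      · exact (aux S Z hY hZ h2 h3 hYZ R hR hSl).elim
      rcases Finset.mem_insert.1 hS with rfl | hS
      · exact (aux S Z hX hZ h1 h3 hXZ R hR hSl).elim
      · exact hZE R hR S (mem_sec.1 hS).1 hSl)
  rw [Finset.card_insert_of_notMem hYi, Finset.card_insert_of_notMem hXs] at this
  push_cast at this
  rw [dd, sz]
  linarith

noncomputable def ex (K : Finset (Submodule F V)) (W : Submodule F V) : Finset (Submodule F V) :=
  (pts W).filter fun X => X ∉ K ∧ Ext K X W

lemma mem_ex {K : Finset (Submodule F V)} {X W : Submodule F V} :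
    X ∈ ex K W ↔ fr X = 1 ∧ X ≤ W ∧ X ∉ K ∧ Ext K X W := by
  simp only [ex, Finset.mem_filter, mem_pts]; tauto

lemma ext_mem_tl {K : Finset (Submodule F V)} (hK : Cap K) {P X W : Submodule F V} (hP : P ∈ sec K W)
    (hX : X ∈ ex K W) : P ⊔ X ∈ tl K P W := by
  obtain ⟨a, b, c, d⟩ := mem_ex.1 hX
  exact (tan_iff_tl (hK.1 P (mem_sec.1 hP).1) (mem_sec.1 hP).2 a b
    (by rintro rfl; exact c (mem_sec.1 hP).1)).1 (d P hP)

lemma card_ex_le [CharP F 2] {K : Finset (Submodule F V)} (hK : Cap K) {π : Submodule F V} (hπ : fr π = 3)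
    (hs : dd K π < sz K π) : ((ex K π).card : ℤ) ≤ dd K π := by
  have hd := dd_nonneg hK hπ
  obtain ⟨P, hP⟩ : (sec K π).Nonempty := by
    rw [← Finset.card_pos]
    have : (0:ℤ) < (sec K π).card := lt_of_le_of_lt hd hs
    exact_mod_cast this
  rw [← dd_eq_tl hK hπ hP]
  norm_cast
  apply Finset.card_le_card_of_injOn (fun X => P ⊔ X) (fun X hX => ext_mem_tl hK hP hX)
  intro X hX Y hY hXY
  by_contra hn
  simp only at hXY
  obtain ⟨a, b, c, d⟩ := mem_ex.1 hX
  obtain ⟨a', b', c', d'⟩ := mem_ex.1 hY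
  have hPX : P ≠ X := by rintro rfl; exact c (mem_sec.1 hP).1
  have := two_ext hK hπ (fr_line (hK.1 P (mem_sec.1 hP).1) a hPX) hP a a' b b' c c' d d' hn
    le_sup_left le_sup_right (hXY ▸ le_sup_right)
  linarith

lemma card_ex_ge [CharP F 2] {K : Finset (Submodule F V)} (hK : Cap K) {π : Submodule F V} (hπ : fr π = 3)
    (hs : 0 < sz K π) (hg : dd K π * (dd K π - 1) < Q) : dd K π ≤ ((ex K π).card : ℤ) := by
  obtain ⟨P, hP⟩ : (sec K π).Nonempty := by
    rw [← Finset.card_pos]; rw [sz] at hs; exact_mod_cast hs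
  rw [← dd_eq_tl hK hπ hP]
  norm_cast
  apply Finset.card_le_card_of_surjOn (fun X => P ⊔ X)
  intro L hL
  obtain ⟨X, h1, h2, h3, h4⟩ := good_tangent hK hπ hP hL hg
  simp only [tl, Finset.coe_filter, Set.mem_setOf_eq, mem_cov] at hL
  refine ⟨X, mem_ex.2 ⟨h1, h2.trans hL.1.2.1, h3, h4⟩, ?_⟩
  have hP1 := hK.1 P (mem_sec.1 hP).1
  exact line_eq hP1 h1 (by rintro rfl; exact h3 (mem_sec.1 hP).1) (by omega) hL.1.1 h2

/-- completion -/
lemma exists_complete {K : Finset (Submodule F V)} (hK : Cap K) {W : Submodule F V} (hKW : ∀ P ∈ K, P ≤ W) :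
    ∃ C, K ⊆ C ∧ Cap C ∧ (∀ P ∈ C, P ≤ W) ∧ ∀ X, fr X = 1 → X ≤ W → X ∉ C → ¬ Ext C X W := by
  obtain ⟨C, hC, hmax⟩ := Finset.exists_max_image
    ((univ : Finset (Finset (Submodule F V))).filter fun C => K ⊆ C ∧ Cap C ∧ ∀ P ∈ C, P ≤ W)
    Finset.card ⟨K, by simp [hK]; exact hKW⟩
  simp only [Finset.mem_filter, Finset.mem_univ, true_and] at hC hmax
  refine ⟨C, hC.1, hC.2.1, hC.2.2, fun X h1 h2 h3 h4 => ?_⟩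
  have hs : sec C W = C := Finset.filter_true_of_mem hC.2.2
  rw [Ext, hs] at h4
  have := hmax (insert X C) ⟨hC.1.trans (Finset.subset_insert _ _), hC.2.1.ins h1 h3 h4, by
    intro P hP
    rcases Finset.mem_insert.1 hP with rfl | hP
    · exact h2
    · exact hC.2.2 P hP⟩
  rw [Finset.card_insert_of_notMem h3] at this
  omega

end Pl
end CapPf

namespace CapPf
open Classical
open Finset (univ filter card)
section Sol
variable {F : Type*} [Field F] [Fintype F] {V : Type*} [AddCommGroup V] [Module F V] [Finite V]
local notation "qq" => Fintype.card F
local notation "Q" => (Fintype.card F : ℤ)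

lemma sz_secant {K : Finset (Submodule F V)} (hK : Cap K) {P R : Submodule F V} (hP : P ∈ K) (hR : R ∈ K)
    (h : P ≠ R) : fr (P ⊔ R) = 2 ∧ sz K (P ⊔ R) = 2 := by
  have hm := fr_line (hK.1 P hP) (hK.1 R hR) h
  refine ⟨hm, ?_⟩
  have hsec : sec K (P ⊔ R) = {P, R} := by
    ext S
    simp only [mem_sec, Finset.mem_insert, Finset.mem_singleton]
    constructor
    · rintro ⟨a, b⟩
      exact cap_three hK hm hP hR a le_sup_left le_sup_right b h
    · rintro (rfl | rfl)
      · exact ⟨hP, le_sup_left⟩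
      · exact ⟨hR, le_sup_right⟩
  rw [sz, hsec, Finset.card_pair h]; rfl

/-- if no tangent lines at `P` in `A` then any line through `P` in `A` is a secant -/
lemma qvist_complete [CharP F 2] {K : Finset (Submodule F V)} (hK : Cap K) {A : Submodule F V} (hA : fr A = 4)
    (hq : 4 ≤ qq) (hcomp : ∀ X, fr X = 1 → X ≤ A → X ∉ K → ¬ Ext K X A) : sz K A ≤ Q ^ 2 + 1 := by
  by_contra hlt
  push Not at hlt
  have hQ : (4:ℤ) ≤ Q := by exact_mod_cast hq
  obtain ⟨P, hP⟩ : (sec K A).Nonempty := by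
    rw [← Finset.card_pos]; rw [sz] at hlt
    have : (0:ℤ) < (sec K A).card := by nlinarith
    exact_mod_cast this
  have hPK := (mem_sec.1 hP).1
  have hPA := (mem_sec.1 hP).2
  have htlA : ∀ P ∈ sec K A, ((tl K P A).card : ℤ) = Q ^ 2 + Q + 2 - sz K A := by
    intro P hP
    have h1 := card_tl hK (mem_sec.1 hP).1 (mem_sec.1 hP).2
    rw [card_cov2 (mem_sec.1 hP).2 (by rw [hA, hK.1 P (mem_sec.1 hP).1])] at h1
    have h2 : ((tl K P A).card : ℤ) + (sec K A).card = Q ^ 2 + Q + 1 + 1 := by exact_mod_cast h1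
    rw [sz]; linarith
  by_cases ht : tl K P A = ∅
  · -- no tangents at all
    have h0 := htlA P hP
    rw [ht] at h0
    simp at h0
    have hnt : ∀ R ∈ sec K A, tl K R A = ∅ := by
      intro R hR
      rw [← Finset.card_eq_zero]
      have := htlA R hR
      have h3 : ((tl K R A).card : ℤ) = 0 := by linarith
      exact_mod_cast h3
    have hline : ∀ L, fr L = 2 → L ≤ A → sz K L = 0 ∨ sz K L = 2 := by
      intro L hL hLA
      rcases (sec K L).eq_empty_or_nonempty with h | ⟨R, hR⟩
      · left; simp [sz, h]
      · right
        have hRA := sec_mono K hLA hR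
        have h1 : L ∉ tl K R A := by rw [hnt R hRA]; simp
        simp only [tl, Finset.mem_filter, mem_cov, not_and] at h1
        have h2 := h1 ⟨(mem_sec.1 hR).2, hLA, by rw [hL, hK.1 R (mem_sec.1 hR).1]⟩
        push Not at h2
        obtain ⟨S, hS, hSL, hSR⟩ := h2
        have h3 := sz_secant hK (mem_sec.1 hR).1 hS (Ne.symm hSR)
        rw [← h3.2, line_eq (hK.1 R (mem_sec.1 hR).1) (hK.1 S hS) (Ne.symm hSR) hL (mem_sec.1 hR).2 hSL]
    have hplane : ∀ π, fr π = 3 → π ≤ A → sz K π = 0 ∨ sz K π = Q + 2 := by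
      intro π hπ hπA
      rcases (sec K π).eq_empty_or_nonempty with h | ⟨R, hR⟩
      · left; simp [sz, h]
      · right
        have h1 : tl K R π = ∅ := by
          rw [Finset.eq_empty_iff_forall_notMem]
          intro L hL
          have h1 : L ∉ tl K R A := by rw [hnt R (sec_mono K hπA hR)]; simp
          apply h1
          simp only [tl, Finset.mem_filter, mem_cov] at hL ⊢
          exact ⟨⟨hL.1.1, hL.1.2.1.trans hπA, hL.1.2.2⟩, hL.2⟩
        have h2 := dd_eq_tl hK hπ hR
        rw [h1, dd] at h2
        simp at h2
        linarith
    -- external line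
    obtain ⟨X, hX, hXK⟩ : ∃ X ∈ pts A, X ∉ sec K A := by
      by_contra hc
      push Not at hc
      have h1 := Finset.card_le_card (fun X hX => hc X hX : pts A ⊆ sec K A)
      rw [card_pts4 hA] at h1
      have h2 : Q ^ 3 + Q ^ 2 + Q + 1 ≤ sz K A := by rw [sz]; exact_mod_cast h1
      nlinarith
    have hX' := mem_pts.1 hX
    have hXK' : sz K X = 0 := by
      rw [sz]; norm_cast; rw [Finset.card_eq_zero, Finset.eq_empty_iff_forall_notMem]
      intro R hR
      have : R = X := pt_eq (hK.1 R (mem_sec.1 hR).1) hX'.1 (mem_sec.1 hR).2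
      subst this
      exact hXK (mem_sec.2 ⟨(mem_sec.1 hR).1, hX'.2⟩)
    obtain ⟨L, hL, hL0⟩ : ∃ L ∈ cov X A, sz K L = 0 := by
      by_contra hc
      push Not at hc
      have h1 : ∀ L ∈ cov X A, sz K L = 2 := by
        intro L hL
        have h2 := mem_cov.1 hL
        exact (hline L (by omega) h2.2.1).resolve_left (hc L hL)
      have h2 := cov_sum' hK.1 hX'.2
      rw [Finset.sum_congr rfl h1, Finset.sum_const, nsmul_eq_mul, card_cov2 hX'.2 (by omega), hXK'] at h2
      push_cast at h2
      nlinarith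
    have hL' := mem_cov.1 hL
    have h2 := cov_sum' hK.1 hL'.2.1
    rw [hL0] at h2
    have h3 : (Q + 2) ∣ ∑ M ∈ cov L A, sz K M := by
      apply Finset.dvd_sum
      intro M hM
      have hM' := mem_cov.1 hM
      rcases hplane M (by omega) hM'.2.1 with h | h <;> rw [h]
      exact dvd_zero _
    rw [h2] at h3
    have h4 : (Q + 2) ∣ 4 := by
      have h5 : (Q + 2) ∣ (Q + 2) * (Q - 1) := dvd_mul_right _ _
      have := dvd_sub h3 h5
      have e : sz K A - 0 + (cov L A).card * 0 - (Q + 2) * (Q - 1) = 4 := by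
        rw [show sz K A = Q ^ 2 + Q + 2 by linarith]; ring
      rwa [e] at this
    have := Int.le_of_dvd (by norm_num) h4
    linarith
  · obtain ⟨L, hL⟩ := Finset.nonempty_iff_ne_empty.2 ht
    simp only [tl, Finset.mem_filter, mem_cov] at hL
    obtain ⟨⟨hPL, hLA, hLf⟩, hLt⟩ := hL
    have hP1 := hK.1 P hPK
    have hL2 : fr L = 2 := by omega
    have hszL : sz K L = 1 := by
      have : sec K L = {P} := by
        ext R; simp only [mem_sec, Finset.mem_singleton]
        constructor
        · rintro ⟨a, b⟩; exact hLt R a b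
        · rintro rfl; exact ⟨hPK, hPL⟩
      rw [sz, this]; simp
    have hsum := cov_sum' hK.1 hLA
    rw [hszL, card_cov1 hLA (by omega)] at hsum
    push_cast at hsum
    have hdge : ∀ π ∈ cov L A, 1 ≤ dd K π := by
      intro π hπ
      have hπ' := mem_cov.1 hπ
      rw [← dd_eq_tl hK (by omega) (mem_sec.2 ⟨hPK, hPL.trans hπ'.1⟩)]
      have : 0 < (tl K P π).card := Finset.card_pos.2 ⟨L, by
        simp only [tl, Finset.mem_filter, mem_cov]
        exact ⟨⟨hPL, hπ'.1, hLf⟩, hLt⟩⟩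
      exact_mod_cast this
    obtain ⟨π, hπ, hπ1⟩ : ∃ π ∈ cov L A, dd K π = 1 := by
      by_contra hc
      push Not at hc
      have h1 : ∀ π ∈ cov L A, sz K π ≤ Q := by
        intro π hπ
        have h2 := hdge π hπ
        have h3 := hc π hπ
        have h4 : 2 ≤ dd K π := by omega
        rw [dd] at h4; linarith
      have h2 := Finset.sum_le_card_nsmul _ _ _ h1
      rw [hsum, card_cov1 hLA (by omega), nsmul_eq_mul] at h2
      push_cast at h2
      nlinarith
    have hπ' := mem_cov.1 hπ
    have hπ3 : fr π = 3 := by omega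
    obtain ⟨X, h1, h2, h3, h4⟩ := good_tangent hK hπ3 (mem_sec.2 ⟨hPK, hPL.trans hπ'.1⟩) (L := L) (by
      simp only [tl, Finset.mem_filter, mem_cov]
      exact ⟨⟨hPL, hπ'.1, hLf⟩, hLt⟩) (by rw [hπ1]; linarith)
    have h5 := tau_le_t4 hK hA h1 (h2.trans hLA) h3 (hcomp X h1 (h2.trans hLA) h3)
    have h6 := tau_mono K X hπ'.2.1
    rw [h4.tau] at h6
    rw [dd] at hπ1
    linarith

theorem qvist [CharP F 2] {K : Finset (Submodule F V)} (hK : Cap K) {A : Submodule F V} (hA : fr A = 4)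
    (hq : 4 ≤ qq) : sz K A ≤ Q ^ 2 + 1 := by
  obtain ⟨C, h1, h2, h3, h4⟩ := exists_complete (hK.sub (Finset.filter_subset _ _) : Cap (sec K A))
    (fun P hP => (mem_sec.1 hP).2)
  refine le_trans ?_ (qvist_complete h2 hA hq h4)
  simp only [sz]
  norm_cast
  exact Finset.card_le_card fun P hP => mem_sec.2 ⟨h1 hP, (mem_sec.1 hP).2⟩

/-- a plane with many points through a line of a solid -/
lemma exists_rich {K : Finset (Submodule F V)} (hK : Cap K) {A m : Submodule F V} (hA : fr A = 4) (hm : fr m = 2)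
    (hmA : m ≤ A) (hbig : (Q + 1) * (Q + 2) < 2 * sz K A) : ∃ π ∈ cov m A, dd K π < sz K π := by
  by_contra hc
  push Not at hc
  have h1 : ∀ π ∈ cov m A, 2 * sz K π ≤ Q + 2 := by
    intro π hπ
    have := hc π hπ
    rw [dd] at this; linarith
  have h2 := Finset.sum_le_card_nsmul _ _ _ h1
  rw [← Finset.mul_sum, cov_sum' hK.1 hmA, card_cov1 hmA (by omega), nsmul_eq_mul] at h2
  push_cast at h2
  have := sz_nonneg K m
  have hQ := Q_pos (F := F)
  nlinarith

theorem card_ex_solid [CharP F 2] {K : Finset (Submodule F V)} (hK : Cap K) {A : Submodule F V} (hA : fr A = 4)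
    (hq : 4 ≤ qq) (hbig : (Q + 1) * (Q + 2) < 2 * sz K A) : ((ex K A).card : ℤ) + sz K A ≤ Q ^ 2 + 1 := by
  have hdis : Disjoint (ex K A) (sec K A) := by
    rw [Finset.disjoint_left]
    intro X hX hX'
    exact (mem_ex.1 hX).2.2.1 (mem_sec.1 hX').1
  have hmemA : ∀ P ∈ ex K A ∪ sec K A, fr P = 1 ∧ P ≤ A := by
    intro P hP
    rcases Finset.mem_union.1 hP with h | h
    · exact ⟨(mem_ex.1 h).1, (mem_ex.1 h).2.1⟩
    · exact ⟨hK.1 P (mem_sec.1 h).1, (mem_sec.1 h).2⟩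
  have hC : Cap (ex K A ∪ sec K A) := by
    refine ⟨fun P hP => (hmemA P hP).1, fun m hm => ?_⟩
    by_contra hc
    push Not at hc
    obtain ⟨a, b, c, ha, hb, hc, hab, hac, hbc⟩ := Finset.two_lt_card_iff.1 hc
    rw [mem_sec] at ha hb hc
    have hmA : m ≤ A := by
      rw [← line_eq (hmemA a ha.1).1 (hmemA b hb.1).1 hab hm ha.2 hb.2]
      exact sup_le (hmemA a ha.1).2 (hmemA b hb.1).2
    obtain ⟨π, hπ, hrich⟩ := exists_rich hK hA hm hmA hbig
    have hπ' := mem_cov.1 hπ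
    have hπ3 : fr π = 3 := by omega
    have c21 : ∀ P R X, P ∈ sec K A → R ∈ sec K A → X ∈ ex K A → P ≤ m → R ≤ m → X ≤ m → P ≠ R → False := by
      intro P R X hP hR hX h1 h2 h3 h4
      obtain ⟨x1, x2, x3, x4⟩ := mem_ex.1 hX
      have hPX : P ≠ X := by rintro rfl; exact x3 (mem_sec.1 hP).1
      have := line_eq (hK.1 P (mem_sec.1 hP).1) x1 hPX hm h1 h3
      exact h4 (x4 P hP R (mem_sec.1 hR).1 (this ▸ h2)).symm
    have c12 : ∀ P X Y, P ∈ sec K A → X ∈ ex K A → Y ∈ ex K A → P ≤ m → X ≤ m → Y ≤ m → X ≠ Y → False := by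
      intro P X Y hP hX hY h1 h2 h3 h4
      obtain ⟨x1, x2, x3, x4⟩ := mem_ex.1 hX
      obtain ⟨y1, y2, y3, y4⟩ := mem_ex.1 hY
      have := two_ext hK hπ3 hm (mem_sec.2 ⟨(mem_sec.1 hP).1, h1.trans hπ'.1⟩) x1 y1 (h2.trans hπ'.1)
        (h3.trans hπ'.1) x3 y3 (x4.mono hπ'.2.1) (y4.mono hπ'.2.1) h4 h1 h2 h3
      linarith
    rcases Finset.mem_union.1 ha.1 with a1 | a1 <;> rcases Finset.mem_union.1 hb.1 with b1 | b1 <;>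
      rcases Finset.mem_union.1 hc.1 with c1 | c1
    · by_cases hmK : ∃ P ∈ sec K π, P ≤ m
      · obtain ⟨P, hP, hPm⟩ := hmK
        exact c12 P a b (sec_mono K hπ'.2.1 hP) a1 b1 hPm ha.2 hb.2 hab
      · push Not at hmK
        obtain ⟨x1, x2, x3, x4⟩ := mem_ex.1 a1
        obtain ⟨y1, y2, y3, y4⟩ := mem_ex.1 b1
        obtain ⟨z1, z2, z3, z4⟩ := mem_ex.1 c1
        have := three_ext hK hπ3 hm hmK x1 y1 z1 hπ'.1 x3 y3 z3 (x4.mono hπ'.2.1) (y4.mono hπ'.2.1)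
          (z4.mono hπ'.2.1) hab hac hbc ha.2 hb.2 hc.2
        linarith
    · exact c12 c a b c1 a1 b1 hc.2 ha.2 hb.2 hab
    · exact c12 b a c b1 a1 c1 hb.2 ha.2 hc.2 hac
    · exact c21 b c a b1 c1 a1 hb.2 hc.2 ha.2 hbc
    · exact c12 a b c a1 b1 c1 ha.2 hb.2 hc.2 hbc
    · exact c21 a c b a1 c1 b1 ha.2 hc.2 hb.2 hac
    · exact c21 a b c a1 b1 c1 ha.2 hb.2 hc.2 hab
    · rcases cap_three hK hm (mem_sec.1 a1).1 (mem_sec.1 b1).1 (mem_sec.1 c1).1 ha.2 hb.2 hc.2 hab with h | h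
      · exact hac h.symm
      · exact hbc h.symm
  have h1 := qvist hC hA hq
  have h2 : sec (ex K A ∪ sec K A) A = ex K A ∪ sec K A :=
    Finset.filter_true_of_mem fun P hP => (hmemA P hP).2
  rw [sz, h2, Finset.card_union_of_disjoint hdis] at h1
  push_cast at h1
  exact h1

/-- planes of `A` through `X` -/
noncomputable def plX (X A : Submodule F V) : Finset (Submodule F V) :=
  univ.filter fun π => X ≤ π ∧ π ≤ A ∧ fr π = 3
lemma mem_plX {X A π : Submodule F V} : π ∈ plX X A ↔ X ≤ π ∧ π ≤ A ∧ fr π = 3 := by simp [plX]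

lemma card_plX {X A : Submodule F V} (hX : fr X = 1) (hXA : X ≤ A) (hA : fr A = 4) :
    (plX X A).card = qq ^ 2 + qq + 1 := by
  have h1 : ∑ L ∈ cov X A, (cov L A).card = ∑ π ∈ plX X A, (cov X π).card := by
    have e1 : ∀ L ∈ cov X A, (cov L A).card = ((plX X A).filter fun π => L ≤ π).card := by
      intro L hL
      rw [mem_cov] at hL
      congr 1
      ext π
      simp only [mem_cov, mem_plX, Finset.mem_filter]
      constructor
      · rintro ⟨a, b, c⟩; exact ⟨⟨hL.1.trans a, b, by omega⟩, a⟩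
      · rintro ⟨⟨a, b, c⟩, d⟩; exact ⟨d, b, by omega⟩
    have e2 : ∀ π ∈ plX X A, (cov X π).card = ((cov X A).filter fun L => L ≤ π).card := by
      intro π hπ
      rw [mem_plX] at hπ
      congr 1
      ext L
      simp only [mem_cov, Finset.mem_filter]
      constructor
      · rintro ⟨a, b, c⟩; exact ⟨⟨a, b.trans hπ.2.1, c⟩, b⟩
      · rintro ⟨⟨a, b, c⟩, d⟩; exact ⟨a, d, c⟩
    rw [Finset.sum_congr rfl e1, Finset.sum_congr rfl e2]
    simp only [Finset.card_filter]
    exact Finset.sum_comm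
  have e3 : ∀ L ∈ cov X A, (cov L A).card = qq + 1 := fun L hL => by
    rw [mem_cov] at hL; exact card_cov1 hL.2.1 (by omega)
  have e4 : ∀ π ∈ plX X A, (cov X π).card = qq + 1 := fun π hπ => by
    rw [mem_plX] at hπ; exact card_cov1 hπ.1 (by omega)
  rw [Finset.sum_congr rfl e3, Finset.sum_congr rfl e4, Finset.sum_const, Finset.sum_const, smul_eq_mul,
    smul_eq_mul, card_cov2 hXA (by omega)] at h1
  exact (Nat.eq_of_mul_eq_mul_right (by omega) h1).symm

lemma sum_plX1 {K : Finset (Submodule F V)} (hK : Cap K) {X A : Submodule F V} (hX : X ∈ ex K A) (hA : fr A = 4) :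
    ∑ π ∈ plX X A, sz K π = sz K A * (Q + 1) := by
  obtain ⟨x1, x2, x3, x4⟩ := mem_ex.1 hX
  have e : ∀ π ∈ plX X A, sz K π = (((sec K A).filter fun P => P ≤ π).card : ℤ) := by
    intro π hπ
    rw [mem_plX] at hπ
    rw [sz]; congr 2; ext P
    simp only [mem_sec, Finset.mem_filter]
    constructor
    · rintro ⟨a, b⟩; exact ⟨⟨a, b.trans hπ.2.1⟩, b⟩
    · tauto
  rw [Finset.sum_congr rfl e]
  simp only [Finset.card_filter]
  push_cast
  rw [Finset.sum_comm]
  have e2 : ∀ P ∈ sec K A, (∑ π ∈ plX X A, if P ≤ π then (1:ℤ) else 0) = Q + 1 := by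
    intro P hP
    have hP' := mem_sec.1 hP
    have hP1 := hK.1 P hP'.1
    have hXP : X ≠ P := by rintro rfl; exact x3 hP'.1
    have h1 := card_cov1 (sup_le x2 hP'.2) (by rw [hA, fr_line x1 hP1 hXP])
    have h2 : cov (X ⊔ P) A = (plX X A).filter fun π => P ≤ π := by
      ext π
      simp only [mem_cov, mem_plX, Finset.mem_filter, fr_line x1 hP1 hXP, sup_le_iff]
      tauto
    rw [h2, Finset.card_filter] at h1
    exact_mod_cast h1
  rw [Finset.sum_congr rfl e2, Finset.sum_const, nsmul_eq_mul, sz]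

lemma card_offDiag_int (s : Finset (Submodule F V)) : (s.offDiag.card : ℤ) = s.card * (s.card - 1) := by
  rw [Finset.offDiag_card, Nat.cast_sub (Nat.le_mul_self _)]; push_cast; ring

lemma sum_plX2 {K : Finset (Submodule F V)} (hK : Cap K) {X A : Submodule F V} (hX : X ∈ ex K A) (hA : fr A = 4) :
    ∑ π ∈ plX X A, sz K π * (sz K π - 1) = sz K A * (sz K A - 1) := by
  obtain ⟨x1, x2, x3, x4⟩ := mem_ex.1 hX
  have e : ∀ π ∈ plX X A, sz K π * (sz K π - 1) =
      ((((sec K A).offDiag).filter fun P => P.1 ≤ π ∧ P.2 ≤ π).card : ℤ) := by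
    intro π hπ
    rw [mem_plX] at hπ
    rw [sz, ← card_offDiag_int]; congr 2; ext P
    simp only [mem_sec, Finset.mem_filter, Finset.mem_offDiag]
    constructor
    · rintro ⟨⟨a, b⟩, ⟨c, d⟩, e⟩; exact ⟨⟨⟨a, b.trans hπ.2.1⟩, ⟨c, d.trans hπ.2.1⟩, e⟩, b, d⟩
    · tauto
  rw [Finset.sum_congr rfl e]
  simp only [Finset.card_filter]
  push_cast
  rw [Finset.sum_comm]
  have e2 : ∀ P ∈ (sec K A).offDiag, (∑ π ∈ plX X A, if P.1 ≤ π ∧ P.2 ≤ π then (1:ℤ) else 0) = 1 := by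
    rintro ⟨P, R⟩ hPR
    simp only [Finset.mem_offDiag] at hPR
    obtain ⟨hP, hR, hn⟩ := hPR
    have hP' := mem_sec.1 hP
    have hR' := mem_sec.1 hR
    have hP1 := hK.1 P hP'.1
    have hR1 := hK.1 R hR'.1
    have hXP : P ≠ X := by rintro rfl; exact x3 hP'.1
    have hl := fr_line hP1 x1 hXP
    have hRl : ¬ R ≤ P ⊔ X := fun h => hn (x4 P hP R hR'.1 h).symm
    have h3 := fr_sup_pt hR1 hRl
    have h2 : (plX X A).filter (fun π => P ≤ π ∧ R ≤ π) = {P ⊔ X ⊔ R} := by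
      ext π
      simp only [mem_plX, Finset.mem_filter, Finset.mem_singleton]
      constructor
      · rintro ⟨⟨a, b, c⟩, d, e⟩
        exact (sup_pt_eq hR1 hRl (sup_le d a) e (by rw [c, hl])).symm
      · rintro rfl
        exact ⟨⟨le_sup_right.trans le_sup_left, sup_le (sup_le hP'.2 x2) hR'.2, by rw [h3, hl]⟩,
          le_sup_left.trans le_sup_left, le_sup_right⟩
    have h4 : ((plX X A).filter (fun π => P ≤ π ∧ R ≤ π)).card = 1 := by rw [h2]; simp
    rw [Finset.card_filter] at h4
    exact_mod_cast h4
  rw [Finset.sum_congr rfl e2, Finset.sum_const, nsmul_eq_mul, card_offDiag_int, sz]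
  ring

lemma dd_ge_one {K : Finset (Submodule F V)} (hK : Cap K) {X π : Submodule F V} (hX : X ∈ ex K π) (hπ : fr π = 3) :
    1 ≤ dd K π := by
  rcases (sec K π).eq_empty_or_nonempty with h | ⟨P, hP⟩
  · rw [dd, sz, h]; simp
    have := Q_pos (F := F)
    linarith
  · rw [← dd_eq_tl hK hπ hP]
    have := Finset.card_pos.2 ⟨_, ext_mem_tl hK hP hX⟩
    exact_mod_cast this

lemma ex_plX {K : Finset (Submodule F V)} {X A π : Submodule F V} (hX : X ∈ ex K A) (hπ : π ∈ plX X A) : X ∈ ex K π := by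
  obtain ⟨x1, x2, x3, x4⟩ := mem_ex.1 hX
  rw [mem_plX] at hπ
  exact mem_ex.2 ⟨x1, hπ.1, x3, x4.mono hπ.2.1⟩

/-- S3 inequalities, `E = q^2+q+1 - κ`. -/
lemma S3 {K : Finset (Submodule F V)} (hK : Cap K) {X A : Submodule F V} (hX : X ∈ ex K A) (hA : fr A = 4) :
    (Q + 1) * ((Q + 2) * (Q + 1) * (Q ^ 2 + Q + 1 - sz K A) - Q * (Q ^ 2 + Q + 1)
      - 2 * (Q ^ 2 + Q + 1 - sz K A) * (Q ^ 2 + Q + 1 - sz K A + Q)) ≤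
      ∑ π ∈ (plX X A).filter (fun π => dd K π < sz K π), sz K π * (sz K π - 1) * (dd K π - 2) ∧
    (Q + 1) * ((Q ^ 2 + Q + 1 - sz K A) * (Q ^ 2 - Q - 2 * (Q ^ 2 + Q + 1 - sz K A))) ≤
      ∑ π ∈ (plX X A).filter (fun π => dd K π < sz K π), sz K π * (sz K π - 1) * (dd K π - 1) := by
  obtain ⟨x1, x2, x3, x4⟩ := mem_ex.1 hX
  have hQ := Q_pos (F := F)
  have s0 : ((plX X A).card : ℤ) = Q ^ 2 + Q + 1 := by rw [card_plX x1 x2 hA]; push_cast; ring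
  have s1 := sum_plX1 hK hX hA
  have s2 := sum_plX2 hK hX hA
  have s2' : ∑ π ∈ plX X A, sz K π ^ 2 = sz K A * (sz K A + Q) := by
    have : ∑ π ∈ plX X A, sz K π ^ 2 = ∑ π ∈ plX X A, (sz K π * (sz K π - 1) + sz K π) :=
      Finset.sum_congr rfl fun _ _ => by ring
    rw [this, Finset.sum_add_distrib, s1, s2]; ring
  have gen : ∀ a b c : ℤ, ∑ π ∈ plX X A, (a + b * sz K π + c * sz K π ^ 2) =
      a * (Q ^ 2 + Q + 1) + b * (sz K A * (Q + 1)) + c * (sz K A * (sz K A + Q)) := by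
    intro a b c
    rw [Finset.sum_add_distrib, Finset.sum_add_distrib, Finset.sum_const, nsmul_eq_mul, s0,
      ← Finset.mul_sum, ← Finset.mul_sum, s1, s2']
    ring
  constructor
  · have h : ∀ π ∈ plX X A, (Q + 1) * ((Q - 2 * (Q + 1 - sz K π)) * ((Q + 1 - sz K π) - 1)) ≤
        if dd K π < sz K π then sz K π * (sz K π - 1) * (dd K π - 2) else 0 := by
      intro π hπ
      have h1 := dd_ge_one hK (ex_plX hX hπ) (mem_plX.1 hπ).2.2
      rw [dd] at h1 ⊢
      obtain ⟨x, hx⟩ : ∃ x, x = Q + 1 - sz K π := ⟨_, rfl⟩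
      have hs : sz K π = Q + 1 - x := by linarith
      rw [hs] at h1 ⊢
      have hx0 : 0 ≤ x := by linarith
      split_ifs with hc
      · rcases hx0.eq_or_lt with h0 | h0
        · rw [← h0]; ring_nf; rfl
        · have : 0 ≤ (x + x ^ 2) * (x - 1) := mul_nonneg (by positivity) (by linarith)
          nlinarith
      · have h3 : Q ≤ 2 * x := by linarith
        have : 0 ≤ (2 * x - Q) * (x - 1) := mul_nonneg (by linarith) (by linarith)
        nlinarith
    rw [Finset.sum_filter]
    refine le_trans (le_of_eq ?_) (Finset.sum_le_sum h)
    rw [Finset.sum_congr rfl (fun π _ => show _ = (Q + 1) * (-Q ^ 2 - 2 * Q) + (Q + 1) * (3 * Q + 2) * sz K π +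
      (Q + 1) * (-2) * sz K π ^ 2 by ring), gen]
    ring
  · have h : ∀ π ∈ plX X A, (Q + 1) * ((Q - 2 * (Q + 1 - sz K π)) * ((Q + 1 - sz K π))) ≤
        if dd K π < sz K π then sz K π * (sz K π - 1) * (dd K π - 1) else 0 := by
      intro π hπ
      have h1 := dd_ge_one hK (ex_plX hX hπ) (mem_plX.1 hπ).2.2
      rw [dd] at h1 ⊢
      obtain ⟨x, hx⟩ : ∃ x, x = Q + 1 - sz K π := ⟨_, rfl⟩
      have hs : sz K π = Q + 1 - x := by linarith
      rw [hs] at h1 ⊢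
      have hx0 : 0 ≤ x := by linarith
      split_ifs with hc
      · have : 0 ≤ (x + x ^ 2) * x := by positivity
        nlinarith
      · have h3 : Q ≤ 2 * x := by linarith
        have : 0 ≤ (2 * x - Q) * x := mul_nonneg (by linarith) (by linarith)
        nlinarith
    rw [Finset.sum_filter]
    refine le_trans (le_of_eq ?_) (Finset.sum_le_sum h)
    rw [Finset.sum_congr rfl (fun π _ => show _ = (Q + 1) * (-Q ^ 2 - 3 * Q - 2) + (Q + 1) * (3 * Q + 4) * sz K π +
      (Q + 1) * (-2) * sz K π ^ 2 by ring), gen]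
    ring

end Sol
end CapPf

namespace CapPf
open Classical
open Finset (univ filter card)
section Dbl
variable {F : Type*} [Field F] [Fintype F] {V : Type*} [AddCommGroup V] [Module F V] [Finite V]
local notation "qq" => Fintype.card F
local notation "Q" => (Fintype.card F : ℤ)

noncomputable def PL (W : Submodule F V) : Finset (Submodule F V) := univ.filter fun π => π ≤ W ∧ fr π = 3
noncomputable def SL (W : Submodule F V) : Finset (Submodule F V) := univ.filter fun A => A ≤ W ∧ fr A = 4

lemma mem_PL {W M : Submodule F V} : M ∈ PL W ↔ M ≤ W ∧ fr M = 3 := by simp [PL]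
lemma mem_SL {W M : Submodule F V} : M ∈ SL W ↔ M ≤ W ∧ fr M = 4 := by simp [SL]

lemma dcount {K : Finset (Submodule F V)} (hK : Cap K) (W : Submodule F V) (f : Submodule F V → ℤ) :
    ∑ π ∈ PL W, sz K π * (sz K π - 1) * f π =
      ∑ p ∈ (sec K W).offDiag, ∑ π ∈ cov (p.1 ⊔ p.2) W, f π := by
  have h1 : ∀ π ∈ PL W, sz K π * (sz K π - 1) * f π =
      ∑ p ∈ (sec K W).offDiag, if p.1 ≤ π ∧ p.2 ≤ π then f π else 0 := by
    intro π hπ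
    obtain ⟨hπW, hπ3⟩ := mem_PL.1 hπ
    rw [← Finset.sum_filter, Finset.sum_const, nsmul_eq_mul, sz, ← card_offDiag_int]
    congr 3
    ext ⟨P, R⟩
    simp only [Finset.mem_offDiag, mem_sec, Finset.mem_filter]
    constructor
    · rintro ⟨⟨a, b⟩, ⟨c, d⟩, e⟩; exact ⟨⟨⟨a, b.trans hπW⟩, ⟨c, d.trans hπW⟩, e⟩, b, d⟩
    · rintro ⟨⟨⟨a, b⟩, ⟨c, d⟩, e⟩, b', d'⟩; exact ⟨⟨a, b'⟩, ⟨c, d'⟩, e⟩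
  rw [Finset.sum_congr rfl h1, Finset.sum_comm]
  refine Finset.sum_congr rfl fun p hp => ?_
  rw [← Finset.sum_filter]
  refine Finset.sum_congr ?_ fun _ _ => rfl
  obtain ⟨hP, hR, hne⟩ := Finset.mem_offDiag.1 hp
  have := (sz_secant hK (mem_sec.1 hP).1 (mem_sec.1 hR).1 hne).1
  ext π
  simp only [Finset.mem_filter, mem_PL, mem_cov, this, sup_le_iff]
  tauto

lemma dcount_eq {K : Finset (Submodule F V)} (hK : Cap K) (W : Submodule F V) (f : Submodule F V → ℤ) (c : ℤ)
    (h : ∀ m, fr m = 2 → m ≤ W → sz K m = 2 → ∑ π ∈ cov m W, f π = c) :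
    ∑ π ∈ PL W, sz K π * (sz K π - 1) * f π = sz K W * (sz K W - 1) * c := by
  rw [dcount hK, Finset.sum_congr rfl (g := fun _ => c), Finset.sum_const, nsmul_eq_mul, card_offDiag_int, sz]
  intro p hp
  obtain ⟨hP, hR, hne⟩ := Finset.mem_offDiag.1 hp
  have := (sz_secant hK (mem_sec.1 hP).1 (mem_sec.1 hR).1 hne)
  exact h _ this.1 (sup_le (mem_sec.1 hP).2 (mem_sec.1 hR).2) this.2

lemma dcount_ge {K : Finset (Submodule F V)} (hK : Cap K) (W : Submodule F V) (f : Submodule F V → ℤ) (c : ℤ)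
    (h : ∀ m, fr m = 2 → m ≤ W → sz K m = 2 → c ≤ ∑ π ∈ cov m W, f π) :
    sz K W * (sz K W - 1) * c ≤ ∑ π ∈ PL W, sz K π * (sz K π - 1) * f π := by
  rw [dcount hK]
  have : sz K W * (sz K W - 1) * c = ∑ p ∈ (sec K W).offDiag, c := by
    rw [Finset.sum_const, nsmul_eq_mul, card_offDiag_int, sz]
  rw [this]
  refine Finset.sum_le_sum fun p hp => ?_
  obtain ⟨hP, hR, hne⟩ := Finset.mem_offDiag.1 hp
  have := (sz_secant hK (mem_sec.1 hP).1 (mem_sec.1 hR).1 hne)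
  exact h _ this.1 (sup_le (mem_sec.1 hP).2 (mem_sec.1 hR).2) this.2

lemma flags {W : Submodule F V} (hW : fr W = 5) (g : Submodule F V → ℤ) :
    ∑ A ∈ SL W, ∑ π ∈ PL A, g π = (Q + 1) * ∑ π ∈ PL W, g π := by
  rw [Finset.sum_comm' (t' := PL W) (s' := fun π => cov π W), Finset.mul_sum]
  · refine Finset.sum_congr rfl fun π hπ => ?_
    obtain ⟨h1, h2⟩ := mem_PL.1 hπ
    rw [Finset.sum_const, card_cov1 h1 (by omega), nsmul_eq_mul]; push_cast; ring
  · intro A π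
    simp only [mem_SL, mem_PL, mem_cov]
    constructor
    · rintro ⟨⟨a, b⟩, c, d⟩; exact ⟨⟨c, a, by omega⟩, c.trans a, d⟩
    · rintro ⟨⟨a, b, c⟩, d, e⟩; exact ⟨⟨b, by omega⟩, a, e⟩

lemma sum_one5 {K : Finset (Submodule F V)} (hK : Cap K) {W : Submodule F V} (hW : fr W = 5) :
    ∑ π ∈ PL W, sz K π * (sz K π - 1) * 1 = sz K W * (sz K W - 1) * (Q ^ 2 + Q + 1) := by
  refine dcount_eq hK W (fun _ => 1) _ fun m hm hmW hs => ?_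
  rw [Finset.sum_const, card_cov2 hmW (by omega)]; simp

lemma sum_dd5 {K : Finset (Submodule F V)} (hK : Cap K) {W : Submodule F V} (hW : fr W = 5) :
    ∑ π ∈ PL W, sz K π * (sz K π - 1) * dd K π =
      sz K W * (sz K W - 1) * (Q * (Q ^ 2 + Q + 1) + 2 - sz K W) := by
  refine dcount_eq hK W _ _ fun m hm hmW hs => ?_
  rw [sum_dd hK hmW hs, card_cov2 hmW (by omega)]; push_cast; ring

noncomputable def XS (K : Finset (Submodule F V)) (W : Submodule F V) : Finset (Submodule F V) :=
  (pts W).filter fun X => X ∉ K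
lemma mem_XS {K : Finset (Submodule F V)} {W X : Submodule F V} : X ∈ XS K W ↔ fr X = 1 ∧ X ≤ W ∧ X ∉ K := by
  simp [XS, mem_pts, and_assoc]

lemma card_XS {K : Finset (Submodule F V)} (hK : Cap K) {W : Submodule F V} (hW : fr W = 5) :
    ((XS K W).card : ℤ) = Q ^ 4 + Q ^ 3 + Q ^ 2 + Q + 1 - sz K W := by
  have e : XS K W = pts W \ sec K W := by
    ext X; simp only [mem_XS, Finset.mem_sdiff, mem_pts, mem_sec]; tauto
  have hs : sec K W ⊆ pts W := fun P hP => mem_pts.2 ⟨hK.1 P (mem_sec.1 hP).1, (mem_sec.1 hP).2⟩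
  rw [e, Finset.cast_card_sdiff hs, card_pts5 hW, sz]; push_cast; ring

lemma sum_tau {K : Finset (Submodule F V)} (hK : Cap K) {W : Submodule F V} (hW : fr W = 5) :
    ∑ X ∈ XS K W, (tau K X W : ℤ) = sz K W * (Q * (Q * (Q ^ 2 + Q + 1) + 2 - sz K W)) := by
  have h1 : ∀ X ∈ XS K W, (tau K X W : ℤ) = ∑ P ∈ sec K W, if Tan K P X then 1 else 0 := by
    intro X _
    rw [tau, ← Finset.sum_filter]; simp
  rw [Finset.sum_congr rfl h1, Finset.sum_comm, Finset.sum_congr rfl (g := fun _ => Q * (Q * (Q ^ 2 + Q + 1) + 2 - sz K W)),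
    Finset.sum_const, nsmul_eq_mul, sz]
  intro P hP
  have hc := card_tan_pts hK hP
  obtain ⟨a, b⟩ := mem_sec.1 hP
  have hc2 := card_tl hK a b
  rw [card_cov3 b (by rw [hK.1 P a, hW])] at hc2
  have hc3 : ((tl K P W).card : ℤ) + sz K W = Q ^ 3 + Q ^ 2 + Q + 1 + 1 := by rw [sz]; exact_mod_cast hc2
  rw [← Finset.sum_filter, XS, Finset.filter_filter, Finset.sum_const, hc]
  rw [nsmul_eq_mul, mul_one]
  push_cast
  rw [eq_sub_of_add_eq hc3]; ring

lemma sum_tau2 {K : Finset (Submodule F V)} (hK : Cap K) {W : Submodule F V} :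
    ∑ X ∈ XS K W, (tau K X W : ℤ) * (tau K X W - 1) = ∑ π ∈ PL W, sz K π * (sz K π - 1) * dd K π ^ 2 := by
  rw [dcount hK]
  have h1 : ∀ X ∈ XS K W, (tau K X W : ℤ) * (tau K X W - 1) =
      ∑ p ∈ (sec K W).offDiag, if Tan K p.1 X ∧ Tan K p.2 X then 1 else 0 := by
    intro X _
    rw [tau, ← card_offDiag_int, ← Finset.sum_filter]
    simp only [Finset.sum_const, nsmul_eq_mul, mul_one]
    congr 2
    ext ⟨P, R⟩
    simp only [Finset.mem_offDiag, mem_sec, Finset.mem_filter]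
    tauto
  rw [Finset.sum_congr rfl h1, Finset.sum_comm]
  refine Finset.sum_congr rfl fun p hp => ?_
  obtain ⟨P, R⟩ := p
  obtain ⟨hP, hR, hne⟩ := Finset.mem_offDiag.1 hp
  simp only at hP hR hne ⊢
  obtain ⟨hP1, hP2⟩ := mem_sec.1 hP
  obtain ⟨hR1, hR2⟩ := mem_sec.1 hR
  have hm := (sz_secant hK hP1 hR1 hne).1
  have key : ∀ X, fr X = 1 → Tan K P X → Tan K R X → ¬ X ≤ P ⊔ R := by
    intro X hX t1 t2 hle
    by_cases hXP : X = P
    · subst hXP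
      exact hne (t2 X hP1 le_sup_right)
    · have e := line_eq (hK.1 P hP1) hX (Ne.symm hXP) hm le_sup_left hle
      exact hne (t1 R hR1 (e ▸ le_sup_right)).symm
  have keyK : ∀ X, Tan K P X → Tan K R X → X ∉ K := by
    intro X t1 t2 hXK
    exact hne ((t1 X hXK le_sup_right).symm.trans (t2 X hXK le_sup_right))
  have hc := cover ((XS K W).filter fun X => Tan K P X ∧ Tan K R X)
    (fun X hX => (mem_XS.1 (Finset.mem_filter.1 hX).1).1) (U := P ⊔ R) (W := W) (sup_le hP2 hR2)
  rw [← Finset.sum_filter, Finset.sum_const, nsmul_eq_mul, mul_one]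
  have e1 : ((XS K W).filter fun X => Tan K P X ∧ Tan K R X).filter (fun X => X ≤ W ∧ ¬ X ≤ P ⊔ R) =
      (XS K W).filter fun X => Tan K P X ∧ Tan K R X := by
    refine Finset.filter_true_of_mem fun X hX => ?_
    obtain ⟨h1, h2, h3⟩ := Finset.mem_filter.1 hX
    exact ⟨(mem_XS.1 h1).2.1, key X (mem_XS.1 h1).1 h2 h3⟩
  rw [e1] at hc
  rw [← hc]
  push_cast
  refine Finset.sum_congr rfl fun π hπ => ?_
  obtain ⟨a, b, c⟩ := mem_cov.1 hπ
  rw [← card_tan_both hK (by omega : fr π = 3) (mem_sec.2 ⟨hP1, le_sup_left.trans a⟩)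
    (mem_sec.2 ⟨hR1, le_sup_right.trans a⟩) hne]
  congr 2
  ext X
  simp only [Finset.mem_filter, mem_XS, mem_pts]
  constructor
  · rintro ⟨⟨⟨x1, x2, x3⟩, x4, x5⟩, x6, x7⟩; exact ⟨⟨x1, x6⟩, x4, x5⟩
  · rintro ⟨⟨x1, x2⟩, x3, x4⟩
    exact ⟨⟨⟨x1, x2.trans b, keyK X x3 x4⟩, x3, x4⟩, x2, key X x1 x3 x4⟩

/-- planes through an external point: pairs are counted at most once -/
lemma pairsX {K : Finset (Submodule F V)} (hK : Cap K) {W X : Submodule F V} (hX : fr X = 1)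
    (S : Finset (Submodule F V)) (hS : ∀ π ∈ S, π ≤ W ∧ fr π = 3 ∧ X ∈ ex K π) :
    ∑ π ∈ S, sz K π * (sz K π - 1) ≤ (tau K X W : ℤ) ^ 2 := by
  have h1 : ∑ π ∈ S, sz K π * (sz K π - 1) = ((S.biUnion fun π => (sec K π).offDiag).card : ℤ) := by
    rw [Finset.card_biUnion]
    · push_cast
      exact Finset.sum_congr rfl fun π _ => by rw [sz, card_offDiag_int]
    · intro π hπ π' hπ' hne
      rw [Function.onFun, Finset.disjoint_left]
      rintro ⟨P, R⟩ h h'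
      simp only [Finset.mem_offDiag] at h h'
      obtain ⟨hP, hR, hPR⟩ := h
      obtain ⟨hP1, hP2⟩ := mem_sec.1 hP
      obtain ⟨hR1, hR2⟩ := mem_sec.1 hR
      have hm := (sz_secant hK hP1 hR1 hPR).1
      have hxe := mem_ex.1 (hS π hπ).2.2
      have hxe' := mem_ex.1 (hS π' hπ').2.2
      have hnl : ¬ X ≤ P ⊔ R := by
        intro hle
        have hXP : P ≠ X := fun h => hxe.2.2.1 (h ▸ hP1)
        have e := line_eq (hK.1 P hP1) hX hXP hm le_sup_left hle
        exact hPR (hxe.2.2.2 P hP R hR1 (e ▸ le_sup_right)).symm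
      have e1 := sup_pt_eq hX hnl (sup_le hP2 hR2) hxe.2.1 (by rw [hm, (hS π hπ).2.1])
      have e2 := sup_pt_eq hX hnl (sup_le (mem_sec.1 h'.1).2 (mem_sec.1 h'.2.1).2) hxe'.2.1
        (by rw [hm, (hS π' hπ').2.1])
      exact hne (e1.symm.trans e2)
  rw [h1, sq, tau]
  have : (S.biUnion fun π => (sec K π).offDiag) ⊆
      ((sec K W).filter fun P => Tan K P X) ×ˢ ((sec K W).filter fun P => Tan K P X) := by
    rintro ⟨P, R⟩ h
    simp only [Finset.mem_biUnion, Finset.mem_offDiag, mem_sec] at h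
    obtain ⟨π, hπ, ⟨a, b⟩, ⟨c, d⟩, e⟩ := h
    have hxe := mem_ex.1 (hS π hπ).2.2
    simp only [Finset.mem_product, Finset.mem_filter, mem_sec]
    exact ⟨⟨⟨a, b.trans (hS π hπ).1⟩, hxe.2.2.2 P (mem_sec.2 ⟨a, b⟩)⟩,
      ⟨⟨c, d.trans (hS π hπ).1⟩, hxe.2.2.2 R (mem_sec.2 ⟨c, d⟩)⟩⟩
  have := Finset.card_le_card this
  rw [Finset.card_product] at this
  exact_mod_cast this
end Dbl
end CapPf

namespace CapPf
open Classical
open Finset (univ filter card)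
section CovX
variable {F : Type*} [Field F] [Fintype F] {V : Type*} [AddCommGroup V] [Module F V] [Finite V]
local notation "qq" => Fintype.card F
local notation "Q" => (Fintype.card F : ℤ)

noncomputable def tA (K : Finset (Submodule F V)) (A : Submodule F V) : ℤ := Q ^ 2 + Q + 2 - sz K A
noncomputable def fA (K : Finset (Submodule F V)) (X W : Submodule F V) : Finset (Submodule F V) :=
  (SL W).filter fun A => X ∈ ex K A ∧ 8 * tA K A ≤ Q ^ 2
noncomputable def bA (K : Finset (Submodule F V)) (X W : Submodule F V) : Finset (Submodule F V) :=
  (SL W).filter fun A => X ∈ ex K A ∧ tA K A < sz K A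
noncomputable def gp (K : Finset (Submodule F V)) (X W : Submodule F V) : Finset (Submodule F V) :=
  (PL W).filter fun π => X ∈ ex K π ∧ dd K π * (dd K π - 1) < Q

lemma mem_fA {K : Finset (Submodule F V)} {X W A : Submodule F V} :
    A ∈ fA K X W ↔ (A ≤ W ∧ fr A = 4) ∧ X ∈ ex K A ∧ 8 * tA K A ≤ Q ^ 2 := by simp [fA, mem_SL]
lemma mem_bA {K : Finset (Submodule F V)} {X W A : Submodule F V} :
    A ∈ bA K X W ↔ (A ≤ W ∧ fr A = 4) ∧ X ∈ ex K A ∧ tA K A < sz K A := by simp [bA, mem_SL]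
lemma mem_gp {K : Finset (Submodule F V)} {X W π : Submodule F V} :
    π ∈ gp K X W ↔ (π ≤ W ∧ fr π = 3) ∧ X ∈ ex K π ∧ dd K π * (dd K π - 1) < Q := by simp [gp, mem_PL]

lemma sz_plane_le {K : Finset (Submodule F V)} (hK : Cap K) {π : Submodule F V} (hπ : fr π = 3) : sz K π ≤ Q + 2 := by
  have := dd_nonneg hK hπ; rw [dd] at this; linarith

lemma mult2 {K : Finset (Submodule F V)} (hK : Cap K) {X W π : Submodule F V} (hπ : π ∈ PL W)
    (hX : X ∈ ex K π) (hτ : 8 * (tau K X W : ℤ) < 21 * Q ^ 2) :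
    ((fA K X W).filter fun A => π ≤ A).card ≤ 2 := by
  obtain ⟨hπW, hπ3⟩ := mem_PL.1 hπ
  have hQ := Q_pos (F := F)
  have hs := cov_tau hK X hπW
  have hsub : ((fA K X W).filter fun A => π ≤ A) ⊆ cov π W := by
    intro A hA
    obtain ⟨h1, h2⟩ := Finset.mem_filter.1 hA
    obtain ⟨⟨a, b⟩, _⟩ := mem_fA.1 h1
    exact mem_cov.2 ⟨h2, a, by omega⟩
  have h1 : ∑ A ∈ ((fA K X W).filter fun A => π ≤ A), (7 * Q ^ 2) ≤
      8 * ∑ A ∈ cov π W, ((tau K X A : ℤ) - tau K X π) := by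
    rw [Finset.mul_sum]
    refine le_trans (Finset.sum_le_sum (g := fun A => 8 * ((tau K X A : ℤ) - tau K X π)) ?_)
      (Finset.sum_le_sum_of_subset_of_nonneg hsub ?_)
    · intro A hA
      obtain ⟨h1, h2⟩ := Finset.mem_filter.1 hA
      obtain ⟨⟨a, b⟩, c, d⟩ := mem_fA.1 h1
      rw [(mem_ex.1 c).2.2.2.tau, (mem_ex.1 hX).2.2.2.tau]
      rw [tA] at d
      have := sz_plane_le hK hπ3
      linarith
    · intro A hA _
      have := tau_mono K X (mem_cov.1 hA).1
      linarith
  rw [hs, Finset.sum_const, nsmul_eq_mul] at h1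
  by_contra hc
  push Not at hc
  have hc' : (3:ℤ) ≤ ((fA K X W).filter fun A => π ≤ A).card := by exact_mod_cast hc
  have : (3:ℤ) * (7 * Q ^ 2) ≤ ((fA K X W).filter fun A => π ≤ A).card * (7 * Q ^ 2) :=
    mul_le_mul_of_nonneg_right hc' (by positivity)
  have h0 : (0:ℤ) ≤ tau K X π := by positivity
  linarith

lemma solids_inter {W A A' π : Submodule F V} (hπ : fr π = 3) (hA : fr A = 4) (hA' : fr A' = 4) (h : A ≠ A')
    (h1 : π ≤ A) (h2 : π ≤ A') : π = A ⊓ A' := by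
  refine le_eq (le_inf h1 h2) ?_
  rw [hπ]
  by_contra hc
  push Not at hc
  have e1 : A ⊓ A' = A := le_eq inf_le_left (by omega)
  have e2 : A ⊓ A' = A' := le_eq inf_le_right (by omega)
  exact h (e1.symm.trans e2)

lemma sz_inter {K : Finset (Submodule F V)} (hK : Cap K) {W A A' : Submodule F V} (hW : fr W = 5)
    (hA : fr A = 4) (hA' : fr A' = 4) (hAW : A ≤ W) (hAW' : A' ≤ W) (h : A ≠ A') : sz K (A ⊓ A') ≤ Q + 2 := by
  apply sz_plane_le hK
  have h1 := Submodule.finrank_sup_add_finrank_inf_eq A A'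
  have h2 : fr (A ⊔ A') ≤ 5 := hW ▸ fr_mono (sup_le hAW hAW')
  have h3 : ¬ fr (A ⊓ A') ≥ 4 := by
    intro hc
    have e1 : A ⊓ A' = A := le_eq inf_le_left (by omega)
    have e2 : A ⊓ A' = A' := le_eq inf_le_right (by omega)
    exact h (e1.symm.trans e2)
  simp only [fr] at *
  omega

lemma union_big {K : Finset (Submodule F V)} (hK : Cap K) {W : Submodule F V} (hW : fr W = 5) (a : ℤ)
    (S : Finset (Submodule F V)) (hS : ∀ A ∈ S, A ≤ W ∧ fr A = 4 ∧ a ≤ sz K A) :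
    (S.card : ℤ) * a - (S.card : ℤ) ^ 2 * (Q + 2) ≤ ((S.biUnion fun A => sec K A).card : ℤ) := by
  induction S using Finset.induction_on with
  | empty => simp
  | insert A S hAS ih =>
    have ih := ih fun B hB => hS B (Finset.mem_insert_of_mem hB)
    have hA := hS A (Finset.mem_insert_self _ _)
    rw [Finset.biUnion_insert, Finset.card_insert_of_notMem hAS]
    have h1 := Finset.card_union_add_card_inter (sec K A) (S.biUnion fun A => sec K A)
    have h2 : (((sec K A) ∩ (S.biUnion fun A => sec K A)).card : ℤ) ≤ S.card * (Q + 2) := by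
      rw [Finset.inter_biUnion]
      have : ((S.biUnion fun B => sec K A ∩ sec K B).card : ℤ) ≤ ∑ B ∈ S, ((sec K A ∩ sec K B).card : ℤ) := by
        exact_mod_cast Finset.card_biUnion_le
      refine this.trans ?_
      rw [← nsmul_eq_mul]
      refine Finset.sum_le_card_nsmul _ _ _ fun B hB => ?_
      have hB' := hS B (Finset.mem_insert_of_mem hB)
      have := sz_inter hK hW hA.2.1 hB'.2.1 hA.1 hB'.1 (fun h => hAS (h ▸ hB))
      rw [sz] at this
      have e : sec K A ∩ sec K B = sec K (A ⊓ B) := by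
        ext P
        simp only [Finset.mem_inter, mem_sec, le_inf_iff]; tauto
      rw [e]; exact this
    have h1' : (((sec K A) ∪ (S.biUnion fun A => sec K A)).card : ℤ) + ((sec K A) ∩ (S.biUnion fun A => sec K A)).card
      = sz K A + (S.biUnion fun A => sec K A).card := by rw [sz]; exact_mod_cast h1
    push_cast
    have hQ := Q_pos (F := F)
    have h3 := hA.2.2
    have h4 : (0:ℤ) ≤ (S.card + 1) * (Q + 2) := by positivity
    nlinarith

lemma card_bA {K : Finset (Submodule F V)} (hK : Cap K) {X W : Submodule F V} (hW : fr W = 5)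
    (hq : 2048 ≤ qq) (hτ : 8 * (tau K X W : ℤ) < 21 * Q ^ 2) : (bA K X W).card ≤ 6 := by
  by_contra hc
  push Not at hc
  obtain ⟨S, hS, hS7⟩ := Finset.exists_subset_card_eq (show 7 ≤ (bA K X W).card by omega)
  have hQ : (2048:ℤ) ≤ Q := by exact_mod_cast hq
  obtain ⟨a, ha⟩ : ∃ a : ℤ, Q ^ 2 + Q + 1 ≤ 2 * a ∧ 2 * a ≤ Q ^ 2 + Q + 2 := ⟨(Q ^ 2 + Q + 2) / 2, by omega, by omega⟩
  have h := union_big hK hW a S (fun A hA => by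
    obtain ⟨⟨h1, h2⟩, h3, h4⟩ := mem_bA.1 (hS hA)
    rw [tA] at h4
    exact ⟨h1, h2, by linarith⟩)
  have hsub : (S.biUnion fun A => sec K A) ⊆ (sec K W).filter fun P => Tan K P X := by
    intro P hP
    obtain ⟨A, hA, hPA⟩ := Finset.mem_biUnion.1 hP
    obtain ⟨⟨h1, h2⟩, h3, h4⟩ := mem_bA.1 (hS hA)
    exact Finset.mem_filter.2 ⟨sec_mono K h1 hPA, (mem_ex.1 h3).2.2.2 P hPA⟩
  have h2 : ((S.biUnion fun A => sec K A).card : ℤ) ≤ tau K X W := by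
    rw [tau]; exact_mod_cast Finset.card_le_card hsub
  rw [hS7] at h
  push_cast at h
  nlinarith

lemma good_small {K : Finset (Submodule F V)} {π : Submodule F V} (hq : 2048 ≤ qq) (hd : dd K π * (dd K π - 1) < Q) :
    41 * dd K π ≤ Q := by
  by_contra hc
  push Not at hc
  have hQ : (2048:ℤ) ≤ Q := by exact_mod_cast hq
  nlinarith

lemma uncovered [CharP F 2] {K : Finset (Submodule F V)} (hK : Cap K) {X W π : Submodule F V} (hW : fr W = 5)
    (hq : 2048 ≤ qq) (hπ : π ∈ gp K X W) (hno : ∀ A ∈ fA K X W, ¬ π ≤ A)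
    (hdef : 5 * (Q * (Q ^ 2 + Q + 1) + 2 - sz K W - tau K X W) < Q ^ 2) :
    ∃ A ∈ bA K X W, ∃ A' ∈ bA K X W, π = A ⊓ A' := by
  obtain ⟨⟨hπW, hπ3⟩, hX, hd⟩ := mem_gp.1 hπ
  obtain ⟨x1, x2, x3, x4⟩ := mem_ex.1 hX
  have hQ : (2048:ℤ) ≤ Q := by exact_mod_cast hq
  have hd41 := good_small hq hd
  have hcard : ((cov π W).card : ℤ) = Q + 1 := by rw [card_cov1 hπW (by omega)]; push_cast; ring
  have s1 := cov_tau hK X hπW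
  have s2 := cov_sum' hK.1 hπW
  rw [Finset.sum_sub_distrib, Finset.sum_const, nsmul_eq_mul, hcard, x4.tau] at s1
  rw [hcard] at s2
  have s3 : ∑ A ∈ cov π W, ((tau K X A : ℤ) - tA K A) = tau K X W - (Q * (Q ^ 2 + Q + 1) + 2 - sz K W)
      + Q * (Q + 2 - 2 * dd K π) := by
    simp only [tA]
    rw [Finset.sum_sub_distrib, Finset.sum_sub_distrib, Finset.sum_const, nsmul_eq_mul, hcard, s2, dd]
    linear_combination s1
  by_contra hcon
  push Not at hcon
  -- all positive terms are in `bA`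
  have hpos : ∀ A ∈ cov π W, 0 < (tau K X A : ℤ) - tA K A → A ∈ bA K X W ∧
      4 * ((tau K X A : ℤ) - tA K A) ≤ 3 * Q ^ 2 + 4 * Q + 8 := by
    intro A hA h0
    obtain ⟨a, b, c⟩ := mem_cov.1 hA
    have hXA : X ≤ A := x2.trans a
    have hA4 : fr A = 4 := by omega
    by_cases he : Ext K X A
    · rw [he.tau] at h0 ⊢
      have hxe : X ∈ ex K A := mem_ex.2 ⟨x1, hXA, x3, he⟩
      refine ⟨mem_bA.2 ⟨⟨b, hA4⟩, hxe, by linarith⟩, ?_⟩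
      have : ¬ 8 * tA K A ≤ Q ^ 2 := fun h => hno A (mem_fA.2 ⟨⟨b, hA4⟩, hxe, h⟩) a
      simp only [tA] at *
      linarith
    · have := tau_le_t4 hK hA4 x1 hXA x3 he
      rw [tA] at h0; linarith
  have hle : 4 * ∑ A ∈ cov π W, ((tau K X A : ℤ) - tA K A) ≤ 3 * Q ^ 2 + 4 * Q + 8 := by
    by_cases hex : ∃ A ∈ cov π W, 0 < (tau K X A : ℤ) - tA K A
    · obtain ⟨A, hA, h0⟩ := hex
      obtain ⟨hb, h4⟩ := hpos A hA h0
      rw [← Finset.add_sum_erase _ _ hA]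
      have : ∑ A ∈ (cov π W).erase A, ((tau K X A : ℤ) - tA K A) ≤ 0 := by
        refine Finset.sum_nonpos fun B hB => ?_
        by_contra hB0
        push Not at hB0
        obtain ⟨hne, hBc⟩ := Finset.mem_erase.1 hB
        have hb' := (hpos B hBc hB0).1
        exact hcon A hb B hb' (solids_inter (W := W) hπ3 (mem_bA.1 hb).1.2 (mem_bA.1 hb').1.2 (Ne.symm hne) (mem_cov.1 hA).1
          (mem_cov.1 hBc).1)
      linarith
    · push Not at hex
      have := Finset.sum_nonpos hex
      nlinarith
  rw [s3] at hle
  nlinarith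

lemma sum_biU_le {α β : Type*} (S : Finset α) (t : α → Finset β) (f : β → ℤ) (hf : ∀ b, 0 ≤ f b) :
    ∑ b ∈ S.biUnion t, f b ≤ ∑ a ∈ S, ∑ b ∈ t a, f b := by
  induction S using Finset.induction_on with
  | empty => simp
  | insert a S ha ih =>
    rw [Finset.biUnion_insert, Finset.sum_insert ha]
    have h := Finset.sum_union_inter (s₁ := t a) (s₂ := S.biUnion t) (f := f)
    have h0 : 0 ≤ ∑ b ∈ t a ∩ S.biUnion t, f b := Finset.sum_nonneg fun b _ => hf b
    linarith

lemma coverX [CharP F 2] {K : Finset (Submodule F V)} (hK : Cap K) {X W : Submodule F V} (hW : fr W = 5)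
    (hq : 2048 ≤ qq) (hX : fr X = 1) (hτ : 8 * (tau K X W : ℤ) < 21 * Q ^ 2) :
    ∑ π ∈ gp K X W, sz K π * (sz K π - 1) ≤ ∑ A ∈ fA K X W, sz K A * (sz K A - 1) +
      (if Q ^ 2 ≤ 5 * (Q * (Q ^ 2 + Q + 1) + 2 - sz K W - tau K X W) then (tau K X W : ℤ) ^ 2 else 0)
      + 36 * (Q + 2) ^ 2 := by
  have hnn : ∀ M : Submodule F V, 0 ≤ sz K M * (sz K M - 1) := fun M => by
    have := sz_nonneg K M
    rcases this.eq_or_lt with h | h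
    · rw [← h]; simp
    · exact mul_nonneg this (by linarith)
  have hf0 : 0 ≤ ∑ A ∈ fA K X W, sz K A * (sz K A - 1) := Finset.sum_nonneg fun A _ => hnn A
  split_ifs with hdef
  · have := pairsX hK hX (W := W) (gp K X W) (fun π hπ => by
      obtain ⟨⟨a, b⟩, c, _⟩ := mem_gp.1 hπ
      exact ⟨a, b, c⟩)
    have : (0:ℤ) ≤ 36 * (Q + 2) ^ 2 := by positivity
    linarith
  · push Not at hdef
    rw [← Finset.sum_filter_add_sum_filter_not (gp K X W) (fun π => ∃ A ∈ fA K X W, π ≤ A), add_zero]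
    refine add_le_add ?_ ?_
    · have h1 : ∀ A ∈ fA K X W, sz K A * (sz K A - 1) = ∑ π ∈ plX X A, sz K π * (sz K π - 1) := by
        intro A hA
        obtain ⟨⟨h1, h2⟩, h3, h4⟩ := mem_fA.1 hA
        exact (sum_plX2 hK h3 h2).symm
      rw [Finset.sum_congr rfl h1]
      refine le_trans ?_ (sum_biU_le (fA K X W) (fun A => plX X A) _ hnn)
      · refine Finset.sum_le_sum_of_subset_of_nonneg ?_ fun π _ _ => hnn π
        intro π hπ
        obtain ⟨hπ, A, hA, hle⟩ := Finset.mem_filter.1 hπ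
        obtain ⟨⟨h1, h2⟩, h3, h4⟩ := mem_gp.1 hπ
        exact Finset.mem_biUnion.2 ⟨A, hA, mem_plX.2 ⟨(mem_ex.1 h3).2.1, hle, h2⟩⟩
    · have hsub : ((gp K X W).filter fun π => ¬ ∃ A ∈ fA K X W, π ≤ A) ⊆
          (bA K X W ×ˢ bA K X W).image fun p => p.1 ⊓ p.2 := by
        intro π hπ
        obtain ⟨hπ, hno⟩ := Finset.mem_filter.1 hπ
        push Not at hno
        obtain ⟨A, hA, A', hA', e⟩ := uncovered hK hW hq hπ hno hdef
        exact Finset.mem_image.2 ⟨(A, A'), Finset.mem_product.2 ⟨hA, hA'⟩, e.symm⟩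
      have hc : ((gp K X W).filter fun π => ¬ ∃ A ∈ fA K X W, π ≤ A).card ≤ 36 := by
        refine (Finset.card_le_card hsub).trans (Finset.card_image_le.trans ?_)
        rw [Finset.card_product]
        have := card_bA hK hW hq hτ
        nlinarith
      refine (Finset.sum_le_card_nsmul _ _ ((Q + 2) ^ 2) ?_).trans ?_
      · intro π hπ
        obtain ⟨⟨h1, h2⟩, h3, h4⟩ := mem_gp.1 (Finset.mem_filter.1 hπ).1
        have h5 := sz_plane_le hK h2
        have h6 := sz_nonneg K π
        nlinarith
      · rw [nsmul_eq_mul]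
        exact mul_le_mul_of_nonneg_right (by exact_mod_cast hc) (by positivity)
end CovX
end CapPf

namespace CapPf
open Classical
open Finset (univ filter card)
section Glob
variable {F : Type*} [Field F] [Fintype F] {V : Type*} [AddCommGroup V] [Module F V] [Finite V]
local notation "qq" => Fintype.card F
local notation "Q" => (Fintype.card F : ℤ)

/-- the tangent number in dimension five -/
noncomputable def tW (K : Finset (Submodule F V)) (W : Submodule F V) : ℤ := Q * (Q ^ 2 + Q + 1) + 2 - sz K W
noncomputable def dW (K : Finset (Submodule F V)) (W : Submodule F V) : ℤ :=
  (Q + 1) * (tW K W - 1) - Q * (Q ^ 2 + Q + 1)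
def Comp (K : Finset (Submodule F V)) (W : Submodule F V) : Prop :=
  ∀ X, fr X = 1 → X ≤ W → X ∉ K → ¬ Ext K X W

lemma szz_nonneg (K : Finset (Submodule F V)) (M : Submodule F V) : 0 ≤ sz K M * (sz K M - 1) := by
  have := sz_nonneg K M
  rcases this.eq_or_lt with h | h
  · rw [← h]; simp
  · exact mul_nonneg this (by linarith)

lemma tau_le_tW [CharP F 2] {K : Finset (Submodule F V)} (hK : Cap K) {W X : Submodule F V} (hW : fr W = 5)
    (hc : Comp K W) (hX : X ∈ XS K W) : (tau K X W : ℤ) ≤ tW K W := by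
  obtain ⟨a, b, c⟩ := mem_XS.1 hX
  exact tau_le_t5 hK hW a b c (hc X a b c)

lemma gsq [CharP F 2] {K : Finset (Submodule F V)} (hK : Cap K) {W : Submodule F V} (hW : fr W = 5)
    (hc : Comp K W) : ∑ π ∈ PL W, sz K π * (sz K π - 1) * dd K π ^ 2 ≤
      sz K W * (Q * tW K W * (tW K W - 1)) := by
  rw [← sum_tau2 hK]
  have h : ∑ X ∈ XS K W, (tau K X W : ℤ) * (tau K X W - 1) ≤ ∑ X ∈ XS K W, (tau K X W : ℤ) * (tW K W - 1) := by
    refine Finset.sum_le_sum fun X hX => ?_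
    have := tau_le_tW hK hW hc hX
    exact mul_le_mul_of_nonneg_left (by linarith) (by positivity)
  refine h.trans (le_of_eq ?_)
  rw [← Finset.sum_mul, sum_tau hK hW, tW]; ring

lemma sum_def {K : Finset (Submodule F V)} (hK : Cap K) {W : Submodule F V} (hW : fr W = 5) :
    ∑ X ∈ XS K W, (tW K W - tau K X W) = tW K W * dW K W := by
  rw [Finset.sum_sub_distrib, sum_tau hK hW, Finset.sum_const, nsmul_eq_mul, card_XS hK hW, dW, tW]; ring

lemma tW_pos [CharP F 2] {K : Finset (Submodule F V)} (hK : Cap K) {W : Submodule F V} (hW : fr W = 5)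
    (hq : 4 ≤ qq) (h2 : 2 ≤ sz K W) : 1 ≤ tW K W := by
  obtain ⟨P, hP, R, hR, hne⟩ := Finset.one_lt_card.1 (show 1 < (sec K W).card by rw [sz] at h2; exact_mod_cast h2)
  have hm := (sz_secant hK (mem_sec.1 hP).1 (mem_sec.1 hR).1 hne).1
  have hmW : P ⊔ R ≤ W := sup_le (mem_sec.1 hP).2 (mem_sec.1 hR).2
  obtain ⟨π, hπ⟩ : (cov (P ⊔ R) W).Nonempty := by
    rw [← Finset.card_pos, card_cov2 hmW (by omega)]; positivity
  obtain ⟨a, b, c⟩ := mem_cov.1 hπ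
  have s := cov_sum' hK.1 b
  have hle : ∑ A ∈ cov π W, sz K A ≤ ∑ A ∈ cov π W, (Q ^ 2 + 1) := by
    refine Finset.sum_le_sum fun A hA => qvist hK ?_ hq
    have := (mem_cov.1 hA).2.2
    omega
  rw [s, Finset.sum_const, nsmul_eq_mul, card_cov1 b (by omega)] at hle
  push_cast at hle
  have h0 := sz_nonneg K π
  have hQ := Q_pos (F := F)
  rw [tW]; nlinarith

/-- total weight of full pairs -/
noncomputable def S0 (K : Finset (Submodule F V)) (W : Submodule F V) : ℤ :=
  ∑ X ∈ XS K W, ∑ A ∈ fA K X W, sz K A * (sz K A - 1)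
noncomputable def badW (K : Finset (Submodule F V)) (W : Submodule F V) : ℤ :=
  ∑ π ∈ (PL W).filter (fun π => ¬ dd K π * (dd K π - 1) < Q), sz K π * (sz K π - 1) * dd K π

lemma S0_ge [CharP F 2] {K : Finset (Submodule F V)} (hK : Cap K) {W : Submodule F V} (hW : fr W = 5)
    (hc : Comp K W) (hq : 2048 ≤ qq) (ht : 8 * tW K W < 21 * Q ^ 2) :
    Q ^ 2 * (sz K W * (sz K W - 1) * tW K W - badW K W) ≤ Q ^ 2 * S0 K W + 5 * tW K W ^ 3 * dW K W
      + Q ^ 2 * ((XS K W).card * (36 * (Q + 2) ^ 2)) := by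
  have h1 : sz K W * (sz K W - 1) * tW K W - badW K W =
      ∑ π ∈ (PL W).filter (fun π => dd K π * (dd K π - 1) < Q), sz K π * (sz K π - 1) * dd K π := by
    have := sum_dd5 hK hW
    rw [← Finset.sum_filter_add_sum_filter_not (PL W) (fun π => dd K π * (dd K π - 1) < Q)] at this
    rw [badW, tW]; linarith
  have h2 : ∑ π ∈ (PL W).filter (fun π => dd K π * (dd K π - 1) < Q), sz K π * (sz K π - 1) * dd K π ≤
      ∑ π ∈ (PL W).filter (fun π => dd K π * (dd K π - 1) < Q), sz K π * (sz K π - 1) * (ex K π).card := by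
    refine Finset.sum_le_sum fun π hπ => ?_
    obtain ⟨hπ, hd⟩ := Finset.mem_filter.1 hπ
    obtain ⟨a, b⟩ := mem_PL.1 hπ
    rcases (sz_nonneg K π).eq_or_lt with h | h
    · rw [← h]; simp
    · exact mul_le_mul_of_nonneg_left (card_ex_ge hK b h hd) (szz_nonneg K π)
  have h3 : ∑ π ∈ (PL W).filter (fun π => dd K π * (dd K π - 1) < Q), sz K π * (sz K π - 1) * (ex K π).card =
      ∑ X ∈ XS K W, ∑ π ∈ gp K X W, sz K π * (sz K π - 1) := by
    rw [Finset.sum_comm' (t' := (PL W).filter (fun π => dd K π * (dd K π - 1) < Q)) (s' := fun π => ex K π)]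
    · refine Finset.sum_congr rfl fun π _ => ?_
      rw [Finset.sum_const, nsmul_eq_mul]; ring
    · intro X π
      simp only [mem_XS, mem_gp, Finset.mem_filter, mem_PL]
      constructor
      · rintro ⟨⟨a, b, c⟩, d, e, f⟩; exact ⟨e, d, f⟩
      · rintro ⟨e, d, f⟩
        obtain ⟨x1, x2, x3, x4⟩ := mem_ex.1 e
        exact ⟨⟨x1, x2.trans d.1, x3⟩, d, e, f⟩
  have h4 : ∀ X ∈ XS K W, Q ^ 2 * ∑ π ∈ gp K X W, sz K π * (sz K π - 1) ≤
      Q ^ 2 * ∑ A ∈ fA K X W, sz K A * (sz K A - 1) + 5 * tW K W ^ 2 * (tW K W - tau K X W)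
        + Q ^ 2 * (36 * (Q + 2) ^ 2) := by
    intro X hX
    have hτ := tau_le_tW hK hW hc hX
    have h := coverX hK hW hq (mem_XS.1 hX).1 (X := X) (by linarith)
    have h' := mul_le_mul_of_nonneg_left h (show 0 ≤ Q ^ 2 by positivity)
    refine h'.trans ?_
    rw [mul_add, mul_add]
    have hτ0 : (0:ℤ) ≤ tau K X W := by positivity
    have hsq : (tau K X W : ℤ) ^ 2 ≤ tW K W ^ 2 := pow_le_pow_left₀ hτ0 hτ 2
    have : Q ^ 2 * (if Q ^ 2 ≤ 5 * (Q * (Q ^ 2 + Q + 1) + 2 - sz K W - tau K X W) then (tau K X W : ℤ) ^ 2 else 0)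
        ≤ 5 * tW K W ^ 2 * (tW K W - tau K X W) := by
      split_ifs with hd
      · have e : 5 * (Q * (Q ^ 2 + Q + 1) + 2 - sz K W - tau K X W) = 5 * (tW K W - tau K X W) := by rw [tW]
        rw [e] at hd
        calc Q ^ 2 * (tau K X W : ℤ) ^ 2 ≤ (5 * (tW K W - tau K X W)) * tW K W ^ 2 :=
              mul_le_mul hd hsq (by positivity) (by linarith)
          _ = _ := by ring
      · rw [mul_zero]
        exact mul_nonneg (by positivity) (by linarith)
    linarith
  rw [h1]
  refine (mul_le_mul_of_nonneg_left (h2.trans (le_of_eq h3)) (by positivity)).trans ?_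
  rw [Finset.mul_sum]
  refine (Finset.sum_le_sum h4).trans (le_of_eq ?_)
  rw [Finset.sum_add_distrib, Finset.sum_add_distrib, ← Finset.mul_sum, ← Finset.mul_sum, sum_def hK hW,
    Finset.sum_const, nsmul_eq_mul, S0]
  ring

lemma full_sum [CharP F 2] {K : Finset (Submodule F V)} (hK : Cap K) {W : Submodule F V} (hW : fr W = 5)
    (hc : Comp K W) (ht : 8 * tW K W < 21 * Q ^ 2) (f g : Submodule F V → ℤ) (hfg : ∀ π, f π ≤ g π) (hg : ∀ π, 0 ≤ g π) :
    ∑ X ∈ XS K W, ∑ A ∈ fA K X W, ∑ π ∈ (plX X A).filter (fun π => dd K π < sz K π),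
      sz K π * (sz K π - 1) * f π ≤ 2 * ∑ π ∈ PL W, sz K π * (sz K π - 1) * (dd K π * g π) := by
  have hh : ∀ π, 0 ≤ sz K π * (sz K π - 1) * g π := fun π => mul_nonneg (szz_nonneg K π) (hg π)
  have h1 : ∀ X ∈ XS K W, ∑ A ∈ fA K X W, ∑ π ∈ (plX X A).filter (fun π => dd K π < sz K π),
      sz K π * (sz K π - 1) * f π ≤
      ∑ π ∈ (PL W).filter (fun π => X ∈ ex K π ∧ dd K π < sz K π), 2 * (sz K π * (sz K π - 1) * g π) := by
    intro X hX
    have hτ := tau_le_tW hK hW hc hX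
    refine (Finset.sum_le_sum fun A _ => Finset.sum_le_sum fun π _ =>
      mul_le_mul_of_nonneg_left (hfg π) (szz_nonneg K π)).trans ?_
    rw [Finset.sum_comm' (t' := (PL W).filter (fun π => X ∈ ex K π ∧ dd K π < sz K π))
      (s' := fun π => (fA K X W).filter fun A => π ≤ A)]
    · refine Finset.sum_le_sum fun π hπ => ?_
      obtain ⟨a, b, c⟩ := Finset.mem_filter.1 hπ
      rw [Finset.sum_const, nsmul_eq_mul]
      exact mul_le_mul_of_nonneg_right (by exact_mod_cast mult2 hK a b (by linarith)) (hh π)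
    · intro A π
      simp only [Finset.mem_filter, mem_fA, mem_plX, mem_PL]
      constructor
      · rintro ⟨⟨⟨a, b⟩, c, d⟩, ⟨e, f, g⟩, h⟩
        exact ⟨⟨⟨⟨a, b⟩, c, d⟩, f⟩, ⟨f.trans a, g⟩, ex_plX c (mem_plX.2 ⟨e, f, g⟩), h⟩
      · rintro ⟨⟨⟨⟨a, b⟩, c, d⟩, f⟩, ⟨g, h⟩, i, j⟩
        exact ⟨⟨⟨a, b⟩, c, d⟩, ⟨(mem_ex.1 i).2.1, f, h⟩, j⟩
  refine (Finset.sum_le_sum h1).trans ?_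
  rw [Finset.sum_comm' (t' := (PL W).filter (fun π => dd K π < sz K π)) (s' := fun π => ex K π)]
  · rw [Finset.mul_sum]
    refine le_trans ?_ (Finset.sum_le_sum_of_subset_of_nonneg (Finset.filter_subset (fun π => dd K π < sz K π) (PL W)) ?_)
    · refine Finset.sum_le_sum fun π hπ => ?_
      obtain ⟨a, b⟩ := Finset.mem_filter.1 hπ
      rw [Finset.sum_const, nsmul_eq_mul]
      have h := mul_le_mul_of_nonneg_right (card_ex_le hK (mem_PL.1 a).2 b) (mul_nonneg zero_le_two (hh π))
      refine h.trans (le_of_eq ?_)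
      ring
    · intro π hπ _
      have := dd_nonneg hK (mem_PL.1 hπ).2
      exact mul_nonneg zero_le_two (mul_nonneg (szz_nonneg K π) (mul_nonneg this (hg π)))
  · intro X π
    simp only [mem_XS, Finset.mem_filter, mem_PL]
    constructor
    · rintro ⟨⟨a, b, c⟩, d, e, f⟩; exact ⟨e, d, f⟩
    · rintro ⟨e, d, f⟩
      obtain ⟨x1, x2, x3, x4⟩ := mem_ex.1 e
      exact ⟨⟨x1, x2.trans d.1, x3⟩, d, e, f⟩

lemma omega_sum [CharP F 2] {K : Finset (Submodule F V)} (hK : Cap K) {W : Submodule F V} (hW : fr W = 5)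
    (hq : 2048 ≤ qq) :
    ∑ X ∈ XS K W, ∑ A ∈ fA K X W, 9 * Q ^ 4 * ((Q + 1) * (120 - (Q ^ 2 + 1 - sz K A)) - 3600) ≤
      36000 * ((Q + 1) * ∑ π ∈ PL W, sz K π * (sz K π - 1) * max (2 - dd K π) 0) := by
  have hQ : (2048:ℤ) ≤ Q := by exact_mod_cast hq
  rw [← flags hW, Finset.sum_comm' (t' := SL W) (s' := fun A => (XS K W).filter fun X => A ∈ fA K X W), Finset.mul_sum]
  · refine Finset.sum_le_sum fun A hA => ?_
    obtain ⟨hAW, hA4⟩ := mem_SL.1 hA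
    have hlow := dcount_ge hK A (fun π => max (2 - dd K π) 0) (max (Q + 1 - (Q ^ 2 + 1 - sz K A)) 0) (by
      intro m hm hmA hs
      apply max_le
      · have h1 : ∑ π ∈ cov m A, (2 - dd K π) ≤ ∑ π ∈ cov m A, max (2 - dd K π) 0 :=
          Finset.sum_le_sum fun π _ => le_max_left _ _
        rw [Finset.sum_sub_distrib, sum_dd hK hmA hs, Finset.sum_const, nsmul_eq_mul, card_cov1 hmA (by omega)] at h1
        push_cast at h1
        linarith
      · exact Finset.sum_nonneg fun π _ => le_max_right _ _)
    rw [Finset.sum_const, nsmul_eq_mul]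
    refine le_trans ?_ (mul_le_mul_of_nonneg_left hlow (show (0:ℤ) ≤ 36000 by decide))
    obtain ⟨e, he⟩ : ∃ e, e = Q ^ 2 + 1 - sz K A := ⟨_, rfl⟩
    have hκ : sz K A = Q ^ 2 + 1 - e := by linarith
    have hs0 := szz_nonneg K A
    have hRn : 0 ≤ 36000 * (sz K A * (sz K A - 1) * max (Q + 1 - (Q ^ 2 + 1 - sz K A)) 0) :=
      mul_nonneg (show (0:ℤ) ≤ 36000 by decide) (mul_nonneg hs0 (le_max_right _ _))
    by_cases hpos : 0 < (Q + 1) * (120 - e) - 3600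
    swap
    · refine le_trans ?_ hRn
      rw [← he]
      exact mul_nonpos_of_nonneg_of_nonpos (Int.natCast_nonneg _)
        (mul_nonpos_of_nonneg_of_nonpos (by positivity) (by linarith))
    have he120 : e < 120 := by
      by_contra h
      have : (Q + 1) * (120 - e) ≤ 0 := mul_nonpos_of_nonneg_of_nonpos (by linarith) (by linarith)
      linarith
    have hcle : (((XS K W).filter fun X => A ∈ fA K X W).card : ℤ) ≤ e := by
      have h1 : ((XS K W).filter fun X => A ∈ fA K X W) ⊆ ex K A := fun X hX =>
        (mem_fA.1 (Finset.mem_filter.1 hX).2).2.1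
      have h2 := card_ex_solid hK hA4 (by omega) (by rw [hκ]; nlinarith)
      have h3 : (((XS K W).filter fun X => A ∈ fA K X W).card : ℤ) ≤ (ex K A).card := by
        exact_mod_cast Finset.card_le_card h1
      linarith
    have he0 : 0 ≤ e := le_trans (Int.natCast_nonneg _) hcle
    have hk : 9 * Q ^ 4 ≤ 10 * (sz K A * (sz K A - 1)) := by
      rw [hκ]
      have h1 : 0 ≤ 120 - e := by linarith
      have : (Q ^ 2 - 119) * (Q ^ 2 - 120) ≤ (Q ^ 2 + 1 - e) * (Q ^ 2 + 1 - e - 1) :=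
        mul_le_mul (by linarith) (by linarith) (by nlinarith) (by nlinarith)
      nlinarith [show (2048:ℤ)^2 ≤ Q ^ 2 from pow_le_pow_left₀ (by norm_num) hQ 2]
    rw [← he]
    have hm : ((((XS K W).filter fun X => A ∈ fA K X W).card : ℤ)) * ((Q + 1) * (120 - e) - 3600) ≤
        3600 * max (Q + 1 - e) 0 := by
      refine (mul_le_mul_of_nonneg_right hcle hpos.le).trans ?_
      have : Q + 1 - e ≤ max (Q + 1 - e) 0 := le_max_left _ _
      have h2 : 0 ≤ (Q + 1) * (e - 60) ^ 2 := by positivity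
      nlinarith
    calc _ = 9 * Q ^ 4 * (((((XS K W).filter fun X => A ∈ fA K X W).card : ℤ)) * ((Q + 1) * (120 - e) - 3600)) := by ring
      _ ≤ 9 * Q ^ 4 * (3600 * max (Q + 1 - e) 0) := mul_le_mul_of_nonneg_left hm (by positivity)
      _ ≤ (10 * (sz K A * (sz K A - 1))) * (3600 * max (Q + 1 - e) 0) :=
          mul_le_mul_of_nonneg_right hk (mul_nonneg (by norm_num) (le_max_right _ _))
      _ = _ := by ring
  · intro X A
    simp only [Finset.mem_filter, mem_SL, mem_fA]
    tauto
end Glob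
end CapPf

namespace CapPf
open Classical
open Finset (univ filter card)
section Arith

lemma arithA {q Θ t : ℤ} (hq : 2048 ≤ q) (hΘ : 0 < Θ) (ht : 0 < t) (h : q * t < (3 * q - 100) * Θ)
    (hp : 0 ≤ q * t * (t - 1) + (q * Θ + 1 - t) * (-5 * t + 6 * Θ)) : q * t ≤ (2 * q + 10) * Θ := by
  by_contra hc
  push Not at hc
  have h2 : 2 * Θ < t := by nlinarith
  have h3 : t < 3 * Θ := by nlinarith
  have c1 : 0 ≤ (t - 2 * Θ) * (3 * Θ - t) := mul_nonneg (by linarith) (by linarith)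
  have c2 : 0 ≤ (q * t - (2 * q + 10) * Θ) * ((3 * q - 100) * Θ - q * t) := mul_nonneg (by linarith) (by linarith)
  have c3 : 0 ≤ q * (q * t * (t - 1) + (q * Θ + 1 - t) * (-5 * t + 6 * Θ)) := mul_nonneg (by linarith) hp
  have c4 : 0 ≤ q * ((t - 2 * Θ) * (3 * Θ - t)) := mul_nonneg (by linarith) c1
  have c5 : 0 < q * (5 * t + q * t - 6 * Θ) := mul_pos (by linarith) (by nlinarith)
  have c6 : 0 ≤ (q * t - (2 * q + 10) * Θ) * Θ := mul_nonneg (by linarith) hΘ.le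
  have c7 : 0 < (2 * q - 290) * Θ ^ 2 := mul_pos (by linarith) (by positivity)
  nlinarith

lemma arithB {q Θ t : ℤ} (hq : 2048 ≤ q) (hΘ : 0 < Θ) (ht : 0 < t)
    (hp : 0 ≤ q * t * (t - 1) + (q * Θ + 1 - t) * (-3 * t + 2 * Θ)) :
    q * t ≤ (q + 3) * Θ ∨ (2 * q - 10) * Θ ≤ q * t := by
  by_contra hc
  push Not at hc
  obtain ⟨hc1, hc2⟩ := hc
  have h2 : Θ < t := by nlinarith
  have h3 : t < 2 * Θ := by nlinarith
  have c1 : 0 ≤ (t - Θ) * (2 * Θ - t) := mul_nonneg (by linarith) (by linarith)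
  have c2 : 0 ≤ (q * t - (q + 3) * Θ) * ((2 * q - 10) * Θ - q * t) := mul_nonneg (by linarith) (by linarith)
  have c3 : 0 ≤ q * (q * t * (t - 1) + (q * Θ + 1 - t) * (-3 * t + 2 * Θ)) := mul_nonneg (by linarith) hp
  have c4 : 0 ≤ q * ((t - Θ) * (2 * Θ - t)) := mul_nonneg (by linarith) c1
  have c5 : 0 < q * (3 * t + q * t - 2 * Θ) := mul_pos (by linarith) (by nlinarith)
  have c6 : 0 ≤ (q * t - (q + 3) * Θ) * Θ := mul_nonneg (by linarith) hΘ.le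
  have c7 : 0 < (2 * q - 60) * Θ ^ 2 := mul_pos (by linarith) (by positivity)
  nlinarith

/-- bounds on second moments in case two -/
lemma arithC {q Θ t : ℤ} (hq : 2048 ≤ q) (hΘ : 0 < Θ) (h1 : (2 * q - 10) * Θ ≤ q * t)
    (h2 : q * t ≤ (2 * q + 10) * Θ) :
    q * t * (t - 1) + (q * Θ + 1 - t) * (-3 * t + 2 * Θ) ≤ 20 * Θ ^ 2 ∧
    q * t * (t - 1) + (q * Θ + 1 - t) * (-5 * t + 6 * Θ) ≤ 20 * Θ ^ 2 := by
  have hu : 200 * t ≤ 401 * Θ := by nlinarith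
  have hl : 399 * Θ ≤ 200 * t := by nlinarith
  have c1 : q * ((t - 2 * Θ) * (t - Θ)) ≤ 10 * Θ * (t - Θ) := by
    rw [← mul_assoc]; exact mul_le_mul_of_nonneg_right (by linarith) (by linarith)
  have c2 : q * ((2 * Θ - t) * (3 * Θ - t)) ≥ (-10 * Θ) * (3 * Θ - t) := by
    rw [← mul_assoc]; exact mul_le_mul_of_nonneg_right (by linarith) (by linarith)
  have c3 : q * ((2 * Θ - t) * (3 * Θ - t)) ≤ 10 * Θ * (3 * Θ - t) := by
    rw [← mul_assoc]; exact mul_le_mul_of_nonneg_right (by linarith) (by linarith)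
  have c5 : 0 < q * t + 3 * t - 2 * Θ := by nlinarith
  have c6 : 0 < q * t + 5 * t - 6 * Θ := by nlinarith
  have hs : 40000 * t ^ 2 ≤ 401 ^ 2 * Θ ^ 2 := by nlinarith
  constructor
  · nlinarith
  · nlinarith

lemma real_bounds {q Θ : ℝ} (hq : 2048 ≤ q) (hΘ : Θ = q ^ 2 + q + 1) : q ^ 2 ≤ Θ ∧ Θ ≤ 1.001 * q ^ 2 := by
  subst hΘ; constructor <;> nlinarith

/-- lower bound for `S` -/
lemma S_low {q t k S bad N D : ℝ} (hq : 2048 ≤ q) (ht0 : 0.98 * q ^ 2 ≤ t) (ht : t ≤ 2.01 * q ^ 2)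
    (hk : 0.99 * q ^ 3 ≤ k) (hD : D ≤ 1.1 * q ^ 3) (hN : N ≤ 2 * q ^ 4) (hbad : bad ≤ q ^ 7)
    (h : q ^ 2 * (k * (k - 1) * t - bad) ≤ q ^ 2 * S + 5 * t ^ 3 * D + q ^ 2 * (N * (36 * (q + 2) ^ 2))) :
    k * (k - 1) * t ≤ S + 0.03 * q ^ 8 := by
  have hq0 : 0 < q := by linarith
  have e1 : t ^ 3 * D ≤ (2.01 * q ^ 2) ^ 3 * (1.1 * q ^ 3) := by
    have h0 : 0 ≤ t := le_trans (by positivity) ht0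
    calc t ^ 3 * D ≤ t ^ 3 * (1.1 * q ^ 3) := mul_le_mul_of_nonneg_left hD (by positivity)
      _ ≤ _ := mul_le_mul_of_nonneg_right (pow_le_pow_left₀ h0 ht 3) (by positivity)
  have e2 : N * (36 * (q + 2) ^ 2) ≤ 2 * q ^ 4 * (36 * (2 * q) ^ 2) := by
    calc N * (36 * (q + 2) ^ 2) ≤ 2 * q ^ 4 * (36 * (q + 2) ^ 2) := mul_le_mul_of_nonneg_right hN (by positivity)
      _ ≤ _ := by gcongr; linarith
  have e3 : q ^ 2 * (k * (k - 1) * t) ≤ q ^ 2 * (S + 0.03 * q ^ 8) := by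
    have e4 : q ^ 2 * bad ≤ q ^ 2 * q ^ 7 := mul_le_mul_of_nonneg_left hbad (by positivity)
    have e5 : q ^ 2 * (N * (36 * (q + 2) ^ 2)) ≤ q ^ 2 * (2 * q ^ 4 * (36 * (2 * q) ^ 2)) :=
      mul_le_mul_of_nonneg_left e2 (by positivity)
    have e6 : 2048 * q ^ 9 ≤ q ^ 10 := by
      rw [pow_succ q 9, mul_comm]; exact mul_le_mul_of_nonneg_left hq (by positivity)
    have e7 : 2048 * q ^ 8 ≤ q ^ 9 := by
      rw [pow_succ q 8, mul_comm]; exact mul_le_mul_of_nonneg_left hq (by positivity)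
    have e8 : 0 < q ^ 8 := by positivity
    nlinarith
  exact le_of_mul_le_mul_left e3 (by positivity)

set_option maxHeartbeats 1600000 in
lemma final1 {q Θ t k S bad N D : ℝ} (hq : 2048 ≤ q) (hΘ : Θ = q ^ 2 + q + 1) (hk : k = q * Θ + 2 - t)
    (hN : N = q ^ 4 + q ^ 3 + q ^ 2 + q + 1 - k) (hD : D = (q + 1) * (t - 1) - q * Θ) (hD0 : 0 ≤ D)
    (ht : q * t ≤ (q + 3) * Θ) (hbad : 40 * bad ≤ k * t * D)
    (h : q ^ 2 * (k * (k - 1) * t - bad) ≤ q ^ 2 * S + 5 * t ^ 3 * D + q ^ 2 * (N * (36 * (q + 2) ^ 2)))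
    (hS : S ≤ 4 * (k * t * D)) : False := by
  have hq0 : 0 < q := by linarith
  obtain ⟨b1, b2⟩ := real_bounds hq hΘ
  have p3 : 2048 * q ^ 2 ≤ q ^ 3 := by
    rw [pow_succ q 2, mul_comm]; exact mul_le_mul_of_nonneg_left hq (by positivity)
  have p4 : 2048 * q ^ 3 ≤ q ^ 4 := by
    rw [pow_succ q 3, mul_comm]; exact mul_le_mul_of_nonneg_left hq (by positivity)
  have p2 : 2048 * q ≤ q ^ 2 := by
    rw [sq]; exact mul_le_mul_of_nonneg_right hq hq0.le
  have e6 : 2048 * q ^ 7 ≤ q ^ 8 := by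
    rw [pow_succ q 7, mul_comm]; exact mul_le_mul_of_nonneg_left hq (by positivity)
  have p7 : 2048 * q ^ 6 ≤ q ^ 7 := by
    rw [pow_succ q 6, mul_comm]; exact mul_le_mul_of_nonneg_left hq (by positivity)
  have qp : 0 < q ^ 6 := by positivity
  have t1 : 0.99 * q ^ 2 ≤ t := by
    have : (q + 1) * (0.99 * q ^ 2) ≤ (q + 1) * t := by subst hΘ; rw [hD] at hD0; nlinarith only [hD0, p3, p2, hq]
    exact le_of_mul_le_mul_left this (by linarith)
  have t2 : t ≤ 1.01 * q ^ 2 := by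
    have : q * t ≤ q * (1.01 * q ^ 2) := by subst hΘ; nlinarith only [ht, p3, p2, hq]
    exact le_of_mul_le_mul_left this (by linarith)
  have k1 : 0.99 * q ^ 3 ≤ k := by subst hΘ; rw [hk]; nlinarith only [t2, p3, p2, hq]
  have k2 : k ≤ 1.01 * q ^ 3 := by subst hΘ; rw [hk]; nlinarith only [t1, p3, p2, hq]
  have k0 : 0 ≤ k := le_trans (by positivity) k1
  have t0 : 0 ≤ t := le_trans (by positivity) t1
  have d1 : D ≤ 6 * q ^ 2 := by subst hΘ; rw [hD]; nlinarith only [ht, t2, p3, p2, hq]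
  have d2 : D ≤ 1.1 * q ^ 3 := by linarith
  have n1 : N ≤ 2 * q ^ 4 := by
    rw [hN]; linarith
  have m : k * t * D ≤ 1.01 * q ^ 3 * (1.01 * q ^ 2) * (6 * q ^ 2) := by gcongr
  have q7 : 0 < q ^ 7 := by positivity
  have bd : bad ≤ q ^ 7 := by
    have m' : 1.01 * q ^ 3 * (1.01 * q ^ 2) * (6 * q ^ 2) = 1.01 * 1.01 * 6 * q ^ 7 := by ring
    rw [m'] at m
    linarith
  have hl := S_low hq (by linarith) (by linarith) k1 d2 n1 bd h
  have lk : 0.99 * q ^ 3 * (0.98 * q ^ 3) * (0.99 * q ^ 2) ≤ k * (k - 1) * t := by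
    have : 0.98 * q ^ 3 ≤ k - 1 := by linarith
    have h1 : 0 ≤ k - 1 := le_trans (by positivity) this
    gcongr
  have lk' : 0.99 * q ^ 3 * (0.98 * q ^ 3) * (0.99 * q ^ 2) = 0.99 * 0.98 * 0.99 * q ^ 8 := by ring
  have m' : 1.01 * q ^ 3 * (1.01 * q ^ 2) * (6 * q ^ 2) = 1.01 * 1.01 * 6 * q ^ 7 := by ring
  rw [lk'] at lk
  rw [m'] at m
  linarith

set_option maxHeartbeats 1600000 in
lemma final2 {q Θ t k S bad N D nF Ee Om : ℝ} (hq : 2048 ≤ q) (hΘ : Θ = q ^ 2 + q + 1) (hk : k = q * Θ + 2 - t)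
    (hN : N = q ^ 4 + q ^ 3 + q ^ 2 + q + 1 - k) (hD : D = (q + 1) * (t - 1) - q * Θ)
    (ht1 : (2 * q - 10) * Θ ≤ q * t) (ht2 : q * t ≤ (2 * q + 10) * Θ) (hbad : 40 * bad ≤ 20 * (k * Θ ^ 2))
    (h : q ^ 2 * (k * (k - 1) * t - bad) ≤ q ^ 2 * S + 5 * t ^ 3 * D + q ^ 2 * (N * (36 * (q + 2) ^ 2)))
    (hS : S ≤ nF * ((q ^ 2 + 1) * q ^ 2)) (hE : (q + 1) * q ^ 2 * (7 * Ee - 20 * nF) ≤ 600 * (k * Θ ^ 2))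
    (hOm : Om ≤ 10 * (k * Θ ^ 2))
    (hO : 9 * q ^ 4 * ((q + 1) * (120 * nF - Ee) - 3600 * nF) ≤ 36000 * ((q + 1) * Om)) : False := by
  have hq0 : 0 < q := by linarith
  obtain ⟨b1, b2⟩ := real_bounds hq hΘ
  have p3 : 2048 * q ^ 2 ≤ q ^ 3 := by
    rw [pow_succ q 2, mul_comm]; exact mul_le_mul_of_nonneg_left hq (by positivity)
  have p4 : 2048 * q ^ 3 ≤ q ^ 4 := by
    rw [pow_succ q 3, mul_comm]; exact mul_le_mul_of_nonneg_left hq (by positivity)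
  have p2 : 2048 * q ≤ q ^ 2 := by
    rw [sq]; exact mul_le_mul_of_nonneg_right hq hq0.le
  have e6 : 2048 * q ^ 7 ≤ q ^ 8 := by
    rw [pow_succ q 7, mul_comm]; exact mul_le_mul_of_nonneg_left hq (by positivity)
  have p7 : 2048 * q ^ 6 ≤ q ^ 7 := by
    rw [pow_succ q 6, mul_comm]; exact mul_le_mul_of_nonneg_left hq (by positivity)
  have qp : 0 < q ^ 6 := by positivity
  have t1 : 1.99 * q ^ 2 ≤ t := by
    have : q * (1.99 * q ^ 2) ≤ q * t := by subst hΘ; nlinarith only [ht1, p3, p2, hq]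
    exact le_of_mul_le_mul_left this (by linarith)
  have t2 : t ≤ 2.01 * q ^ 2 := by
    have : q * t ≤ q * (2.01 * q ^ 2) := by subst hΘ; nlinarith only [ht2, p3, p2, hq]
    exact le_of_mul_le_mul_left this (by linarith)
  have k1 : 0.99 * q ^ 3 ≤ k := by subst hΘ; rw [hk]; nlinarith only [t2, p3, p2, hq]
  have k2 : k ≤ q ^ 3 := by subst hΘ; rw [hk]; nlinarith only [t1, p3, p2, hq]
  have k0 : 0 ≤ k := le_trans (by positivity) k1
  have t0 : 0 ≤ t := le_trans (by positivity) t1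
  have d2 : D ≤ 1.1 * q ^ 3 := by subst hΘ; rw [hD]; nlinarith only [ht2, t2, p3, p2, hq]
  have n1 : N ≤ 2 * q ^ 4 := by
    rw [hN]; linarith
  have Θ0 : 0 ≤ Θ := le_trans (by positivity) b1
  have m : k * Θ ^ 2 ≤ q ^ 3 * (1.001 * q ^ 2) ^ 2 := by gcongr
  have q7 : 0 < q ^ 7 := by positivity
  have m' : k * Θ ^ 2 ≤ 1.01 * q ^ 7 := by
    refine m.trans ?_
    rw [show q ^ 3 * (1.001 * q ^ 2) ^ 2 = 1.001 ^ 2 * q ^ 7 by ring]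
    exact mul_le_mul_of_nonneg_right (by norm_num) q7.le
  have bd : bad ≤ q ^ 7 := by linarith
  have hl := S_low hq (by linarith) (by linarith) k1 d2 n1 bd h
  have lk : 0.99 * q ^ 3 * (0.98 * q ^ 3) * (1.99 * q ^ 2) ≤ k * (k - 1) * t := by
    have : 0.98 * q ^ 3 ≤ k - 1 := by linarith
    have h1 : 0 ≤ k - 1 := le_trans (by positivity) this
    gcongr
  have q4 : 0 < q ^ 4 := by positivity
  have q3 : 0 < q ^ 3 := by positivity
  have S1 : 1.85 * q ^ 8 ≤ S := by
    rw [show 0.99 * q ^ 3 * (0.98 * q ^ 3) * (1.99 * q ^ 2) = 0.99 * 0.98 * 1.99 * q ^ 8 by ring] at lk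
    linarith
  have nF1 : 1.8 * q ^ 4 ≤ nF := by
    have hpos : 0 < (q ^ 2 + 1) * q ^ 2 := by positivity
    refine le_of_mul_le_mul_right (le_trans ?_ hS) hpos
    refine le_trans ?_ S1
    rw [show 1.8 * q ^ 4 * ((q ^ 2 + 1) * q ^ 2) = 1.8 * q ^ 8 + 1.8 * q ^ 6 by ring]
    linarith
  have E1 : 7 * Ee ≤ 20 * nF + 606 * q ^ 4 := by
    have h3 : q ^ 3 * (7 * Ee - 20 * nF) ≤ q ^ 3 * (606 * q ^ 4) := by
      rcases le_or_gt (7 * Ee - 20 * nF) 0 with hle | hgt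
      · have : q ^ 3 * (7 * Ee - 20 * nF) ≤ 0 := mul_nonpos_of_nonneg_of_nonpos q3.le hle
        have : 0 ≤ q ^ 3 * (606 * q ^ 4) := by positivity
        linarith
      · have : q ^ 3 * (7 * Ee - 20 * nF) ≤ (q + 1) * q ^ 2 * (7 * Ee - 20 * nF) := by
          apply mul_le_mul_of_nonneg_right _ hgt.le
          nlinarith only [sq_nonneg q]
        rw [show q ^ 3 * (606 * q ^ 4) = 606 * q ^ 7 by ring]
        linarith
    have := le_of_mul_le_mul_left h3 q3
    linarith
  have nF0 : 0 < nF := lt_of_lt_of_le (by positivity) nF1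
  have E2 : Ee ≤ 51 * nF := by linarith
  have O1 : (q + 1) * (69 * nF) - 3600 * nF ≤ (q + 1) * (120 * nF - Ee) - 3600 * nF := by
    have : (q + 1) * (69 * nF) ≤ (q + 1) * (120 * nF - Ee) := mul_le_mul_of_nonneg_left (by linarith) (by linarith)
    linarith
  have O2 : 60 * nF * (q + 1) ≤ (q + 1) * (120 * nF - Ee) - 3600 * nF := by nlinarith only [O1, nF0, hq]
  have O3 : 60 * (1.8 * q ^ 4) * (q + 1) ≤ 60 * nF * (q + 1) := by gcongr
  have O4 : 9 * q ^ 4 * (60 * (1.8 * q ^ 4) * (q + 1)) ≤ 36000 * ((q + 1) * (10 * (1.01 * q ^ 7))) := by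
    calc _ ≤ 9 * q ^ 4 * ((q + 1) * (120 * nF - Ee) - 3600 * nF) := by
          apply mul_le_mul_of_nonneg_left _ (by positivity); linarith
      _ ≤ 36000 * ((q + 1) * Om) := hO
      _ ≤ _ := by
          have : (q + 1) * Om ≤ (q + 1) * (10 * (1.01 * q ^ 7)) :=
            mul_le_mul_of_nonneg_left (by linarith) (by linarith)
          linarith
  have O5 : (972 * q) * (q ^ 7 * (q + 1)) ≤ 363600 * (q ^ 7 * (q + 1)) := by linarith only [O4]
  have := le_of_mul_le_mul_right O5 (by positivity)
  linarith
end Arith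
end CapPf

namespace CapPf
open Classical
open Finset (univ filter card)
section Dim5
variable {F : Type*} [Field F] [Fintype F] {V : Type*} [AddCommGroup V] [Module F V] [Finite V]
local notation "qq" => Fintype.card F
local notation "Q" => (Fintype.card F : ℤ)

lemma quad [CharP F 2] {K : Finset (Submodule F V)} (hK : Cap K) {W : Submodule F V} (hW : (fr W) = 5)
    (hc : Comp K W) (b a : ℤ) :
    ∑ π ∈ PL W, sz K π * (sz K π - 1) * (dd K π ^ 2 + b * dd K π + a) ≤
      sz K W * (Q * tW K W * (tW K W - 1) + (Q * (Q ^ 2 + Q + 1) + 1 - tW K W) * (b * tW K W + a * (Q ^ 2 + Q + 1))) := by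
  have h1 := sum_one5 hK hW
  have h2 := sum_dd5 hK hW
  have h3 := gsq hK hW hc
  have h4 : ∑ π ∈ PL W, sz K π * (sz K π - 1) * (dd K π ^ 2 + b * dd K π + a) =
      ∑ π ∈ PL W, sz K π * (sz K π - 1) * dd K π ^ 2 + b * ∑ π ∈ PL W, sz K π * (sz K π - 1) * dd K π
        + a * ∑ π ∈ PL W, sz K π * (sz K π - 1) * 1 := by
    rw [Finset.mul_sum, Finset.mul_sum, ← Finset.sum_add_distrib, ← Finset.sum_add_distrib]
    exact Finset.sum_congr rfl fun π _ => by ring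
  have h5 : Q * (Q ^ 2 + Q + 1) + 1 - tW K W = sz K W - 1 := by rw [tW]; ring
  have h6 : Q * (Q ^ 2 + Q + 1) + 2 - sz K W = tW K W := by rw [tW]
  rw [h4, h1, h2, h5, h6]
  linarith

lemma dpos {K : Finset (Submodule F V)} (hK : Cap K) {W π : Submodule F V} (hπ : π ∈ PL W) : 0 ≤ dd K π :=
  dd_nonneg hK (mem_PL.1 hπ).2

lemma int_prod (d c : ℤ) : 0 ≤ (d - c) * (d - (c + 1)) := by
  rcases le_or_gt d c with h | h
  · exact mul_nonneg_of_nonpos_of_nonpos (by linarith) (by linarith)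
  · exact mul_nonneg (by linarith) (by linarith)

lemma bad_d {q d : ℤ} (hq : 2048 ≤ q) (hd : 0 ≤ d) (h : ¬ d * (d - 1) < q) :
    40 * d ≤ d * (d - 1) ∧ 40 * d ≤ (d - 1) * (d - 2) := by
  have : 45 ≤ d := by
    by_contra hc
    push Not at hc
    have : d * (d - 1) ≤ 44 * 44 := by nlinarith
    omega
  constructor <;> nlinarith

lemma bad_le {K : Finset (Submodule F V)} (hK : Cap K) {W : Submodule F V} (hq : 2048 ≤ qq) :
    40 * badW K W ≤ ∑ π ∈ PL W, sz K π * (sz K π - 1) * (dd K π * (dd K π - 1)) ∧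
    40 * badW K W ≤ ∑ π ∈ PL W, sz K π * (sz K π - 1) * ((dd K π - 1) * (dd K π - 2)) := by
  have hQ : (2048:ℤ) ≤ Q := by exact_mod_cast hq
  rw [badW, Finset.mul_sum]
  constructor
  · refine le_trans (Finset.sum_le_sum (g := fun π => sz K π * (sz K π - 1) * (dd K π * (dd K π - 1))) ?_)
      (Finset.sum_le_sum_of_subset_of_nonneg (Finset.filter_subset _ _) ?_)
    · intro π hπ
      obtain ⟨h1, h2⟩ := Finset.mem_filter.1 hπ
      have := mul_le_mul_of_nonneg_left (bad_d hQ (dpos hK h1) h2).1 (szz_nonneg K π)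
      linarith
    · intro π _ _
      have := int_prod (dd K π) 0
      exact mul_nonneg (szz_nonneg K π) (by simpa using this)
  · refine le_trans (Finset.sum_le_sum (g := fun π => sz K π * (sz K π - 1) * ((dd K π - 1) * (dd K π - 2))) ?_)
      (Finset.sum_le_sum_of_subset_of_nonneg (Finset.filter_subset _ _) ?_)
    · intro π hπ
      obtain ⟨h1, h2⟩ := Finset.mem_filter.1 hπ
      have := mul_le_mul_of_nonneg_left (bad_d hQ (dpos hK h1) h2).2 (szz_nonneg K π)
      linarith
    · intro π _ _
      exact mul_nonneg (szz_nonneg K π) (int_prod (dd K π) 1)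

/-- case one: bound on `S0` -/
lemma S0_case1 [CharP F 2] {K : Finset (Submodule F V)} (hK : Cap K) {W : Submodule F V} (hW : (fr W) = 5)
    (hc : Comp K W) (hq : 2048 ≤ qq) (ht : 8 * tW K W < 21 * Q ^ 2) :
    S0 K W ≤ 4 * ∑ π ∈ PL W, sz K π * (sz K π - 1) * (dd K π * (dd K π - 1)) := by
  have hQ : (2048:ℤ) ≤ Q := by exact_mod_cast hq
  have h := full_sum hK hW hc ht (fun π => dd K π - 1) (fun π => max (dd K π - 1) 0)
    (fun π => le_max_left _ _) (fun π => le_max_right _ _)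
  have h1 : ∑ π ∈ PL W, sz K π * (sz K π - 1) * (dd K π * max (dd K π - 1) 0) =
      ∑ π ∈ PL W, sz K π * (sz K π - 1) * (dd K π * (dd K π - 1)) := by
    refine Finset.sum_congr rfl fun π hπ => ?_
    congr 1
    rcases (dpos hK hπ).eq_or_lt with h0 | h0
    · rw [← h0]; simp
    · rw [max_eq_left (by linarith)]
  rw [h1] at h
  have h2 : S0 K W ≤ 2 * ∑ X ∈ XS K W, ∑ A ∈ fA K X W, ∑ π ∈ (plX X A).filter (fun π => dd K π < sz K π),
      sz K π * (sz K π - 1) * (dd K π - 1) := by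
    rw [S0, Finset.mul_sum]
    refine Finset.sum_le_sum fun X hX => ?_
    rw [Finset.mul_sum]
    refine Finset.sum_le_sum fun A hA => ?_
    obtain ⟨⟨a1, a2⟩, a3, a4⟩ := mem_fA.1 hA
    have hs := (S3 hK a3 a2).2
    have hqv := qvist hK a2 (by omega)
    rw [tA] at a4
    have hk0 := sz_nonneg K A
    obtain ⟨E, hE⟩ : ∃ E, E = Q ^ 2 + Q + 1 - sz K A := ⟨_, rfl⟩
    rw [← hE] at hs
    have e1 : Q ≤ E := by linarith
    have e2 : 8 * (E + 1) ≤ Q ^ 2 := by linarith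
    have e3 : sz K A * (sz K A - 1) ≤ (Q ^ 2 + 1) * Q ^ 2 := by nlinarith
    have e4 : Q * (Q ^ 2 - Q - 2 * E) ≤ E * (Q ^ 2 - Q - 2 * E) :=
      mul_le_mul_of_nonneg_right e1 (by nlinarith)
    have e5 : (Q + 1) * (Q * (Q ^ 2 - Q - 2 * E)) ≤ (Q + 1) * (E * (Q ^ 2 - Q - 2 * E)) :=
      mul_le_mul_of_nonneg_left e4 (by linarith)
    have e6 : 3 * Q ^ 2 - 4 * Q ≤ 4 * (Q ^ 2 - Q - 2 * E) := by linarith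
    have e7 : (Q + 1) * Q * (3 * Q ^ 2 - 4 * Q) ≤ (Q + 1) * Q * (4 * (Q ^ 2 - Q - 2 * E)) :=
      mul_le_mul_of_nonneg_left e6 (by nlinarith)
    have e8 : 2 * ((Q ^ 2 + 1) * Q ^ 2) ≤ (Q + 1) * Q * (3 * Q ^ 2 - 4 * Q) := by
      have : 0 ≤ Q ^ 2 * (Q ^ 2 - Q - 6) := mul_nonneg (by positivity) (by nlinarith)
      linarith
    linarith
  linarith

set_option maxHeartbeats 800000 in
lemma E_case2 [CharP F 2] {K : Finset (Submodule F V)} (hK : Cap K) {W : Submodule F V} (hW : (fr W) = 5)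
    (hc : Comp K W) (hq : 2048 ≤ qq) (ht : 8 * tW K W < 21 * Q ^ 2) :
    ∑ X ∈ XS K W, ∑ A ∈ fA K X W, (Q + 1) * Q ^ 2 * (7 * (Q ^ 2 + 1 - sz K A) - 20)
      ≤ 30 * ∑ π ∈ PL W, sz K π * (sz K π - 1) * ((dd K π - 1) * (dd K π - 2)) := by
  have hQ : (2048:ℤ) ≤ Q := by exact_mod_cast hq
  have h := full_sum hK hW hc ht (fun π => dd K π - 2) (fun π => max (dd K π - 2) 0)
    (fun π => le_max_left _ _) (fun π => le_max_right _ _)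
  have h1 : 2 * ∑ π ∈ PL W, sz K π * (sz K π - 1) * (dd K π * max (dd K π - 2) 0) ≤
      3 * ∑ π ∈ PL W, sz K π * (sz K π - 1) * ((dd K π - 1) * (dd K π - 2)) := by
    rw [Finset.mul_sum, Finset.mul_sum]
    refine Finset.sum_le_sum fun π hπ => ?_
    have : 2 * (dd K π * max (dd K π - 2) 0) ≤ 3 * ((dd K π - 1) * (dd K π - 2)) := by
      rcases le_or_gt (dd K π) 2 with h0 | h0
      · rw [max_eq_right (by linarith)]
        have := int_prod (dd K π) 1
        linarith
      · rw [max_eq_left (by linarith)]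
        nlinarith
    have := mul_le_mul_of_nonneg_left this (szz_nonneg K π)
    linarith
  have h2 : ∑ X ∈ XS K W, ∑ A ∈ fA K X W, (Q + 1) * Q ^ 2 * (7 * (Q ^ 2 + 1 - sz K A) - 20) ≤
      10 * ∑ X ∈ XS K W, ∑ A ∈ fA K X W, ∑ π ∈ (plX X A).filter (fun π => dd K π < sz K π),
      sz K π * (sz K π - 1) * (dd K π - 2) := by
    rw [Finset.mul_sum]
    refine Finset.sum_le_sum fun X hX => ?_
    rw [Finset.mul_sum]
    refine Finset.sum_le_sum fun A hA => ?_
    obtain ⟨⟨a1, a2⟩, a3, a4⟩ := mem_fA.1 hA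
    have hs := (S3 hK a3 a2).1
    have hqv := qvist hK a2 (by omega)
    rw [tA] at a4
    obtain ⟨e, he⟩ : ∃ e, e = Q ^ 2 + 1 - sz K A := ⟨_, rfl⟩
    have hE : Q ^ 2 + Q + 1 - sz K A = Q + e := by linarith
    rw [hE] at hs
    rw [← he]
    have e0 : 0 ≤ e := by linarith
    have e2 : 8 * (Q + e + 1) ≤ Q ^ 2 := by linarith
    have e3 : 0 ≤ e * (3 * Q ^ 2 - 30 * Q + 20 - 20 * e) := mul_nonneg e0 (by nlinarith)
    have e4 : Q ^ 2 * (7 * e - 20) ≤ 10 * ((Q + 2) * (Q + 1) * (Q + e) - Q * (Q ^ 2 + Q + 1) - 2 * (Q + e) * (Q + e + Q)) := by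
      linarith
    have e5 := mul_le_mul_of_nonneg_left e4 (show 0 ≤ Q + 1 by linarith)
    linarith
  linarith

lemma S0_case2 [CharP F 2] {K : Finset (Submodule F V)} (hK : Cap K) {W : Submodule F V} (hq : 2048 ≤ qq) :
    S0 K W ≤ (∑ X ∈ XS K W, ∑ A ∈ fA K X W, 1) * ((Q ^ 2 + 1) * Q ^ 2) := by
  rw [S0, Finset.sum_mul]
  refine Finset.sum_le_sum fun X hX => ?_
  rw [Finset.sum_mul]
  refine Finset.sum_le_sum fun A hA => ?_
  have hqv := qvist hK (mem_fA.1 hA).1.2 (by omega)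
  have hk0 := sz_nonneg K A
  have : 0 ≤ Q ^ 2 := by positivity
  nlinarith

lemma om_case2 {K : Finset (Submodule F V)} (hK : Cap K) {W : Submodule F V} :
    2 * ∑ π ∈ PL W, sz K π * (sz K π - 1) * max (2 - dd K π) 0 ≤
      ∑ π ∈ PL W, sz K π * (sz K π - 1) * ((dd K π - 2) * (dd K π - 3)) := by
  rw [Finset.mul_sum]
  refine Finset.sum_le_sum fun π hπ => ?_
  have : 2 * max (2 - dd K π) 0 ≤ (dd K π - 2) * (dd K π - 3) := by
    rcases le_or_gt (dd K π) 2 with h0 | h0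
    · rw [max_eq_left (by linarith)]
      have := int_prod (dd K π) 1
      nlinarith
    · rw [max_eq_right (by linarith)]
      have := int_prod (dd K π) 2
      linarith
  have := mul_le_mul_of_nonneg_left this (szz_nonneg K π)
  linarith

set_option maxHeartbeats 800000 in
theorem dim5 [CharP F 2] {K : Finset (Submodule F V)} (hK : Cap K) {W : Submodule F V} (hW : (fr W) = 5)
    (hc : Comp K W) (hq : 2048 ≤ qq) : (3 * Q - 100) * (Q ^ 2 + Q + 1) ≤ Q * tW K W := by
  by_contra hcon
  push Not at hcon
  have hQ : (2048:ℤ) ≤ Q := by exact_mod_cast hq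
  have hΘ : (0:ℤ) < Q ^ 2 + Q + 1 := by positivity
  have htW : tW K W = Q * (Q ^ 2 + Q + 1) + 2 - sz K W := rfl
  have ht3 : tW K W < 3 * (Q ^ 2 + Q + 1) := by nlinarith
  have hk2 : 2 ≤ sz K W := by nlinarith
  have ht1 := tW_pos hK hW (by omega) hk2
  have hk0 : 0 < sz K W := by linarith
  have qA := quad hK hW hc (-5) 6
  have qB := quad hK hW hc (-3) 2
  have sA : ∑ π ∈ PL W, sz K π * (sz K π - 1) * (dd K π ^ 2 + (-5) * dd K π + 6) =
      ∑ π ∈ PL W, sz K π * (sz K π - 1) * ((dd K π - 2) * (dd K π - 3)) :=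
    Finset.sum_congr rfl fun π _ => by ring
  have sB : ∑ π ∈ PL W, sz K π * (sz K π - 1) * (dd K π ^ 2 + (-3) * dd K π + 2) =
      ∑ π ∈ PL W, sz K π * (sz K π - 1) * ((dd K π - 1) * (dd K π - 2)) :=
    Finset.sum_congr rfl fun π _ => by ring
  rw [sA] at qA
  rw [sB] at qB
  have pA : 0 ≤ ∑ π ∈ PL W, sz K π * (sz K π - 1) * ((dd K π - 2) * (dd K π - 3)) :=
    Finset.sum_nonneg fun π _ => mul_nonneg (szz_nonneg K π) (int_prod (dd K π) 2)
  have pB : 0 ≤ ∑ π ∈ PL W, sz K π * (sz K π - 1) * ((dd K π - 1) * (dd K π - 2)) :=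
    Finset.sum_nonneg fun π _ => mul_nonneg (szz_nonneg K π) (int_prod (dd K π) 1)
  have rA := arithA hQ hΘ (by linarith) hcon (le_of_mul_le_mul_left (by rw [mul_zero]; exact pA.trans qA) hk0)
  have rB := arithB (t := tW K W) hQ hΘ (by linarith) (le_of_mul_le_mul_left (by rw [mul_zero]; exact pB.trans qB) hk0)
  have ht : 8 * tW K W < 21 * Q ^ 2 := by nlinarith
  have hd0 : 0 ≤ dW K W := by
    have h1 := sum_def hK hW
    have h2 : 0 ≤ ∑ X ∈ XS K W, (tW K W - tau K X W) := Finset.sum_nonneg fun X hX => by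
      have := tau_le_tW hK hW hc hX
      linarith
    rw [h1] at h2
    exact nonneg_of_mul_nonneg_right h2 (by linarith)
  have hS0 := S0_ge hK hW hc hq ht
  rw [card_XS hK hW] at hS0
  obtain ⟨b1, b2⟩ := bad_le (W := W) hK hq
  have hdW : dW K W = (Q + 1) * (tW K W - 1) - Q * (Q ^ 2 + Q + 1) := rfl
  have hkk : sz K W = Q * (Q ^ 2 + Q + 1) + 2 - tW K W := by rw [htW]; ring
  rcases rB with rB | rB
  · have h1 := S0_case1 hK hW hc hq ht
    have q1 := quad hK hW hc (-1) 0
    have s1 : ∑ π ∈ PL W, sz K π * (sz K π - 1) * (dd K π ^ 2 + (-1) * dd K π + 0) =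
        ∑ π ∈ PL W, sz K π * (sz K π - 1) * (dd K π * (dd K π - 1)) :=
      Finset.sum_congr rfl fun π _ => by ring
    rw [s1] at q1
    have q2 : ∑ π ∈ PL W, sz K π * (sz K π - 1) * (dd K π * (dd K π - 1)) ≤ sz K W * tW K W * dW K W := by
      refine q1.trans (le_of_eq ?_)
      rw [hdW]; ring
    refine final1 (q := (Q:ℝ)) (Θ := ((Q ^ 2 + Q + 1 : ℤ) : ℝ)) (t := ((tW K W : ℤ) : ℝ)) (k := ((sz K W : ℤ) : ℝ)) (S := ((S0 K W : ℤ) : ℝ))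
      (bad := ((badW K W : ℤ) : ℝ)) (N := ((Q ^ 4 + Q ^ 3 + Q ^ 2 + Q + 1 - sz K W : ℤ) : ℝ)) (D := ((dW K W : ℤ) : ℝ))
      ?_ ?_ ?_ ?_ ?_ ?_ ?_ ?_ ?_ ?_
    · exact_mod_cast hQ
    · push_cast; ring
    · exact_mod_cast hkk
    · push_cast; ring
    · exact_mod_cast hdW
    · exact_mod_cast hd0
    · exact_mod_cast rB
    · exact_mod_cast b1.trans q2
    · exact_mod_cast hS0
    · exact_mod_cast h1.trans (by linarith)
  · obtain ⟨c1, c2⟩ := arithC hQ hΘ rB rA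
    have G2 := qB.trans (mul_le_mul_of_nonneg_left c1 hk0.le)
    have G3 := qA.trans (mul_le_mul_of_nonneg_left c2 hk0.le)
    have om := om_case2 (W := W) hK
    have hO := omega_sum hK hW hq
    have hE := E_case2 hK hW hc hq ht
    have hS := S0_case2 (W := W) hK hq
    obtain ⟨nF, hnF⟩ : ∃ nF : ℤ, nF = ∑ X ∈ XS K W, ∑ A ∈ fA K X W, 1 := ⟨_, rfl⟩
    obtain ⟨Ee, hEe⟩ : ∃ Ee : ℤ, Ee = ∑ X ∈ XS K W, ∑ A ∈ fA K X W, (Q ^ 2 + 1 - sz K A) := ⟨_, rfl⟩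
    obtain ⟨Om, hOm⟩ : ∃ Om : ℤ, Om = ∑ π ∈ PL W, sz K π * (sz K π - 1) * max (2 - dd K π) 0 := ⟨_, rfl⟩
    rw [← hnF] at hS
    rw [← hOm] at hO om
    have lin : ∀ x y : ℤ, ∑ X ∈ XS K W, ∑ A ∈ fA K X W, (x * (Q ^ 2 + 1 - sz K A) + y * 1) = x * Ee + y * nF := by
      intro x y
      rw [hnF, hEe]
      simp only [Finset.sum_add_distrib, ← Finset.mul_sum]
    have hE' : (Q + 1) * Q ^ 2 * (7 * Ee - 20 * nF) ≤ 600 * (sz K W * (Q ^ 2 + Q + 1) ^ 2) := by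
      have := lin ((Q + 1) * Q ^ 2 * 7) (-((Q + 1) * Q ^ 2 * 20))
      have e : ∑ X ∈ XS K W, ∑ A ∈ fA K X W, (Q + 1) * Q ^ 2 * (7 * (Q ^ 2 + 1 - sz K A) - 20) =
        (Q + 1) * Q ^ 2 * 7 * Ee + (-((Q + 1) * Q ^ 2 * 20)) * nF := by
        rw [← this]
        exact Finset.sum_congr rfl fun X _ => Finset.sum_congr rfl fun A _ => by ring
      rw [e] at hE
      linarith
    have hO' : 9 * Q ^ 4 * ((Q + 1) * (120 * nF - Ee) - 3600 * nF) ≤ 36000 * ((Q + 1) * Om) := by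
      have := lin (-(9 * Q ^ 4 * (Q + 1))) (9 * Q ^ 4 * ((Q + 1) * 120 - 3600))
      have e : ∑ X ∈ XS K W, ∑ A ∈ fA K X W, 9 * Q ^ 4 * ((Q + 1) * (120 - (Q ^ 2 + 1 - sz K A)) - 3600) =
        (-(9 * Q ^ 4 * (Q + 1))) * Ee + (9 * Q ^ 4 * ((Q + 1) * 120 - 3600)) * nF := by
        rw [← this]
        exact Finset.sum_congr rfl fun X _ => Finset.sum_congr rfl fun A _ => by ring
      rw [e] at hO
      linarith
    have bb : 40 * badW K W ≤ 20 * (sz K W * (Q ^ 2 + Q + 1) ^ 2) := by linarith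
    have oo : Om ≤ 10 * (sz K W * (Q ^ 2 + Q + 1) ^ 2) := by linarith
    refine final2 (q := (Q:ℝ)) (Θ := ((Q ^ 2 + Q + 1 : ℤ) : ℝ)) (t := ((tW K W : ℤ) : ℝ)) (k := ((sz K W : ℤ) : ℝ)) (S := ((S0 K W : ℤ) : ℝ))
      (bad := ((badW K W : ℤ) : ℝ)) (N := ((Q ^ 4 + Q ^ 3 + Q ^ 2 + Q + 1 - sz K W : ℤ) : ℝ)) (D := ((dW K W : ℤ) : ℝ))
      (nF := (nF : ℝ)) (Ee := (Ee : ℝ)) (Om := (Om : ℝ))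
      ?_ ?_ ?_ ?_ ?_ ?_ ?_ ?_ ?_ ?_ ?_ ?_ ?_
    · exact_mod_cast hQ
    · push_cast; ring
    · exact_mod_cast hkk
    · push_cast; ring
    · exact_mod_cast hdW
    · exact_mod_cast rB
    · exact_mod_cast rA
    · exact_mod_cast bb
    · exact_mod_cast hS0
    · exact_mod_cast hS
    · exact_mod_cast hE'
    · exact_mod_cast oo
    · exact_mod_cast hO'
end Dim5
end CapPf

namespace CapPf
open Classical
open Finset (univ filter card)
section High
variable {F : Type*} [Field F] [Fintype F] {V : Type*} [AddCommGroup V] [Module F V] [Finite V]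
local notation "qq" => Fintype.card F
local notation "Q" => (Fintype.card F : ℤ)

lemma dim5_all [CharP F 2] {K : Finset (Submodule F V)} (hK : Cap K) {W : Submodule F V} (hW : fr W = 5)
    (hq : 2048 ≤ qq) : Q * (sz K W - 2) ≤ (Q ^ 2 - 3 * Q + 100) * (Q ^ 2 + Q + 1) := by
  obtain ⟨C, h1, h2, h3, h4⟩ := exists_complete (hK.sub (Finset.filter_subset _ _) : Cap (sec K W))
    (fun P hP => (mem_sec.1 hP).2)
  have hd := dim5 h2 hW h4 hq
  have hle : sz K W ≤ sz C W := by
    simp only [sz]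
    norm_cast
    exact Finset.card_le_card fun P hP => mem_sec.2 ⟨h1 hP, (mem_sec.1 hP).2⟩
  have hQ : (2048:ℤ) ≤ Q := by exact_mod_cast hq
  rw [tW] at hd
  nlinarith

/-- one step of the greedy choice of a rich subspace -/
lemma greedy {K : Finset (Submodule F V)} (hK : Cap K) {U W : Submodule F V} (hUW : U ≤ W) (i N : ℕ)
    (hU : fr U = i + 2) (hW : fr W = N + 2) (hi : i < N) (hk : 0 ≤ sz K W - 2)
    (h : (sz K W - 2) * (Q ^ i - 1) ≤ (sz K U - 2) * (Q ^ N - 1)) :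
    ∃ U', U ≤ U' ∧ U' ≤ W ∧ fr U' = i + 1 + 2 ∧ (sz K W - 2) * (Q ^ (i + 1) - 1) ≤ (sz K U' - 2) * (Q ^ N - 1) := by
  by_contra hcon
  push Not at hcon
  have hQ := Q_pos (F := F)
  have hq := q_pos (F := F)
  have hc := card_cov hUW
  rw [hU, hW, show N + 2 - (i + 2) = N - i by omega] at hc
  obtain ⟨c, hcc⟩ : ∃ c : ℤ, c = (cov U W).card := ⟨_, rfl⟩
  have hc' : c * (Q - 1) + 1 = Q ^ (N - i) := by
    rw [hcc]
    have : (((cov U W).card * (qq - 1) + 1 : ℕ) : ℤ) = ((qq ^ (N - i) : ℕ) : ℤ) := by rw [hc]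
    push_cast at this
    rw [← this]
    have : 1 ≤ qq := by omega
    rw [Nat.cast_sub this]; push_cast; ring
  have hpow : Q ^ (N - i) * Q ^ i = Q ^ N := by rw [← pow_add]; congr 1; omega
  have hc1 : 1 ≤ c := by
    have : Q ^ 1 ≤ Q ^ (N - i) := pow_le_pow_right₀ (by linarith) (by omega)
    by_contra hlt
    have : c ≤ 0 := by omega
    nlinarith
  have hne : (cov U W).Nonempty := by
    rw [← Finset.card_pos]
    have : (0:ℤ) < (cov U W).card := by linarith
    exact_mod_cast this
  have hs := Finset.sum_lt_sum_of_nonempty (f := fun M => (sz K M - 2) * (Q ^ N - 1))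
    (g := fun _ => (sz K W - 2) * (Q ^ (i + 1) - 1)) hne (fun M hM => by
      obtain ⟨a, b, d⟩ := mem_cov.1 hM
      exact hcon M a b (by omega))
  rw [← Finset.sum_mul, Finset.sum_sub_distrib, cov_sum' hK.1 hUW, Finset.sum_const, Finset.sum_const, nsmul_eq_mul,
    nsmul_eq_mul, ← hcc] at hs
  have h2 := mul_le_mul_of_nonneg_left h (show 0 ≤ c - 1 by linarith)
  have h3 : (sz K W - 2) * ((c * (Q - 1) + 1) * Q ^ i) = (sz K W - 2) * Q ^ N := by rw [hc', hpow]
  have h4 : Q ^ (i + 1) = Q ^ i * Q := pow_succ _ _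
  rw [h4] at hs
  linarith

theorem highdim [CharP F 2] {K : Finset (Submodule F V)} (hK : Cap K) {W : Submodule F V} (N : ℕ) (hN : 3 ≤ N)
    (hW : fr W = N + 2) (hq : 2048 ≤ qq) :
    Q * (sz K W - 2) * (Q - 1) ≤ (Q ^ 2 - 3 * Q + 100) * (Q ^ N - 1) := by
  have hQ : (2048:ℤ) ≤ Q := by exact_mod_cast hq
  have hN1 : 1 ≤ Q ^ N := one_le_pow₀ (by linarith)
  have hpos : 0 ≤ Q ^ 2 - 3 * Q + 100 := by nlinarith
  rcases lt_or_ge (sz K W) 2 with h2 | h2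
  · have h1 : 0 ≤ (Q ^ 2 - 3 * Q + 100) * (Q ^ N - 1) := mul_nonneg hpos (by linarith)
    have h3 : 0 ≤ Q * (2 - sz K W) * (Q - 1) := mul_nonneg (mul_nonneg (by linarith) (by linarith)) (by linarith)
    linarith
  obtain ⟨P, hP, R, hR, hne⟩ := Finset.one_lt_card.1 (show 1 < (sec K W).card by rw [sz] at h2; exact_mod_cast h2)
  obtain ⟨hm, hs⟩ := sz_secant hK (mem_sec.1 hP).1 (mem_sec.1 hR).1 hne
  have hmW : P ⊔ R ≤ W := sup_le (mem_sec.1 hP).2 (mem_sec.1 hR).2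
  obtain ⟨U1, -, a1, b1, c1⟩ := greedy hK hmW 0 N (by omega) hW (by omega) (by linarith) (by rw [hs]; simp)
  obtain ⟨U2, -, a2, b2, c2⟩ := greedy hK a1 1 N (by omega) hW (by omega) (by linarith) c1
  obtain ⟨U3, -, a3, b3, c3⟩ := greedy hK a2 2 N (by omega) hW (by omega) (by linarith) c2
  have hd := dim5_all hK (W := U3) (by omega) hq
  have hd2 := mul_le_mul_of_nonneg_right hd (show 0 ≤ Q ^ N - 1 by linarith)
  have hd3 := mul_le_mul_of_nonneg_left c3 (show 0 ≤ Q by linarith)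
  norm_num at hd3
  have hΘ : (0:ℤ) < Q ^ 2 + Q + 1 := by positivity
  refine le_of_mul_le_mul_right ?_ hΘ
  linarith
end High

lemma numer {x p s S k : ℝ} (hx : 2048 ≤ x) (hs0 : 0 ≤ s) (hs : s * s = x) (hp : 1 ≤ p) (hS : S * (x - 1) = p * x - 1)
    (hk : x * (k - 2) * (x - 1) ≤ (x ^ 2 - 3 * x + 100) * (p * x ^ 4 - 1)) :
    k < p * x ^ 4 - 2 * (p * x ^ 3) + 3 * (p * x ^ 2) * s + 8 * (p * x ^ 2) - 9 * (p * x) * s - 7 * (p * x) - 2 * S + 1 := by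
  have hs45 : 45 ≤ s := by nlinarith
  have hx0 : 0 < x := by linarith
  have key : 0 ≤ p * (x ^ 2 * ((3 * s - 90) * x ^ 2 - (12 * s + 15) * x + (9 * s + 5))) := by
    have h1 : 0 ≤ (3 * s - 90) * x ^ 2 - (12 * s + 15) * x := by
      have : 12 * s + 15 ≤ (3 * s - 90) * x := by nlinarith
      nlinarith
    have : 0 ≤ x ^ 2 := by positivity
    have : 0 ≤ p := by linarith
    exact mul_nonneg this (mul_nonneg (by positivity) (by linarith))
  have hxx : 0 < x * (x - 1) := mul_pos hx0 (by linarith)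
  refine lt_of_mul_lt_mul_right ?_ hxx.le
  have e : (-2 * S) * (x * (x - 1)) = -2 * x * (p * x - 1) := by rw [← hS]; ring
  linarith
end CapPf

theorem stmt1 (F : Type*) [Field F] [Fintype F] (q : ℕ) (hcard : Fintype.card F = q)
    (hqeven : Even q) (hq : 2048 ≤ q) (n : ℕ) (hn : 5 ≤ n)
    (K : Set (PGPoint F n)) (hK : IsCap K) :
    (K.ncard : ℝ) < (q : ℝ) ^ (n - 1) - 2 * (q : ℝ) ^ (n - 2)
      + 3 * (q : ℝ) ^ (n - 3) * Real.sqrt q + 8 * (q : ℝ) ^ (n - 3)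
      - 9 * (q : ℝ) ^ (n - 4) * Real.sqrt q - 7 * (q : ℝ) ^ (n - 4)
      - 2 * (∑ i ∈ Finset.range (n - 4), (q : ℝ) ^ i) + 1 := by
  haveI : CharP F 2 := by
    have h2 : ringChar F = 2 := FiniteField.even_card_iff_char_two.2 (by
      rw [hcard]; exact Nat.even_iff.1 hqeven)
    exact h2 ▸ ringChar.charP F
  classical
  have hinj : Function.Injective (fun P : PGPoint F n => P.submodule) := Projectivization.submodule_injective
  haveI : Finite (PGPoint F n) := Finite.of_injective _ hinj
  have hKf : K.Finite := Set.toFinite K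
  obtain ⟨C, hC⟩ : ∃ C : Finset (Submodule F (Fin (n + 1) → F)), C = hKf.toFinset.image (fun P => P.submodule) := ⟨_, rfl⟩
  have hcc : C.card = K.ncard := by
    rw [hC, Finset.card_image_of_injective _ hinj, Set.ncard_eq_toFinset_card K hKf]
  have hmem : ∀ M, M ∈ C ↔ ∃ P ∈ K, P.submodule = M := by
    intro M; rw [hC]; simp
  have hCap : CapPf.Cap C := by
    refine ⟨fun M hM => ?_, fun m hm => ?_⟩
    · obtain ⟨P, -, rfl⟩ := (hmem M).1 hM
      exact Projectivization.finrank_submodule P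
    · by_contra hlt
      push Not at hlt
      obtain ⟨a, b, c, ha, hb, hc, hab, hac, hbc⟩ := Finset.two_lt_card_iff.1 hlt
      obtain ⟨ha1, ha2⟩ := CapPf.mem_sec.1 ha
      obtain ⟨hb1, hb2⟩ := CapPf.mem_sec.1 hb
      obtain ⟨hc1, hc2⟩ := CapPf.mem_sec.1 hc
      obtain ⟨P₁, h1, rfl⟩ := (hmem a).1 ha1
      obtain ⟨P₂, h2, rfl⟩ := (hmem b).1 hb1
      obtain ⟨P₃, h3, rfl⟩ := (hmem c).1 hc1
      refine hK P₁ h1 P₂ h2 P₃ h3 (fun h => hab (by rw [h])) (fun h => hac (by rw [h])) (fun h => hbc (by rw [h])) ?_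
      rw [Coll3]
      calc _ ≤ Module.finrank F m := Submodule.finrank_mono (sup_le (sup_le ha2 hb2) hc2)
        _ = 2 := hm
        _ ≤ 2 := le_refl 2
  have hW : CapPf.fr (⊤ : Submodule F (Fin (n + 1) → F)) = (n - 1) + 2 := by
    simp [CapPf.fr]; omega
  have hmain := CapPf.highdim hCap (W := ⊤) (n - 1) (by omega) hW (by omega)
  have hsz : CapPf.sz C ⊤ = (K.ncard : ℤ) := by
    rw [CapPf.sz, ← hcc]
    congr 2
    exact Finset.filter_true_of_mem fun P _ => le_top
  rw [hsz, hcard] at hmain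
  have hmainR : (q : ℝ) * ((K.ncard : ℝ) - 2) * ((q : ℝ) - 1) ≤ ((q : ℝ) ^ 2 - 3 * q + 100) * ((q : ℝ) ^ (n - 1) - 1) := by
    exact_mod_cast hmain
  have hqR : (2048 : ℝ) ≤ q := by exact_mod_cast hq
  obtain ⟨j, rfl⟩ : ∃ j, n = j + 5 := ⟨n - 5, by omega⟩
  have hgeom := geom_sum_mul (q : ℝ) (j + 1)
  have e1 : j + 5 - 1 = j + 4 := rfl
  have e2 : j + 5 - 2 = j + 3 := rfl
  have e3 : j + 5 - 3 = j + 2 := rfl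
  have e4 : j + 5 - 4 = j + 1 := rfl
  rw [e1] at hmainR
  rw [e1, e2, e3, e4]
  have := CapPf.numer (x := (q : ℝ)) (p := (q : ℝ) ^ j) (s := Real.sqrt q)
    (S := ∑ i ∈ Finset.range (j + 1), (q : ℝ) ^ i) (k := (K.ncard : ℝ)) hqR (Real.sqrt_nonneg _)
    (Real.mul_self_sqrt (by positivity)) (one_le_pow₀ (by linarith)) (by rw [hgeom, pow_succ]) (by
      rw [← pow_add]; exact hmainR)
  simp only [← pow_add, ← pow_succ] at this
  exact this
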